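/- Every finite simple graph with exactly 10 vertices and at most 20 edges is 2-apex. -/

import Mathlib

/-- `H` is a minor of `G`: there are pairwise disjoint nonempty connected branch sets
in `G`, one for each vertex of `H`, with an edge of `G` between the branch sets of
any two vertices adjacent in `H`. -/
def SimpleGraph.IsMinor {W V : Type*} (H : SimpleGraph W) (G : SimpleGraph V) : Prop :=
  ∃ f : W → Set V,
    (∀ w, (f w).Nonempty) ∧
    (∀ w, (G.induce (f w)).Connected) ∧
    (Pairwise fun w₁ w₂ => Disjoint (f w₁) (f w₂)) ∧
    ∀ ⦃w₁ w₂⦄, H.Adj w₁ w₂ → ∃ v₁ ∈ f w₁, ∃ v₂ ∈ f w₂, G.Adj v₁ v₂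

/-- A graph is planar iff it has no `K₅` minor and no `K₃,₃` minor (Kuratowski–Wagner). -/
def SimpleGraph.IsPlanar {V : Type*} (G : SimpleGraph V) : Prop :=
  ¬ (⊤ : SimpleGraph (Fin 5)).IsMinor G ∧
  ¬ (completeBipartiteGraph (Fin 3) (Fin 3)).IsMinor G

/-- A graph is 2-apex if it becomes planar after deleting at most two vertices. -/
def SimpleGraph.TwoApex {V : Type*} (G : SimpleGraph V) : Prop :=
  ∃ s : Set V, s.ncard ≤ 2 ∧ (G.induce sᶜ).IsPlanar

/-!
Suppressing a vertex of degree at most two does not affect whether deleting other vertices leaves a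
planar graph, so in a counterexample all degrees on the support may be taken to be at least three.
A `K₃,₃` minor needs six vertices of degree at least three, and for a `K₅` minor the number of
vertices of degree at least three and the number of degree at least four must add up to at least
ten. It follows that every graph with at most fourteen edges is apex. Hence no vertex of a
counterexample `G` meets more than five of the twenty edges, and the handshake lemma leaves few
possibilities for the number `n` of vertices in the support.

* If `n ≤ 7`, deleting two vertices leaves too few vertices or edges for a forbidden minor.
* If `n = 8`, then `G` is 5-regular, and some two vertices can be deleted.
* If `n = 9`, there is a vertex `a` of degree five. The graph `G - a` has fifteen edges and is not
  apex, which almost determines it, and the way in which `a` is attached yields the contradiction.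
* If `n = 10`, then `G` is 4-regular, once a vertex of degree five is excluded in the same way.
  If nonadjacent `a` and `b` have two common neighbors, suppressing these in `G - {a, b}` gives a
  `K₃,₃`, which is incompatible with the many triangles that the same bound on common neighbors
  forces at every vertex. So nonadjacent vertices have at most one common neighbor; then
  neighborhoods are cliques, `G` is a union of disjoint `K₅`s, and two deletions suffice.
-/

namespace ApexGraph

open SimpleGraph Finset
open scoped Classical

variable {V W : Type*}

/-! ### Minors -/

theorem connected_induce_iff_exists_adj {G : SimpleGraph V} {S : Set V} :
    (G.induce S).Connected ↔ S.Nonempty ∧ ∀ A : Set V, (S ∩ A).Nonempty → (S \ A).Nonempty →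
      ∃ u ∈ S ∩ A, ∃ w ∈ S \ A, G.Adj u w := by
  constructor
  · refine fun h => ⟨Set.nonempty_coe_sort.1 h.nonempty, ?_⟩
    rintro A ⟨u, huS, huA⟩ ⟨w, hwS, hwA⟩
    obtain ⟨p⟩ := h.preconnected ⟨u, huS⟩ ⟨w, hwS⟩
    obtain ⟨d, -, hfst, hsnd⟩ := p.exists_boundary_dart {x | x.1 ∈ A} huA hwA
    exact ⟨d.fst, ⟨d.fst.2, hfst⟩, d.snd, ⟨d.snd.2, hsnd⟩, d.adj⟩
  · rintro ⟨⟨x, hx⟩, hcut⟩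
    rw [connected_iff_exists_forall_reachable]
    refine ⟨⟨x, hx⟩, fun y => by_contra fun hy => ?_⟩
    obtain ⟨u, ⟨-, hu, hxu⟩, w, ⟨hw, hxw⟩, huw⟩ :=
      hcut {z | ∃ hz : z ∈ S, (G.induce S).Reachable ⟨x, hx⟩ ⟨z, hz⟩}
        ⟨x, hx, hx, Reachable.refl _⟩ ⟨y, y.2, fun h => hy h.2⟩
    exact hxw ⟨hw, hxu.trans (Adj.reachable (G := G.induce S) (v := ⟨w, hw⟩) huw)⟩

/-- The branch sets `f` form a model of `K` in `G`, witnessing that `K` is a minor of `G`. -/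
structure IsModel (K : SimpleGraph W) (G : SimpleGraph V) (f : W → Set V) : Prop where
  connected : ∀ w, (G.induce (f w)).Connected
  eq_of_mem : ∀ ⦃w w' x⦄, x ∈ f w → x ∈ f w' → w = w'
  exists_adj : ∀ ⦃w w'⦄, K.Adj w w' → ∃ v ∈ f w, ∃ v' ∈ f w', G.Adj v v'

theorem isMinor_iff_exists_isModel {K : SimpleGraph W} {G : SimpleGraph V} :
    K.IsMinor G ↔ ∃ f, IsModel K G f := by
  constructor
  · rintro ⟨f, -, hconn, hdisj, hadj⟩
    exact ⟨f, hconn, fun w w' x hx hx' =>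
      by_contra fun hne => Set.disjoint_left.1 (hdisj hne) hx hx', hadj⟩
  · rintro ⟨f, hf⟩
    exact ⟨f, fun w => Set.nonempty_coe_sort.1 (hf.connected w).nonempty, hf.connected,
      fun w w' hne => Set.disjoint_left.2 fun x hx hx' => hne (hf.eq_of_mem hx hx'),
      hf.exists_adj⟩

namespace IsModel

variable {K : SimpleGraph W} {G : SimpleGraph V} {f : W → Set V}

theorem nonempty (hf : IsModel K G f) (w : W) : (f w).Nonempty :=
  Set.nonempty_coe_sort.1 (hf.connected w).nonempty

theorem exists_adj_of_mem (hf : IsModel K G f) {w : W} {v z : V} (hv : v ∈ f w) (hz : z ∈ f w)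
    (hne : z ≠ v) : ∃ z ∈ f w, G.Adj v z := by
  obtain ⟨_, ⟨-, rfl⟩, z', hz', hadj⟩ := (connected_induce_iff_exists_adj.1 (hf.connected w)).2
    {v} ⟨v, hv, rfl⟩ ⟨z, hz, hne⟩
  exact ⟨z', hz'.1, hadj⟩

theorem degree_le_of_eq_singleton [Fintype V] [Fintype W] [DecidableRel K.Adj]
    (hf : IsModel K G f) {w : W} {v : V} (hw : f w = {v}) : K.degree w ≤ G.degree v := by
  have hnbr : ∀ w' ∈ K.neighborFinset w, ∃ x ∈ G.neighborFinset v, x ∈ f w' := by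
    intro w' hw'
    obtain ⟨u, hu, x, hx, hadj⟩ := hf.exists_adj ((mem_neighborFinset _ _ _).1 hw')
    obtain rfl : u = v := by rwa [hw] at hu
    exact ⟨x, (mem_neighborFinset _ _ _).2 hadj, hx⟩
  have : Nonempty V := ⟨v⟩
  choose! g hg hgf using hnbr
  refine card_le_card_of_injOn g hg fun w₁ h₁ w₂ h₂ h => ?_
  exact hf.eq_of_mem (hgf w₁ h₁) (h ▸ hgf w₂ h₂)

end IsModel

theorem isMinor_of_isContained {V' : Type*} {K : SimpleGraph W} {G : SimpleGraph V}
    {G' : SimpleGraph V'} (h : K.IsMinor G) (hG : G ⊑ G') : K.IsMinor G' := by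
  obtain ⟨f, hf⟩ := isMinor_iff_exists_isModel.1 h
  obtain ⟨φ⟩ := hG
  refine isMinor_iff_exists_isModel.2 ⟨fun w => φ '' f w, fun w => ?_, ?_, ?_⟩
  · refine connected_induce_iff_exists_adj.2 ⟨(hf.nonempty w).image _, ?_⟩
    rintro A ⟨_, ⟨u, hu, rfl⟩, huA⟩ ⟨_, ⟨x, hx, rfl⟩, hxA⟩
    obtain ⟨y, ⟨hy, hyA⟩, z, ⟨hz, hzA⟩, hyz⟩ :=
      (connected_induce_iff_exists_adj.1 (hf.connected w)).2 (φ ⁻¹' A) ⟨u, hu, huA⟩ ⟨x, hx, hxA⟩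
    exact ⟨φ y, ⟨⟨y, hy, rfl⟩, hyA⟩, φ z, ⟨⟨z, hz, rfl⟩, hzA⟩, φ.toHom.map_adj hyz⟩
  · rintro w w' _ ⟨x, hx, rfl⟩ ⟨y, hy, hxy⟩
    exact hf.eq_of_mem hx (φ.injective hxy ▸ hy)
  · intro w w' hw
    obtain ⟨v, hv, v', hv', hadj⟩ := hf.exists_adj hw
    exact ⟨φ v, ⟨v, hv, rfl⟩, φ v', ⟨v', hv', rfl⟩, φ.toHom.map_adj hadj⟩

theorem isPlanar_of_isContained {V' : Type*} {G : SimpleGraph V} {G' : SimpleGraph V'}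
    (hG : G ⊑ G') (h : G'.IsPlanar) : G.IsPlanar :=
  ⟨fun h₅ => h.1 (isMinor_of_isContained h₅ hG), fun h₃ => h.2 (isMinor_of_isContained h₃ hG)⟩

/-- `X` and `Y` are the sides of a (not necessarily induced) copy of `K₃,₃` in `G`. -/
def HasSides (G : SimpleGraph V) (X Y : Finset V) : Prop :=
  #X = 3 ∧ #Y = 3 ∧ G.IsCompleteBetween X Y

namespace HasSides

variable {G : SimpleGraph V} {X Y : Finset V}

theorem symm (h : HasSides G X Y) : HasSides G Y X := ⟨h.2.1, h.1, h.2.2.symm⟩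

theorem adj (h : HasSides G X Y) {x y : V} (hx : x ∈ X) (hy : y ∈ Y) : G.Adj x y :=
  h.2.2 hx hy

theorem disjoint (h : HasSides G X Y) : Disjoint X Y := disjoint_coe.1 h.2.2.disjoint

theorem exists_adj (h : HasSides G X Y) {v : V} (hv : v ∈ X ∪ Y) : ∃ w, G.Adj v w := by
  obtain ⟨x, hx⟩ := card_pos.1 (by rw [h.1]; norm_num : 0 < #X)
  obtain ⟨y, hy⟩ := card_pos.1 (by rw [h.2.1]; norm_num : 0 < #Y)
  obtain hv | hv := mem_union.1 hv
  · exact ⟨y, h.adj hv hy⟩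
  · exact ⟨x, (h.adj hx hv).symm⟩

end HasSides

/-- `G` with the vertices of `s` made isolated: vertex deletion without changing the vertex type,
so that iterated deletions need no subtypes. -/
def isolate (G : SimpleGraph V) (s : Set V) : SimpleGraph V where
  Adj u w := G.Adj u w ∧ u ∉ s ∧ w ∉ s
  symm := ⟨fun _ _ h => ⟨h.1.symm, h.2.2, h.2.1⟩⟩
  loopless := ⟨fun _ h => h.1.ne rfl⟩

theorem isolate_adj {G : SimpleGraph V} {s : Set V} {u w : V} :
    (isolate G s).Adj u w ↔ G.Adj u w ∧ u ∉ s ∧ w ∉ s := Iff.rfl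

theorem isolate_isolate (G : SimpleGraph V) (s t : Set V) :
    isolate (isolate G s) t = isolate G (s ∪ t) := by
  ext u w
  simp only [isolate_adj, Set.mem_union]
  tauto

theorem isPlanar_isolate_mono {G : SimpleGraph V} {s t : Set V} (hst : s ⊆ t)
    (h : (isolate G s).IsPlanar) : (isolate G t).IsPlanar :=
  isPlanar_of_isContained (IsContained.of_le fun _ _ huw =>
    isolate_adj.2 ⟨huw.1, fun hu => huw.2.1 (hst hu), fun hw => huw.2.2 (hst hw)⟩) h

/-- `G` is apex: it becomes planar after deleting one vertex. -/
def IsApex (G : SimpleGraph V) : Prop := ∃ a, (isolate G {a}).IsPlanar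

theorem not_isApex_isolate {G : SimpleGraph V} (hG : ∀ a b, ¬ (isolate G {a, b}).IsPlanar)
    (a : V) : ¬ IsApex (isolate G {a}) := by
  rintro ⟨b, hb⟩
  rw [isolate_isolate, Set.singleton_union] at hb
  exact hG a b hb

theorem twoApex_of_isPlanar_isolate {G : SimpleGraph V} {s : Set V} (hs : s.ncard ≤ 2)
    (h : (isolate G s).IsPlanar) : G.TwoApex :=
  ⟨s, hs, isPlanar_of_isContained (G' := isolate G s)
    ⟨⟨⟨Subtype.val, fun {u w} huw => ⟨huw, u.2, w.2⟩⟩, Subtype.val_injective⟩⟩ h⟩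

theorem IsModel.isolate {K : SimpleGraph W} {G : SimpleGraph V} {f : W → Set V} {T : Set V}
    (hf : IsModel K G f) (hT : ∀ w, f w ⊆ Tᶜ) : IsModel K (isolate G T) f where
  connected w := by
    refine connected_induce_iff_exists_adj.2 ⟨hf.nonempty w, fun A hA hA' => ?_⟩
    obtain ⟨u, hu, v, hv, huv⟩ :=
      (connected_induce_iff_exists_adj.1 (hf.connected w)).2 A hA hA'
    exact ⟨u, hu, v, hv, huv, hT w hu.1, hT w hv.1⟩
  eq_of_mem := hf.eq_of_mem
  exists_adj w w' hww' := by
    obtain ⟨u, hu, v, hv, huv⟩ := hf.exists_adj hww'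
    exact ⟨u, hu, v, hv, huv, hT w hu, hT w' hv⟩

theorem IsModel.subset_or_subset_compl {K : SimpleGraph W} {G : SimpleGraph V} {f : W → Set V}
    {T : Set V} (hf : IsModel K G f) (hK : K.Connected)
    (hT : ∀ u w, G.Adj u w → (u ∈ T ↔ w ∈ T)) : (∀ w, f w ⊆ T) ∨ ∀ w, f w ⊆ Tᶜ := by
  have hside : ∀ w, ∀ u ∈ f w, u ∈ T → f w ⊆ T := by
    intro w u hu huT v hv
    by_contra hvT
    obtain ⟨u', hu', v', hv', hadj⟩ :=
      (connected_induce_iff_exists_adj.1 (hf.connected w)).2 T ⟨u, hu, huT⟩ ⟨v, hv, hvT⟩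
    exact hv'.2 ((hT u' v' hadj).1 hu'.2)
  by_contra! h
  obtain ⟨⟨w, hw⟩, w', hw'⟩ := h
  obtain ⟨u, hu, huT⟩ := Set.not_subset.1 hw'
  obtain ⟨p⟩ := hK.preconnected w' w
  obtain ⟨d, -, hfst, hsnd⟩ :=
    p.exists_boundary_dart {w | f w ⊆ T} (hside w' u hu (not_not.1 huT)) hw
  obtain ⟨x, hx, y, hy, hxy⟩ := hf.exists_adj d.adj
  exact hsnd (hside d.snd y hy ((hT x y hxy).1 (hfst hx)))

theorem isMinor_isolate_or_isMinor_isolate_compl {K : SimpleGraph W} {G : SimpleGraph V}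
    {T : Set V} (hK : K.Connected) (hT : ∀ u w, G.Adj u w → (u ∈ T ↔ w ∈ T)) (h : K.IsMinor G) :
    K.IsMinor (isolate G T) ∨ K.IsMinor (isolate G Tᶜ) := by
  obtain ⟨f, hf⟩ := isMinor_iff_exists_isModel.1 h
  simp only [isMinor_iff_exists_isModel]
  obtain hfT | hfT := hf.subset_or_subset_compl hK hT
  · exact Or.inr ⟨f, hf.isolate (by simpa using hfT)⟩
  · exact Or.inl ⟨f, hf.isolate hfT⟩

theorem connected_completeBipartiteGraph {W' : Type*} [Nonempty W] [Nonempty W'] :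
    (completeBipartiteGraph W W').Connected := by
  obtain ⟨w₀⟩ := ‹Nonempty W›
  obtain ⟨w₀'⟩ := ‹Nonempty W'›
  have hadj : ∀ w w', (completeBipartiteGraph W W').Adj (.inl w) (.inr w') := by simp
  refine connected_iff_exists_forall_reachable _ |>.2 ⟨.inl w₀, fun v => ?_⟩
  obtain w | w' := v
  · exact (hadj w₀ w₀').reachable.trans (hadj w w₀').symm.reachable
  · exact (hadj w₀ w').reachable

theorem isPlanar_of_isPlanar_isolate {G : SimpleGraph V} {T : Set V}
    (hT : ∀ u w, G.Adj u w → (u ∈ T ↔ w ∈ T)) (h : (isolate G T).IsPlanar)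
    (h' : (isolate G Tᶜ).IsPlanar) : G.IsPlanar :=
  ⟨fun hK => (isMinor_isolate_or_isMinor_isolate_compl connected_top hT hK).elim h.1 h'.1,
    fun hK => (isMinor_isolate_or_isMinor_isolate_compl connected_completeBipartiteGraph hT
      hK).elim h.2 h'.2⟩

/-! ### Suppressing vertices of degree at most two -/

/-- `G` with `v` made isolated and its neighbors made pairwise adjacent. If `v` has degree two,
this replaces the path through `v` by an edge. -/
def suppress (G : SimpleGraph V) (v : V) : SimpleGraph V where
  Adj u w := u ≠ w ∧ u ≠ v ∧ w ≠ v ∧ (G.Adj u w ∨ G.Adj u v ∧ G.Adj v w)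
  symm := ⟨fun _ _ h => ⟨h.1.symm, h.2.2.1, h.2.1,
    h.2.2.2.imp (fun h => h.symm) fun h => ⟨h.2.symm, h.1.symm⟩⟩⟩
  loopless := ⟨fun _ h => h.1 rfl⟩

theorem suppress_adj {G : SimpleGraph V} {v u w : V} : (suppress G v).Adj u w ↔
    u ≠ w ∧ u ≠ v ∧ w ≠ v ∧ (G.Adj u w ∨ G.Adj u v ∧ G.Adj v w) := Iff.rfl

theorem suppress_adj_of_adj {G : SimpleGraph V} {v u w : V} (h : G.Adj u w) (hu : u ≠ v)
    (hw : w ≠ v) : (suppress G v).Adj u w :=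
  ⟨h.ne, hu, hw, Or.inl h⟩

theorem adj_suppress_suppress_isolate {G : SimpleGraph V} {y p q u w : V} (h : G.Adj u w)
    (hu : u ∉ ({y, p, q} : Finset V)) (hw : w ∉ ({y, p, q} : Finset V)) :
    (suppress (suppress (isolate G {y}) p) q).Adj u w := by
  simp only [mem_insert, mem_singleton, not_or] at hu hw
  exact suppress_adj_of_adj (suppress_adj_of_adj (isolate_adj.2 ⟨h, hu.1, hw.1⟩) hu.2.1 hw.2.1)
    hu.2.2 hw.2.2

theorem suppress_suppress_self (G : SimpleGraph V) (v : V) :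
    suppress (suppress G v) v = suppress G v := by
  ext u w
  simp only [suppress_adj]
  tauto

theorem suppress_suppress_comm (G : SimpleGraph V) (p q : V) :
    suppress (suppress G p) q = suppress (suppress G q) p := by
  obtain rfl | hpq := eq_or_ne p q
  · rfl
  suffices hle : ∀ {p q}, p ≠ q → suppress (suppress G p) q ≤ suppress (suppress G q) p from
    (hle hpq).antisymm (hle hpq.symm)
  intro p q hpq u w h
  simp only [suppress_adj] at h ⊢
  obtain ⟨huw, huq, hwq, ⟨-, hup, hwp, h | ⟨hup', hpw⟩⟩ |
    ⟨⟨-, hup, -, h | ⟨hup', hpq⟩⟩, ⟨-, -, hwp, h' | ⟨hqp', hpw⟩⟩⟩⟩ := h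
  all_goals
    refine ⟨huw, hup, hwp, ?_⟩
    simp_all [ne_comm, adj_comm]

theorem HasSides.ne_of_mem_suppress_suppress {G : SimpleGraph V} {p q v : V} {X Y : Finset V}
    (h : HasSides (suppress (suppress G p) q) X Y) (hv : v ∈ X ∪ Y) : v ≠ p ∧ v ≠ q := by
  obtain ⟨w, -, hvq, -, hvw⟩ := h.exists_adj hv
  exact ⟨by obtain h | h := hvw; exacts [h.2.1, h.1.2.1], hvq⟩

theorem adj_or_of_adj_suppress_suppress {G : SimpleGraph V} {p q u w : V} (hpq : ¬ G.Adj p q)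
    (h : (suppress (suppress G p) q).Adj u w) :
    G.Adj u w ∨ G.Adj u p ∧ G.Adj w p ∨ G.Adj u q ∧ G.Adj w q := by
  have hqp : ¬ G.Adj q p := fun h => hpq h.symm
  simp only [suppress_adj, hpq, hqp, and_false, false_and, or_false] at h
  obtain ⟨-, -, -, ⟨-, -, -, h | h⟩ | ⟨h₁, h₂⟩⟩ := h
  · exact Or.inl h
  · exact Or.inr (Or.inl ⟨h.1, h.2.symm⟩)
  · exact Or.inr (Or.inr ⟨h₁.2.2.2, h₂.2.2.2.symm⟩)

theorem connected_induce_diff_singleton_suppress {G : SimpleGraph V} {v : V} {S : Set V}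
    (hS : (G.induce S).Connected) (hne : (S \ {v}).Nonempty) :
    ((suppress G v).induce (S \ {v})).Connected := by
  have hcut := (connected_induce_iff_exists_adj.1 hS).2
  refine connected_induce_iff_exists_adj.2 ⟨hne, ?_⟩
  rintro A ⟨s, ⟨hs, hsv⟩, hsA⟩ ⟨t, ⟨ht, htv⟩, htA⟩
  obtain ⟨u, ⟨hu, huA, huv⟩, u', ⟨hu', huA'⟩, huu'⟩ :=
    hcut (A \ {v}) ⟨s, hs, hsA, hsv⟩ ⟨t, ht, fun h => htA h.1⟩
  obtain rfl | huv' := eq_or_ne u' v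
  · obtain ⟨y, ⟨hy, hyA⟩, z, ⟨hz, hzA⟩, hyz⟩ :=
      hcut (A ∪ {u'}) ⟨s, hs, Or.inl hsA⟩ ⟨t, ht, fun h => h.elim htA htv⟩
    have hz' : z ∈ (S \ {u'}) \ A := ⟨⟨hz, fun h => hzA (Or.inr h)⟩, fun h => hzA (Or.inl h)⟩
    obtain rfl | hyu' := eq_or_ne y u'
    · exact ⟨u, ⟨⟨hu, huv⟩, huA⟩, z, hz', ne_of_mem_of_not_mem huA hz'.2, huv, hz'.1.2,
        Or.inr ⟨huu', hyz⟩⟩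
    · exact ⟨y, ⟨⟨hy, hyu'⟩, hyA.resolve_right hyu'⟩, z, hz',
        suppress_adj_of_adj hyz hyu' hz'.1.2⟩
  · exact ⟨u, ⟨⟨hu, huv⟩, huA⟩, u', ⟨⟨hu', huv'⟩, fun h => huA' ⟨h, huv'⟩⟩,
      suppress_adj_of_adj huu' huv huv'⟩

theorem isMinor_suppress [Fintype V] [Fintype W] {K : SimpleGraph W} [DecidableRel K.Adj]
    {G : SimpleGraph V} {v : V} (hK : ∀ w, 3 ≤ K.degree w) (hv : G.degree v ≤ 2)
    (h : K.IsMinor G) : K.IsMinor (suppress G v) := by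
  obtain ⟨f, hf⟩ := isMinor_iff_exists_isModel.1 h
  have hne : ∀ w, ∃ z ∈ f w, z ≠ v := by
    refine fun w => by_contra fun hw => ?_
    push Not at hw
    have hwv : f w = {v} := (hf.nonempty w).subset_singleton_iff.1 hw
    have := hf.degree_le_of_eq_singleton hwv
    have := hK w
    omega
  have hreroute : ∀ ⦃w w'⦄, K.Adj w w' → v ∈ f w → ∀ x ∈ f w', G.Adj v x →
      ∃ z ∈ f w \ {v}, (suppress G v).Adj z x := by
    intro w w' hww' hvw x hx hvx
    obtain ⟨z, hz, hzv⟩ := hne w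
    obtain ⟨z, hz, hvz⟩ := hf.exists_adj_of_mem hvw hz hzv
    have hzx : z ≠ x := fun h => hww'.ne (hf.eq_of_mem hz (h ▸ hx))
    exact ⟨z, ⟨hz, hvz.ne'⟩, hzx, hvz.ne', hvx.ne', Or.inr ⟨hvz.symm, hvx⟩⟩
  refine isMinor_iff_exists_isModel.2 ⟨fun w => f w \ {v}, fun w => ?_, ?_, ?_⟩
  · exact connected_induce_diff_singleton_suppress (hf.connected w) (hne w)
  · exact fun w w' x hx hx' => hf.eq_of_mem hx.1 hx'.1
  · intro w w' hww'
    obtain ⟨u, hu, u', hu', hadj⟩ := hf.exists_adj hww'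
    obtain rfl | huv := eq_or_ne u v
    · obtain ⟨z, hz, hzu'⟩ := hreroute hww' hu u' hu' hadj
      exact ⟨z, hz, u', ⟨hu', hadj.ne'⟩, hzu'⟩
    obtain rfl | huv' := eq_or_ne u' v
    · obtain ⟨z, hz, hzu⟩ := hreroute hww'.symm hu' u hu hadj.symm
      exact ⟨u, ⟨hu, huv⟩, z, hz, hzu.symm⟩
    · exact ⟨u, ⟨hu, huv⟩, u', ⟨hu', huv'⟩, suppress_adj_of_adj hadj huv huv'⟩

theorem three_le_degree_completeGraph (w : Fin 5) : 3 ≤ (⊤ : SimpleGraph (Fin 5)).degree w := by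
  simp

theorem three_le_degree_completeBipartiteGraph (w : Fin 3 ⊕ Fin 3) :
    3 ≤ (completeBipartiteGraph (Fin 3) (Fin 3)).degree w := by
  rcases w with w | w
  · have : (completeBipartiteGraph (Fin 3) (Fin 3)).neighborFinset (.inl w) = univ.map .inr := by
      ext (x | x) <;> simp
    rw [degree, this, card_map, card_fin]
  · have : (completeBipartiteGraph (Fin 3) (Fin 3)).neighborFinset (.inr w) = univ.map .inl := by
      ext (x | x) <;> simp
    rw [degree, this, card_map, card_fin]

variable [Fintype V]

/-! ### Degrees -/

theorem degree_isolate_of_mem {G : SimpleGraph V} {s : Set V} {v : V} (hv : v ∈ s) :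
    (isolate G s).degree v = 0 :=
  (degree_eq_zero _ _).2 fun _ h => h.2.1 hv

theorem degree_isolate_add {G : SimpleGraph V} {s : Set V} [DecidablePred (· ∈ s)] {v : V}
    (hv : v ∉ s) :
    (isolate G s).degree v + #{w ∈ G.neighborFinset v | w ∈ s} = G.degree v := by
  have : (isolate G s).neighborFinset v = {w ∈ G.neighborFinset v | w ∉ s} := by
    ext w
    simp [isolate_adj, hv]
  rw [← card_neighborFinset_eq_degree, this, add_comm, card_filter_add_card_filter_not,
    card_neighborFinset_eq_degree]

theorem degree_isolate_singleton_add {G : SimpleGraph V} {a v : V} (hv : v ≠ a) :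
    (isolate G {a}).degree v + (if G.Adj a v then 1 else 0) = G.degree v := by
  have : {w ∈ G.neighborFinset v | w ∈ ({a} : Set V)} = if G.Adj a v then {a} else ∅ := by
    ext w
    split_ifs with h
    · simp only [mem_filter, mem_neighborFinset, Set.mem_singleton_iff, mem_singleton]
      exact ⟨fun hw => hw.2, fun hw => ⟨hw ▸ h.symm, hw⟩⟩
    · simp only [mem_filter, mem_neighborFinset, Set.mem_singleton_iff, notMem_empty, iff_false]
      exact fun hw => h (hw.2 ▸ hw.1.symm)
  rw [← degree_isolate_add (G := G) (s := {a}) (v := v) hv, this]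
  split_ifs <;> simp

theorem degree_isolate_singleton_add_one {G : SimpleGraph V} {a v : V} (h : G.Adj a v) :
    (isolate G {a}).degree v + 1 = G.degree v := by
  have := degree_isolate_singleton_add (G := G) h.ne'
  rwa [if_pos h] at this

theorem degree_isolate_pair_add {G : SimpleGraph V} {a b v : V} (hab : a ≠ b) (ha : v ≠ a)
    (hb : v ≠ b) : (isolate G {a, b}).degree v + (if G.Adj a v then 1 else 0) +
      (if G.Adj b v then 1 else 0) = G.degree v := by
  have hb' : (isolate G {a}).Adj b v ↔ G.Adj b v := by simp [isolate_adj, hab.symm, ha]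
  have hiso : isolate G {a, b} = isolate (isolate G {a}) {b} := by
    rw [isolate_isolate, Set.singleton_union]
  have := degree_isolate_singleton_add (G := isolate G {a}) hb
  rw [← degree_isolate_singleton_add (G := G) ha, ← this, hiso]
  simp only [hb']
  ring

theorem degree_isolate_pair_add_two {G : SimpleGraph V} {a b v : V} (hab : a ≠ b)
    (ha : G.Adj a v) (hb : G.Adj b v) : (isolate G {a, b}).degree v + 2 = G.degree v := by
  have := degree_isolate_pair_add (G := G) hab ha.ne' hb.ne'
  rwa [if_pos ha, if_pos hb] at this

theorem degree_isolate_pair_lt {G : SimpleGraph V} {a b v : V} (h : G.Adj a v) (hb : v ≠ b) :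
    (isolate G {a, b}).degree v < G.degree v := by
  obtain rfl | hab := eq_or_ne a b
  · have := degree_isolate_singleton_add_one h
    rw [Set.pair_eq_singleton]
    omega
  · have := degree_isolate_pair_add (G := G) hab h.ne' hb
    rw [if_pos h] at this
    omega

theorem sum_card_neighborFinset_inter_comm (G : SimpleGraph V) (A B : Finset V) :
    ∑ v ∈ A, #(G.neighborFinset v ∩ B) = ∑ u ∈ B, #(G.neighborFinset u ∩ A) := by
  convert sum_card_bipartiteAbove_eq_sum_card_bipartiteBelow G.Adj (s := A) (t := B) using 3
  all_goals
    ext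
    simp [bipartiteAbove, bipartiteBelow, G.adj_comm, and_comm]

theorem card_edgeFinset_isolate_singleton_add (G : SimpleGraph V) (a : V) :
    #(isolate G {a}).edgeFinset + G.degree a = #G.edgeFinset := by
  have hsum : ∑ v, ((isolate G {a}).degree v + (if G.Adj a v then 1 else 0)) + G.degree a =
      ∑ v, G.degree v := by
    rw [← add_sum_erase univ _ (mem_univ a), ← add_sum_erase univ (fun v => G.degree v)
      (mem_univ a), degree_isolate_of_mem (Set.mem_singleton a), sum_congr rfl fun v hv =>
        degree_isolate_singleton_add (ne_of_mem_erase hv), if_neg (G.irrefl)]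
    ring
  have hdeg : ∑ v, (if G.Adj a v then 1 else 0) = G.degree a := by
    rw [← card_filter, ← neighborFinset_eq_filter, card_neighborFinset_eq_degree]
  have := sum_degrees_eq_twice_card_edges G
  have := sum_degrees_eq_twice_card_edges (isolate G {a})
  rw [sum_add_distrib, hdeg] at hsum
  omega

theorem degree_suppress_self {G : SimpleGraph V} {v : V} : (suppress G v).degree v = 0 :=
  (degree_eq_zero _ _).2 fun _ h => h.2.1 rfl

theorem degree_suppress_le {G : SimpleGraph V} {v : V} (hv : G.degree v ≤ 2) (u : V) :
    (suppress G v).degree u ≤ G.degree u := by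
  by_cases huv : G.Adj u v
  · have hsub : (suppress G v).neighborFinset u ⊆
        (G.neighborFinset u).erase v ∪ (G.neighborFinset v).erase u := by
      intro w hw
      obtain ⟨huw, -, hwv, h | h⟩ := (mem_neighborFinset _ _ _).1 hw
      · simp [h, hwv]
      · simp [h.2, huw.symm]
    have hle := (card_le_card hsub).trans (card_union_le _ _)
    rw [card_erase_of_mem (by simpa), card_erase_of_mem (by simpa using huv.symm),
      card_neighborFinset_eq_degree, card_neighborFinset_eq_degree,
      card_neighborFinset_eq_degree] at hle
    have := huv.degree_pos_left
    omega
  · refine card_le_card fun w hw => ?_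
    obtain ⟨-, -, -, h | h⟩ := (mem_neighborFinset _ _ _).1 hw
    · exact (mem_neighborFinset _ _ _).2 h
    · exact absurd h.1 huv

theorem card_edgeFinset_suppress_lt {G : SimpleGraph V} {v : V} (hpos : 0 < G.degree v)
    (hv : G.degree v ≤ 2) : #(suppress G v).edgeFinset < #G.edgeFinset := by
  have hlt : ∑ u, (suppress G v).degree u < ∑ u, G.degree u :=
    sum_lt_sum (fun u _ => degree_suppress_le hv u)
      ⟨v, mem_univ v, by rwa [degree_suppress_self]⟩
  rw [sum_degrees_eq_twice_card_edges, sum_degrees_eq_twice_card_edges] at hlt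
  omega

theorem isPlanar_of_suppress {G : SimpleGraph V} {v : V} (hv : G.degree v ≤ 2)
    (h : (suppress G v).IsPlanar) : G.IsPlanar :=
  ⟨fun h₅ => h.1 (isMinor_suppress three_le_degree_completeGraph hv h₅),
    fun h₃ => h.2 (isMinor_suppress three_le_degree_completeBipartiteGraph hv h₃)⟩

theorem isPlanar_isolate_of_suppress {G : SimpleGraph V} {v : V} {s : Set V}
    (hv : G.degree v ≤ 2) (h : (isolate (suppress G v) s).IsPlanar) : (isolate G s).IsPlanar := by
  by_cases hvs : v ∈ s
  · refine isPlanar_of_isContained (IsContained.of_le fun u w huw => ?_) h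
    exact ⟨suppress_adj_of_adj huw.1 (fun h => huw.2.1 (h ▸ hvs)) (fun h => huw.2.2 (h ▸ hvs)),
      huw.2⟩
  · have hle : (isolate G s).degree v ≤ 2 := by
      have := degree_isolate_add (G := G) hvs
      omega
    refine isPlanar_of_suppress hle (isPlanar_of_isContained (IsContained.of_le ?_) h)
    rintro u w ⟨huw, huv, hwv, h | h⟩
    · exact ⟨⟨huw, huv, hwv, Or.inl h.1⟩, h.2⟩
    · exact ⟨⟨huw, huv, hwv, Or.inr ⟨h.1.1, h.2.1⟩⟩, h.1.2.1, h.2.2.2⟩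

/-- The vertices of degree at least `d` in `G`; in particular `high G 1` is the support of `G`. -/
noncomputable def high (G : SimpleGraph V) (d : ℕ) : Finset V := {v | d ≤ G.degree v}

theorem mem_high {G : SimpleGraph V} {d : ℕ} {v : V} : v ∈ high G d ↔ d ≤ G.degree v := by
  simp [high]

theorem high_anti (G : SimpleGraph V) {d d' : ℕ} (h : d ≤ d') : high G d' ⊆ high G d :=
  fun _ hv => mem_high.2 (h.trans (mem_high.1 hv))

theorem high_suppress_subset {G : SimpleGraph V} {v : V} (hv : G.degree v ≤ 2) (d : ℕ) :
    high (suppress G v) d ⊆ high G d :=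
  fun u hu => mem_high.2 ((mem_high.1 hu).trans (degree_suppress_le hv u))

theorem card_high_suppress_lt {G : SimpleGraph V} {v : V} (hpos : 0 < G.degree v)
    (hv : G.degree v ≤ 2) : #(high (suppress G v) 1) < #(high G 1) := by
  refine card_lt_card ⟨high_suppress_subset hv 1, fun h => ?_⟩
  have := mem_high.1 (h (mem_high.2 hpos))
  rw [degree_suppress_self] at this
  omega

theorem suppress_induction {p : SimpleGraph V → Prop}
    (suppress : ∀ G v, 0 < G.degree v → G.degree v ≤ 2 → p (suppress G v) → p G)
    (reduced : ∀ G, high G 1 = high G 3 → p G) (G : SimpleGraph V) : p G := by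
  induction hn : #(high G 1) using Nat.strong_induction_on generalizing G with
  | _ n ih =>
    by_cases h : high G 1 ⊆ high G 3
    · exact reduced G (h.antisymm (high_anti G (by norm_num)))
    · obtain ⟨v, hv₁, hv₃⟩ := not_subset.1 h
      rw [mem_high] at hv₁ hv₃
      have hv₂ : G.degree v ≤ 2 := by omega
      exact suppress G v hv₁ hv₂ (ih _ (hn ▸ card_high_suppress_lt hv₁ hv₂) _ rfl)

/-! ### Minors in graphs with few vertices of degree at least three -/

theorem IsModel.subset_high_one {K : SimpleGraph W} [Fintype W] [DecidableRel K.Adj]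
    {G : SimpleGraph V} {f : W → Set V} (hf : IsModel K G f) {w : W} (hw : 0 < K.degree w) :
    f w ⊆ high G 1 := by
  intro v hv
  refine mem_high.2 ((degree_pos_iff_exists_adj _ _).2 ?_)
  by_cases h : ∃ z ∈ f w, z ≠ v
  · obtain ⟨z, hz, hzv⟩ := h
    exact (hf.exists_adj_of_mem hv hz hzv).imp fun _ h => h.2
  · obtain ⟨w', hw'⟩ := (degree_pos_iff_exists_adj _ _).1 hw
    obtain ⟨u, hu, x, -, hux⟩ := hf.exists_adj hw'
    push Not at h
    exact ⟨x, h u hu ▸ hux⟩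

/-- Only the branch sets indexed by `Q` are singletons, and all the others use up at least two
vertices of the support. -/
theorem exists_partial_copy_of_isMinor [Fintype W] {K : SimpleGraph W} [DecidableRel K.Adj]
    {G : SimpleGraph V} (hK : ∀ w, 0 < K.degree w) (h : K.IsMinor G) :
    ∃ (g : W → V) (Q : Finset W), Function.Injective g ∧ (∀ w, g w ∈ high G 1) ∧
      (∀ w ∈ Q, K.degree w ≤ G.degree (g w)) ∧
      (∀ w ∈ Q, ∀ w' ∈ Q, K.Adj w w' → G.Adj (g w) (g w')) ∧
      2 * Fintype.card W ≤ #(high G 1) + #Q := by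
  obtain ⟨f, hf⟩ := isMinor_iff_exists_isModel.1 h
  choose g hg using hf.nonempty
  let Q : Finset W := {w | f w = {g w}}
  have hQ : ∀ {w}, w ∈ Q ↔ f w = {g w} := by simp [Q]
  refine ⟨g, Q, fun w w' h => hf.eq_of_mem (hg w) (h ▸ hg w'),
    fun w => hf.subset_high_one (hK w) (hg w),
    fun w hw => hf.degree_le_of_eq_singleton (hQ.1 hw), fun w hw w' hw' hww' => ?_, ?_⟩
  · obtain ⟨u, hu, u', hu', hadj⟩ := hf.exists_adj hww'
    rw [hQ.1 hw, Set.mem_singleton_iff] at hu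
    rw [hQ.1 hw', Set.mem_singleton_iff] at hu'
    exact hu ▸ hu' ▸ hadj
  · have hcard : ∀ w, 2 ≤ #(f w).toFinset + if w ∈ Q then 1 else 0 := by
      intro w
      have hpos : 0 < #(f w).toFinset := card_pos.2 (Set.toFinset_nonempty.2 (hf.nonempty w))
      split_ifs with hw
      · omega
      · by_contra hlt
        obtain ⟨x, hx⟩ := card_eq_one.1 (show #(f w).toFinset = 1 by omega)
        rw [← coe_inj, Set.coe_toFinset, coe_singleton] at hx
        have hgx : g w = x := by
          have := hg w
          rwa [hx] at this
        exact hw (hQ.2 (hgx ▸ hx))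
    have hunion : ∑ w, #(f w).toFinset ≤ #(high G 1) := by
      rw [← card_biUnion]
      · exact card_le_card (biUnion_subset.2 fun w _ x hx =>
          hf.subset_high_one (hK w) (Set.mem_toFinset.1 hx))
      · refine fun w _ w' _ hne => disjoint_left.2 fun x hx hx' => hne ?_
        exact hf.eq_of_mem (Set.mem_toFinset.1 hx) (Set.mem_toFinset.1 hx')
    have hsum := sum_le_sum fun w (_ : w ∈ univ) => hcard w
    rw [sum_add_distrib, ← card_filter, filter_univ_mem, sum_const, card_univ, smul_eq_mul] at hsum
    omega

theorem isContained_of_isMinor [Fintype W] {K : SimpleGraph W} [DecidableRel K.Adj]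
    {G : SimpleGraph V} (hK : ∀ w, 0 < K.degree w) (hG : #(high G 1) ≤ Fintype.card W)
    (h : K.IsMinor G) : K ⊑ G := by
  obtain ⟨g, Q, hg, -, -, hadj, hcard⟩ := exists_partial_copy_of_isMinor hK h
  have hQ : Q = univ := by
    rw [← card_eq_iff_eq_univ]
    have := card_le_univ Q
    omega
  subst hQ
  exact ⟨⟨⟨g, fun {w w'} hww' => hadj w (mem_univ w) w' (mem_univ w') hww'⟩, hg⟩⟩

theorem two_mul_card_le_of_isMinor [Fintype W] {K : SimpleGraph W} [DecidableRel K.Adj] {d : ℕ}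
    (hd : 3 ≤ d) (hK : ∀ w, d ≤ K.degree w) (G : SimpleGraph V) (h : K.IsMinor G) :
    2 * Fintype.card W ≤ #(high G 3) + #(high G d) := by
  induction G using suppress_induction with
  | suppress G v _ hv ih =>
    have := ih (isMinor_suppress (fun w => hd.trans (hK w)) hv h)
    have := card_le_card (high_suppress_subset hv 3)
    have := card_le_card (high_suppress_subset hv d)
    omega
  | reduced G hG =>
    obtain ⟨g, Q, hg, -, hdeg, -, hcard⟩ :=
      exists_partial_copy_of_isMinor (fun w => by have := hK w; omega) h
    have : #Q ≤ #(high G d) := card_le_card_of_injOn g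
      (fun w hw => mem_high.2 ((hK w).trans (hdeg w hw))) hg.injOn
    rw [← hG]
    omega

theorem exists_isClique_of_isMinor_completeGraph {G : SimpleGraph V}
    (h : (⊤ : SimpleGraph (Fin 5)).IsMinor G) :
    ∃ Q ⊆ high G 4, 10 ≤ #(high G 1) + #Q ∧ G.IsClique Q := by
  obtain ⟨g, Q, hg, -, hdeg, hadj, hcard⟩ := exists_partial_copy_of_isMinor (by simp) h
  refine ⟨Q.map ⟨g, hg⟩, fun v hv => ?_, by simpa using hcard, fun v hv w hw hvw => ?_⟩
  · obtain ⟨i, hi, rfl⟩ := mem_map.1 hv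
    exact mem_high.2 (by simpa using hdeg i hi)
  · obtain ⟨i, hi, rfl⟩ := mem_map.1 hv
    obtain ⟨j, hj, rfl⟩ := mem_map.1 hw
    exact hadj i hi j hj fun h => hvw (h ▸ rfl)

theorem isPlanar_of_not_isMinor_completeBipartiteGraph {G : SimpleGraph V}
    (hcard : #(high G 3) + #(high G 4) < 10)
    (h : ¬ (completeBipartiteGraph (Fin 3) (Fin 3)).IsMinor G) : G.IsPlanar := by
  refine ⟨fun h₅ => ?_, h⟩
  have := two_mul_card_le_of_isMinor (d := 4) (by norm_num) (by simp) G h₅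
  rw [Fintype.card_fin] at this
  omega

theorem isPlanar_of_card_high {G : SimpleGraph V} (h₃ : #(high G 3) ≤ 5)
    (h₄ : #(high G 4) ≤ 4) : G.IsPlanar := by
  refine isPlanar_of_not_isMinor_completeBipartiteGraph (by omega) fun h => ?_
  have := two_mul_card_le_of_isMinor le_rfl three_le_degree_completeBipartiteGraph G h
  rw [Fintype.card_sum, Fintype.card_fin] at this
  omega

namespace HasSides

variable {G : SimpleGraph V} {X Y : Finset V}

theorem subset_neighborFinset (h : HasSides G X Y) {x : V} (hx : x ∈ X) :
    Y ⊆ G.neighborFinset x :=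
  fun _ hy => (mem_neighborFinset _ _ _).2 (h.adj hx hy)

theorem neighborFinset_eq (h : HasSides G X Y) {x : V} (hx : x ∈ X) (hdeg : G.degree x ≤ 3) :
    G.neighborFinset x = Y :=
  (eq_of_subset_of_card_le (h.subset_neighborFinset hx) (hdeg.trans h.2.1.ge)).symm

theorem four_le_degree (h : HasSides G X Y) {x x' : V} (hx : x ∈ X) (hx' : x' ∈ X)
    (hadj : G.Adj x x') : 4 ≤ G.degree x := by
  by_contra hdeg
  have hx'Y : x' ∈ Y := by
    rw [← h.neighborFinset_eq hx (by omega)]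
    simpa
  exact disjoint_left.1 h.disjoint hx' hx'Y

theorem not_adj_of_degree_le_three (h : HasSides G X Y) {u v w : V} (hu : u ∈ X ∪ Y)
    (hv : v ∈ X ∪ Y) (hw : w ∈ X ∪ Y) (hdu : G.degree u ≤ 3) (hdv : G.degree v ≤ 3)
    (huv : G.Adj u v) (huw : G.Adj u w) : ¬ G.Adj v w := by
  intro hvw
  wlog huX : u ∈ X generalizing X Y
  · exact this h.symm (union_comm X Y ▸ hu) (union_comm X Y ▸ hv) (union_comm X Y ▸ hw)
      ((mem_union.1 hu).resolve_left huX)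
  have hvY : v ∈ Y := (mem_union.1 hv).resolve_left fun hvX => by
    have := h.four_le_degree huX hvX huv
    omega
  obtain hwX | hwY := mem_union.1 hw
  · have := h.four_le_degree huX hwX huw
    omega
  · have := h.symm.four_le_degree hvY hwY hvw
    omega

theorem adj_of_adj_of_adj_of_adj (h : HasSides G X Y) (hdeg : ∀ v, G.degree v ≤ 3)
    {a b c d : V} (ha : a ∈ X ∪ Y) (hab : G.Adj a b) (hbc : G.Adj b c) (hcd : G.Adj c d) :
    G.Adj a d := by
  wlog haX : a ∈ X generalizing X Y
  · exact this h.symm (union_comm X Y ▸ ha) ((mem_union.1 ha).resolve_left haX)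
  have hbY : b ∈ Y := by rwa [← h.neighborFinset_eq haX (hdeg a), mem_neighborFinset]
  have hcX : c ∈ X := by rwa [← h.symm.neighborFinset_eq hbY (hdeg b), mem_neighborFinset]
  have hdY : d ∈ Y := by rwa [← h.neighborFinset_eq hcX (hdeg c), mem_neighborFinset]
  exact h.adj haX hdY

end HasSides

theorem exists_hasSides {G : SimpleGraph V} {S : Finset V} (hsupp : high G 1 ⊆ S) (hS : #S ≤ 6)
    (h : (completeBipartiteGraph (Fin 3) (Fin 3)).IsMinor G) :
    ∃ X Y, HasSides G X Y ∧ X ∪ Y = S := by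
  have hcard : #(high G 1) ≤ Fintype.card (Fin 3 ⊕ Fin 3) := (card_le_card hsupp).trans hS
  have hcont := isContained_of_isMinor
    (fun w => by have := three_le_degree_completeBipartiteGraph w; omega) hcard h
  obtain ⟨X, Y, hX, hY, hXY⟩ := completeBipartiteGraph_isContained_iff.1 hcont
  have hsides : HasSides G X Y := ⟨hX, hY, hXY⟩
  have hsub : ∀ {A B}, HasSides G A B → A ⊆ S := by
    intro A B hAB a ha
    obtain ⟨b, hb⟩ := card_pos.1 (by rw [hAB.2.1]; norm_num : 0 < #B)
    exact hsupp (mem_high.2 (hAB.adj ha hb).degree_pos_left)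
  refine ⟨X, Y, hsides, eq_of_subset_of_card_le (union_subset (hsub hsides) (hsub hsides.symm)) ?_⟩
  rw [card_union_of_disjoint hsides.disjoint, hsides.1, hsides.2.1]
  exact hS

theorem high_one_suppress_suppress_subset {G : SimpleGraph V} {p q : V} {S : Finset V}
    (hp : G.degree p ≤ 2) (hq : G.degree q ≤ 2)
    (hsupp : ∀ v, 0 < G.degree v → v ≠ p → v ≠ q → v ∈ S) :
    high (suppress (suppress G p) q) 1 ⊆ S := by
  have hq' := (degree_suppress_le hp q).trans hq
  intro v hv
  obtain ⟨w, -, hvq, -, -⟩ := (degree_pos_iff_exists_adj _ _).1 (mem_high.1 hv)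
  have hv' := mem_high.1 (high_suppress_subset hq' 1 hv)
  obtain ⟨w, -, hvp, -, -⟩ := (degree_pos_iff_exists_adj _ _).1 hv'
  exact hsupp v (mem_high.1 (high_suppress_subset hp 1 (mem_high.2 hv'))) hvp hvq

theorem exists_hasSides_suppress_suppress {G : SimpleGraph V} {p q : V} {S : Finset V}
    (hp : G.degree p ≤ 2) (hq : G.degree q ≤ 2)
    (hsupp : ∀ v, 0 < G.degree v → v ≠ p → v ≠ q → v ∈ S) (hS : #S ≤ 6)
    (h : (completeBipartiteGraph (Fin 3) (Fin 3)).IsMinor G) :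
    ∃ X Y, HasSides (suppress (suppress G p) q) X Y ∧ X ∪ Y = S :=
  exists_hasSides (high_one_suppress_suppress_subset hp hq hsupp) hS
    (isMinor_suppress three_le_degree_completeBipartiteGraph
      ((degree_suppress_le hp q).trans hq)
      (isMinor_suppress three_le_degree_completeBipartiteGraph hp h))

theorem exists_isClique_suppress_suppress {G : SimpleGraph V} {p q : V} {S : Finset V}
    (hp : G.degree p ≤ 2) (hq : G.degree q ≤ 2)
    (hsupp : ∀ v, 0 < G.degree v → v ≠ p → v ≠ q → v ∈ S)
    (h : (⊤ : SimpleGraph (Fin 5)).IsMinor G) :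
    ∃ Q ⊆ S ∩ high G 4, 10 ≤ #S + #Q ∧ (suppress (suppress G p) q).IsClique Q := by
  have hq' := (degree_suppress_le hp q).trans hq
  have hsub := high_one_suppress_suppress_subset hp hq hsupp
  obtain ⟨Q, hQ, hcard, hclique⟩ := exists_isClique_of_isMinor_completeGraph
    (isMinor_suppress three_le_degree_completeGraph hq'
      (isMinor_suppress three_le_degree_completeGraph hp h))
  refine ⟨Q, subset_inter (hQ.trans ((high_anti _ (by norm_num)).trans hsub))
    (hQ.trans ((high_suppress_subset hq' 4).trans (high_suppress_subset hp 4))), ?_, hclique⟩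
  have := card_le_card hsub
  omega

theorem exists_hasSides_suppress {G : SimpleGraph V} {p : V} {S : Finset V}
    (hp : G.degree p ≤ 2) (hsupp : ∀ v, 0 < G.degree v → v ≠ p → v ∈ S) (hS : #S ≤ 6)
    (h : (completeBipartiteGraph (Fin 3) (Fin 3)).IsMinor G) :
    ∃ X Y, HasSides (suppress G p) X Y ∧ X ∪ Y = S := by
  simpa only [suppress_suppress_self] using
    exists_hasSides_suppress_suppress hp hp (fun v hv hvp _ => hsupp v hv hvp) hS h

theorem exists_hasSides_of_not_isPlanar {G : SimpleGraph V} {p q : V} {S : Finset V}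
    (hp : G.degree p ≤ 2) (hq : G.degree q ≤ 2)
    (hsupp : ∀ v, 0 < G.degree v → v ≠ p → v ≠ q → v ∈ S) (hS : #S ≤ 6)
    (h₄ : #(high G 4) ≤ 3) (hG : ¬ G.IsPlanar) :
    ∃ X Y, HasSides (suppress (suppress G p) q) X Y ∧ X ∪ Y = S := by
  have h₃ : high G 3 ⊆ S := by
    intro v hv
    have := mem_high.1 hv
    refine hsupp v (by omega) ?_ ?_ <;> rintro rfl <;> omega
  refine exists_hasSides_suppress_suppress hp hq hsupp hS (by_contra fun h => hG ?_)
  have := card_le_card h₃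
  exact isPlanar_of_not_isMinor_completeBipartiteGraph (by omega) h

theorem isPlanar_of_triangle {G : SimpleGraph V} {p q u v w : V} {S : Finset V}
    (hp : G.degree p ≤ 2) (hq : G.degree q ≤ 2)
    (hsupp : ∀ v, 0 < G.degree v → v ≠ p → v ≠ q → v ∈ S) (hS : #S ≤ 6)
    (h₄ : #(high G 4) ≤ 3) (huS : u ∈ S) (hvS : v ∈ S) (hwS : w ∈ S) (huv : G.Adj u v)
    (huw : G.Adj u w) (hvw : G.Adj v w) (hu : G.degree u ≤ 3) (hv : G.degree v ≤ 3) :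
    G.IsPlanar := by
  by_contra hG
  obtain ⟨X, Y, hXY, rfl⟩ := exists_hasSides_of_not_isPlanar hp hq hsupp hS h₄ hG
  have hne := fun {z} (hz : z ∈ X ∪ Y) => hXY.ne_of_mem_suppress_suppress hz
  have hadj : ∀ {y z}, y ∈ X ∪ Y → z ∈ X ∪ Y → G.Adj y z →
      (suppress (suppress G p) q).Adj y z := fun hy hz h =>
    suppress_adj_of_adj (suppress_adj_of_adj h (hne hy).1 (hne hz).1) (hne hy).2 (hne hz).2
  have hdeg : ∀ z, (suppress (suppress G p) q).degree z ≤ G.degree z := fun z =>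
    (degree_suppress_le ((degree_suppress_le hp q).trans hq) z).trans (degree_suppress_le hp z)
  exact hXY.not_adj_of_degree_le_three huS hvS hwS ((hdeg u).trans hu) ((hdeg v).trans hv)
    (hadj huS hvS huv) (hadj huS hwS huw) (hadj hvS hwS hvw)

theorem exists_isIndepSet_of_not_isPlanar {G : SimpleGraph V} (h₁ : #(high G 1) ≤ 6)
    (h₄ : #(high G 4) ≤ 3) (hG : ¬ G.IsPlanar) :
    ∃ T ⊆ high G 1, #T = 3 ∧ G.IsIndepSet T := by
  have h₃ := card_le_card (high_anti G (show 1 ≤ 3 by norm_num))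
  have hminor : (completeBipartiteGraph (Fin 3) (Fin 3)).IsMinor G := by_contra fun h =>
    hG (isPlanar_of_not_isMinor_completeBipartiteGraph (by omega) h)
  obtain ⟨X, Y, hXY, hS⟩ := exists_hasSides Subset.rfl h₁ hminor
  by_contra! hT
  have hX : ¬ G.IsIndepSet X := hT X (hS ▸ subset_union_left) hXY.1
  have hY : ¬ G.IsIndepSet Y := hT Y (hS ▸ subset_union_right) hXY.2.1
  simp only [IsIndepSet, Set.Pairwise, mem_coe, not_forall, not_not] at hX hY
  obtain ⟨x, hx, x', hx', hxx', hadjx⟩ := hX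
  obtain ⟨y, hy, y', hy', hyy', hadjy⟩ := hY
  have hsub : {x, x', y, y'} ⊆ high G 4 := by
    simp only [insert_subset_iff, singleton_subset_iff, mem_high]
    exact ⟨hXY.four_le_degree hx hx' hadjx, hXY.four_le_degree hx' hx hadjx.symm,
      hXY.symm.four_le_degree hy hy' hadjy, hXY.symm.four_le_degree hy' hy hadjy.symm⟩
  have hcard := (card_le_card hsub).trans h₄
  have hne : ∀ {a b}, a ∈ X → b ∈ Y → a ≠ b := fun ha hb => (hXY.adj ha hb).ne
  rw [card_insert_of_notMem, card_insert_of_notMem, card_pair hyy'] at hcard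
  · omega
  · simp [hne hx' hy, hne hx' hy']
  · simp [hxx', hne hx hy, hne hx hy']

/-! ### Counting vertices of given degrees -/

/-- The vertices of degree exactly `d` in `G`. -/
noncomputable def ofDegree (G : SimpleGraph V) (d : ℕ) : Finset V := {v | G.degree v = d}

theorem mem_ofDegree {G : SimpleGraph V} {d : ℕ} {v : V} :
    v ∈ ofDegree G d ↔ G.degree v = d := by
  simp [ofDegree]

theorem card_ofDegree_add (G : SimpleGraph V) (d : ℕ) :
    #(ofDegree G d) + #(high G (d + 1)) = #(high G d) := by
  rw [← card_union_of_disjoint]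
  · congr 1
    ext v
    simp only [mem_union, mem_ofDegree, mem_high]
    omega
  · refine disjoint_left.2 fun v hv hv' => ?_
    rw [mem_ofDegree] at hv
    rw [mem_high] at hv'
    omega

theorem sum_card_high (G : SimpleGraph V) (N : ℕ) :
    ∑ d ∈ range N, #(high G (d + 1)) = ∑ v, min N (G.degree v) := by
  simp only [high, card_filter]
  rw [sum_comm]
  refine sum_congr rfl fun v _ => ?_
  rw [← card_filter, ← card_range (min N (G.degree v))]
  congr 1
  ext d
  simp

theorem sum_card_high_le (G : SimpleGraph V) (N : ℕ) :
    ∑ d ∈ range N, #(high G (d + 1)) ≤ 2 * #G.edgeFinset := by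
  rw [sum_card_high, ← sum_degrees_eq_twice_card_edges]
  exact sum_le_sum fun v _ => min_le_right _ _

theorem sum_card_high_eq {G : SimpleGraph V} {N : ℕ} (h : ∀ v, G.degree v ≤ N) :
    ∑ d ∈ range N, #(high G (d + 1)) = 2 * #G.edgeFinset := by
  rw [sum_card_high, ← sum_degrees_eq_twice_card_edges]
  exact sum_congr rfl fun v _ => min_eq_right (h v)

theorem three_mul_card_high_add_le {G : SimpleGraph V} (hG : high G 1 = high G 3) :
    3 * #(high G 3) + #(high G 4) + #(high G 5) ≤ 2 * #G.edgeFinset := by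
  have h₂ : high G 2 = high G 3 :=
    ((high_anti G (by norm_num)).trans hG.subset).antisymm (high_anti G (by norm_num))
  have := sum_card_high_le G 5
  simp only [sum_range_succ, sum_range_zero, zero_add, Nat.reduceAdd, hG, h₂] at this
  omega

theorem three_mul_card_high_add_eq {G : SimpleGraph V} (hG : high G 1 = high G 3)
    (h : ∀ v, G.degree v ≤ 5) :
    3 * #(high G 3) + #(high G 4) + #(high G 5) = 2 * #G.edgeFinset := by
  have h₂ : high G 2 = high G 3 :=
    ((high_anti G (by norm_num)).trans hG.subset).antisymm (high_anti G (by norm_num))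
  have := sum_card_high_eq h
  simp only [sum_range_succ, sum_range_zero, zero_add, Nat.reduceAdd, hG, h₂] at this
  omega

theorem neighborFinset_subset_high_one (G : SimpleGraph V) (v : V) :
    G.neighborFinset v ⊆ high G 1 := fun _ hw =>
  mem_high.2 ((mem_neighborFinset _ _ _).1 hw).degree_pos_right

theorem high_isolate_subset (G : SimpleGraph V) (s : Set V) (d : ℕ) :
    high (isolate G s) d ⊆ high G d := fun _ hv =>
  mem_high.2 ((mem_high.1 hv).trans (degree_le_of_le fun _ _ h => h.1))

theorem notMem_of_mem_high_isolate {G : SimpleGraph V} {s : Set V} {d : ℕ} (hd : 0 < d) {v : V}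
    (hv : v ∈ high (isolate G s) d) : v ∉ s := fun hvs => by
  have := mem_high.1 hv
  rw [degree_isolate_of_mem hvs] at this
  omega

theorem ne_of_mem_high_isolate {G : SimpleGraph V} {v w : V} {d : ℕ} (hd : 0 < d)
    (hw : w ∈ high (isolate G {v}) d) : w ≠ v := by
  simpa using notMem_of_mem_high_isolate hd hw

theorem high_isolate_singleton_subset (G : SimpleGraph V) (v : V) {d : ℕ} (hd : 0 < d) :
    high (isolate G {v}) d ⊆ (high G d).erase v := fun _ hw =>
  mem_erase.2 ⟨ne_of_mem_high_isolate hd hw, high_isolate_subset G _ d hw⟩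

theorem isIndepSet_of_isIndepSet_isolate {G : SimpleGraph V} {s : Set V} {T : Finset V}
    (hT : T ⊆ high (isolate G s) 1) (h : (isolate G s).IsIndepSet T) : G.IsIndepSet T :=
  fun _ hu _ hw huw hadj => h hu hw huw (isolate_adj.2 ⟨hadj,
    notMem_of_mem_high_isolate one_pos (hT hu), notMem_of_mem_high_isolate one_pos (hT hw)⟩)

theorem card_high_isolate_singleton_add (G : SimpleGraph V) (v : V) {d : ℕ} (hd : 0 < d) :
    #(high (isolate G {v}) d) + #(G.neighborFinset v ∩ ofDegree G d) =
      #((high G d).erase v) := by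
  rw [← card_union_of_disjoint]
  · congr 1
    ext u
    obtain rfl | huv := eq_or_ne u v
    · have : u ∉ high (isolate G {u}) d := fun h =>
        ne_of_mem_high_isolate hd h rfl
      simp [this]
    · have := degree_isolate_singleton_add (G := G) huv
      simp only [mem_union, mem_inter, mem_erase, mem_high, mem_ofDegree, mem_neighborFinset]
      split_ifs at this with hadj <;>
        simp only [hadj, huv, ne_eq, not_false_eq_true, true_and, false_and, or_false] <;> omega
  · refine disjoint_left.2 fun u hu hu' => ?_
    simp only [mem_inter, mem_high, mem_ofDegree, mem_neighborFinset] at hu hu'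
    have := degree_isolate_singleton_add_one hu'.1
    omega

theorem sum_card_neighborFinset_inter_ofDegree (G : SimpleGraph V) {d : ℕ} {S : Finset V}
    (hS : high G 1 ⊆ S) :
    ∑ v ∈ S, #(G.neighborFinset v ∩ ofDegree G d) = d * #(ofDegree G d) := by
  rw [sum_card_neighborFinset_inter_comm, sum_congr rfl (g := fun _ => d), sum_const, smul_eq_mul,
    mul_comm]
  intro u hu
  rw [inter_eq_left.2 ((neighborFinset_subset_high_one G u).trans hS),
    card_neighborFinset_eq_degree, mem_ofDegree.1 hu]

theorem subset_high_of_isClique {G : SimpleGraph V} {S : Finset V} (hS : G.IsClique S) :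
    S ⊆ high G (#S - 1) := by
  intro v hv
  rw [mem_high, ← card_erase_of_mem hv]
  exact card_le_card fun w hw => (mem_neighborFinset _ _ _).2
    (hS hv (mem_of_mem_erase hw) (ne_of_mem_erase hw).symm)

theorem card_mul_card_sub_one_le_of_isClique {G : SimpleGraph V} {S : Finset V}
    (hS : G.IsClique S) : #S * (#S - 1) ≤ 2 * #G.edgeFinset := by
  rw [← sum_degrees_eq_twice_card_edges, ← smul_eq_mul, ← sum_const]
  exact (sum_le_sum fun v hv => mem_high.1 (subset_high_of_isClique hS hv)).trans
    (sum_le_univ_sum_of_nonneg fun _ => Nat.zero_le _)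

theorem degree_add_two_le_of_not_adj {G : SimpleGraph V} {S : Finset V} {u w : V}
    (hS : high G 1 ⊆ S) (hu : u ∈ S) (hw : w ∈ S) (hne : u ≠ w) (hadj : ¬ G.Adj u w) :
    G.degree u + 2 ≤ #S := by
  have hsub : G.neighborFinset u ⊆ (S.erase u).erase w := by
    intro x hx
    have hux := (mem_neighborFinset _ _ _).1 hx
    exact mem_erase.2 ⟨fun h => hadj (h ▸ hux), mem_erase.2 ⟨hux.ne',
      hS (neighborFinset_subset_high_one G u hx)⟩⟩
  have := card_le_card hsub
  rw [card_neighborFinset_eq_degree, card_erase_of_mem (mem_erase.2 ⟨hne.symm, hw⟩),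
    card_erase_of_mem hu] at this
  have := one_lt_card.2 ⟨u, hu, w, hw, hne⟩
  omega

/-! ### Graphs with at most fourteen edges -/

theorem isPlanar_of_not_adj {G : SimpleGraph V} {S : Finset V} {u w : V} (hS : high G 1 ⊆ S)
    (hcard : #S ≤ 5) (hu : u ∈ S) (hw : w ∈ S) (hne : u ≠ w) (hadj : ¬ G.Adj u w) :
    G.IsPlanar := by
  have hdeg := degree_add_two_le_of_not_adj hS hu hw hne hadj
  have h₄ : high G 4 ⊆ S.erase u := fun v hv => mem_erase.2
    ⟨fun h => by have := mem_high.1 (h ▸ hv); omega, hS (high_anti _ (by norm_num) hv)⟩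
  have h₃ := card_le_card ((high_anti G (show 1 ≤ 3 by norm_num)).trans hS)
  replace h₄ := card_le_card h₄
  rw [card_erase_of_mem hu] at h₄
  exact isPlanar_of_card_high (by omega) (by omega)

theorem exists_isPlanar_isolate_of_card_high_le {G : SimpleGraph V} {k : ℕ}
    (hcard : #(high G 1) ≤ k + 5) (hE : 2 * #G.edgeFinset < (k + 5) * (k + 4)) :
    ∃ s : Finset V, #s ≤ k ∧ (isolate G s).IsPlanar := by
  have hrest : ∀ s ⊆ high G 1, high (isolate G s) 1 ⊆ high G 1 \ s := fun s _ v hv =>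
    mem_sdiff.2 ⟨high_isolate_subset G _ 1 hv, fun h => notMem_of_mem_high_isolate one_pos hv h⟩
  obtain hlt | heq := hcard.lt_or_eq
  · obtain ⟨s, hs, hsk⟩ := exists_subset_card_eq (min_le_left #(high G 1) k)
    have h₁ := card_le_card (hrest s hs)
    rw [card_sdiff_of_subset hs] at h₁
    have h₃ := card_le_card (high_anti (isolate G s) (show 1 ≤ 3 by norm_num))
    have h₄ := card_le_card (high_anti (isolate G s) (show 1 ≤ 4 by norm_num))
    exact ⟨s, by omega, isPlanar_of_card_high (by omega) (by omega)⟩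
  · have hclique : ¬ G.IsClique (high G 1) := by
      intro hclique
      have := card_mul_card_sub_one_le_of_isClique hclique
      rw [heq, show k + 5 - 1 = k + 4 by omega] at this
      omega
    simp only [IsClique, Set.Pairwise, mem_coe, not_forall] at hclique
    obtain ⟨u, hu, w, hw, hne, hadj⟩ := hclique
    have hle : k ≤ #(high G 1 \ {u, w}) := by
      have := le_card_sdiff {u, w} (high G 1)
      rw [card_pair hne] at this
      omega
    obtain ⟨s, hs, hsk⟩ := exists_subset_card_eq hle
    have hs₁ := hs.trans sdiff_subset
    have hnot : ∀ x ∈ ({u, w} : Finset V), x ∉ s := fun x hx hxs => (mem_sdiff.1 (hs hxs)).2 hx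
    have hcard := card_sdiff_of_subset hs₁
    exact ⟨s, hsk.le, isPlanar_of_not_adj (hrest s hs₁) (by omega)
      (mem_sdiff.2 ⟨hu, hnot u (by simp)⟩) (mem_sdiff.2 ⟨hw, hnot w (by simp)⟩) hne
      fun h => hadj h.1⟩

theorem exists_not_isIndepSet_of_degree_eq {G : SimpleGraph V} {d : ℕ} (hd : d ≤ 5)
    (hdeg : ∀ v ∈ high G 1, G.degree v = d) (hcard : #(high G 1) = d + 3) (hlt : 6 < #(high G 1)) :
    ∃ u ∈ high G 1, ∀ T ⊆ (high G 1).erase u, #T = 3 → ¬ G.IsIndepSet T := by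
  by_contra! h
  have heq : ∀ T ⊆ high G 1, #T = 3 → G.IsIndepSet T →
      ∀ x ∈ T, T = high G 1 \ G.neighborFinset x := by
    intro T hT hT₃ hind x hx
    refine eq_of_subset_of_card_le (fun y hy => mem_sdiff.2 ⟨hT hy, fun hxy => ?_⟩) ?_
    · rw [mem_neighborFinset] at hxy
      exact hind hx hy hxy.ne hxy
    · rw [card_sdiff_of_subset (neighborFinset_subset_high_one G x),
        card_neighborFinset_eq_degree, hdeg x (hT hx)]
      omega
  obtain ⟨v, hv⟩ : (high G 1).Nonempty := card_pos.1 (by omega)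
  obtain ⟨T, hT, hT₃, hTind⟩ := h v hv
  replace hT := hT.trans (erase_subset _ _)
  obtain ⟨u, hu⟩ : T.Nonempty := card_pos.1 (by omega)
  obtain ⟨T', hT', hT'₃, hT'ind⟩ := h u (hT hu)
  have hu' : u ∉ T' := fun h => notMem_erase u _ (hT' h)
  replace hT' := hT'.trans (erase_subset _ _)
  have hdisj : Disjoint T T' := disjoint_left.2 fun x hx hx' => hu' (by
    rwa [heq T' hT' hT'₃ hT'ind x hx', ← heq T hT hT₃ hTind x hx])
  have hunion := card_union_of_disjoint hdisj
  obtain ⟨z, hz, hzT⟩ := exists_mem_notMem_of_card_lt_card (s := T ∪ T') (t := high G 1) (by omega)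
  have hadj : ∀ T ⊆ high G 1, #T = 3 → G.IsIndepSet T → z ∉ T → T ⊆ G.neighborFinset z := by
    intro T hT hT₃ hind hzT x hx
    rw [heq T hT hT₃ hind x hx, mem_sdiff, not_and_not_right] at hzT
    simpa [G.adj_comm] using hzT hz
  rw [notMem_union] at hzT
  have := card_le_card (union_subset (hadj T hT hT₃ hTind hzT.1) (hadj T' hT' hT'₃ hT'ind hzT.2))
  rw [card_neighborFinset_eq_degree, hdeg z hz] at this
  omega

theorem isApex_of_card_high_le_six [Nonempty V] {G : SimpleGraph V} (hE : #G.edgeFinset ≤ 14)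
    (hn : #(high G 1) ≤ 6) : IsApex G := by
  obtain ⟨s, hs, hplanar⟩ := exists_isPlanar_isolate_of_card_high_le (k := 1) hn (by omega)
  obtain ⟨a, ha⟩ := card_le_one_iff_subset_singleton.1 hs
  exact ⟨a, isPlanar_isolate_mono (mod_cast ha) hplanar⟩

theorem degree_le_three_of_adj_of_not_isPlanar_isolate {G : SimpleGraph V} {u v : V}
    (hE : #G.edgeFinset ≤ 14) (hn : #(high G 3) = 7) (hu : G.degree u = 3) (huv : G.Adj u v)
    (hv : v ∈ high G 3) (hplanar : ¬ (isolate G {v}).IsPlanar) :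
    G.degree v ≤ 3 ∧ ∀ w ∈ high G 3, w ≠ u → w ≠ v → 4 ≤ G.degree w := by
  let H := isolate G {v}
  change ¬ H.IsPlanar at hplanar
  have hu' : H.degree u + 1 = 3 := by
    have := degree_isolate_singleton_add_one huv.symm
    rwa [hu] at this
  have hcard : #(((high G 3).erase u).erase v) = 5 := by
    rw [card_erase_of_mem (mem_erase.2 ⟨huv.ne', hv⟩), card_erase_of_mem (mem_high.2 hu.ge), hn]
  have hsub : high H 3 ⊆ ((high G 3).erase u).erase v := fun w hw =>
    mem_erase.2 ⟨ne_of_mem_high_isolate (by norm_num) hw, mem_erase.2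
      ⟨fun h => by have := mem_high.1 (h ▸ hw); omega, high_isolate_subset G _ 3 hw⟩⟩
  have h₃ := card_le_card hsub
  have h₄ : 5 ≤ #(high H 4) := by
    by_contra h₄
    exact hplanar (isPlanar_of_card_high (by omega) (by omega))
  have heq : high H 4 = ((high G 3).erase u).erase v :=
    eq_of_subset_of_card_le ((high_anti H (by norm_num)).trans hsub) (by omega)
  refine ⟨?_, fun w hw hwu hwv => ?_⟩
  · have h₂ : #(insert u (high H 3)) ≤ #(high H 2) := card_le_card (insert_subset
      (mem_high.2 (by omega)) (high_anti H (by norm_num)))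
    rw [card_insert_of_notMem fun h => by have := mem_high.1 h; omega] at h₂
    have h₁ := card_le_card (high_anti H (show 1 ≤ 2 by norm_num))
    have h₃' := card_le_card (high_anti H (show 3 ≤ 4 by norm_num))
    have hsum := sum_card_high_le H 4
    have : #H.edgeFinset + G.degree v = #G.edgeFinset := card_edgeFinset_isolate_singleton_add G v
    simp only [sum_range_succ, sum_range_zero, zero_add, Nat.reduceAdd] at hsum
    omega
  · have : w ∈ high H 4 := heq ▸ mem_erase.2 ⟨hwv, mem_erase.2 ⟨hwu, hw⟩⟩
    exact mem_high.1 (high_isolate_subset G _ 4 this)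

theorem isApex_of_degree_eq_four {G : SimpleGraph V} (hn : #(high G 1) = 7)
    (hdeg : ∀ v ∈ high G 1, G.degree v = 4) : IsApex G := by
  obtain ⟨u, hu, hT⟩ := exists_not_isIndepSet_of_degree_eq (by norm_num) hdeg hn (by omega)
  refine ⟨u, by_contra fun hplanar => ?_⟩
  have hsub := high_isolate_singleton_subset G u one_pos
  have h₁ := card_le_card hsub
  have h₄ := card_high_isolate_singleton_add G u (show 0 < 4 by norm_num)
  have hfour : high G 1 = ofDegree G 4 := by
    ext v
    refine ⟨fun hv => mem_ofDegree.2 (hdeg v hv), fun hv => mem_high.2 ?_⟩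
    have := mem_ofDegree.1 hv
    omega
  have hle := card_le_card (erase_subset_erase u (high_anti G (show 1 ≤ 4 by norm_num)))
  rw [← hfour, inter_eq_left.2 (neighborFinset_subset_high_one G u),
    card_neighborFinset_eq_degree, hdeg u hu] at h₄
  rw [card_erase_of_mem hu] at h₁ hle
  obtain ⟨T, hT', hT₃, hind⟩ := exists_isIndepSet_of_not_isPlanar (by omega) (by omega) hplanar
  exact hT T (hT'.trans hsub) hT₃ (isIndepSet_of_isIndepSet_isolate hT' hind)

theorem isApex_of_card_high_eq_seven {G : SimpleGraph V} (hE : #G.edgeFinset ≤ 14)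
    (hG : high G 1 = high G 3) (hn : #(high G 3) = 7) : IsApex G := by
  by_contra hG'
  have hplanar : ∀ v, ¬ (isolate G {v}).IsPlanar := fun v hv => hG' ⟨v, hv⟩
  have hsum := three_mul_card_high_add_le hG
  by_cases hcubic : ∃ u, G.degree u = 3
  · obtain ⟨u, hu⟩ := hcubic
    have hnbr : ∀ v ∈ G.neighborFinset u, _ := fun v hv =>
      degree_le_three_of_adj_of_not_isPlanar_isolate hE hn hu ((mem_neighborFinset _ _ _).1 hv)
        (hG ▸ neighborFinset_subset_high_one G u hv) (hplanar v)
    obtain ⟨v, hv, v', hv', hne⟩ := one_lt_card.1 (show 1 < #(G.neighborFinset u) by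
      rw [card_neighborFinset_eq_degree]; omega)
    have := (hnbr v hv).2 v' (hG ▸ neighborFinset_subset_high_one G u hv')
      ((mem_neighborFinset _ _ _).1 hv').ne' hne.symm
    have := (hnbr v' hv').1
    omega
  · have h₃ : ofDegree G 3 = ∅ := filter_eq_empty_iff.2 fun v _ hv => hcubic ⟨v, hv⟩
    have h₄ : #(ofDegree G 3) + #(high G 4) = #(high G 3) := card_ofDegree_add G 3
    rw [h₃, card_empty] at h₄
    have h₅ : high G 5 = ∅ := card_eq_zero.1 (by omega)
    refine hG' (isApex_of_degree_eq_four (hG ▸ hn) fun v hv => ?_)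
    have h₄' : high G 4 = high G 3 := eq_of_subset_of_card_le (high_anti G (by norm_num)) (by omega)
    rw [hG, ← h₄', mem_high] at hv
    have hv₅ : v ∉ high G 5 := h₅ ▸ notMem_empty v
    rw [mem_high] at hv₅
    omega

theorem exists_le_card_neighborFinset_inter {G : SimpleGraph V} {d k : ℕ}
    (h : k * #(high G 1) < d * #(ofDegree G d)) :
    ∃ v ∈ high G 1, k < #(G.neighborFinset v ∩ ofDegree G d) := by
  rw [← sum_card_neighborFinset_inter_ofDegree G Subset.rfl, mul_comm, ← smul_eq_mul,
    ← sum_const] at h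
  exact exists_lt_of_sum_lt h

theorem isApex_of_seven_lt_card_high {G : SimpleGraph V} (hE : #G.edgeFinset ≤ 14)
    (hG : high G 1 = high G 3) (hn : 7 < #(high G 3)) : IsApex G := by
  have hdeg := three_mul_card_high_add_le hG
  have hcubic : #(ofDegree G 3) + #(high G 4) = #(high G 3) := card_ofDegree_add G 3
  obtain ⟨v, hv, hlt⟩ := exists_le_card_neighborFinset_inter (G := G) (d := 3)
    (k := #(high G 3) - 7) (by
      have : #(high G 3) ≤ 9 := by omega
      rw [hG]
      interval_cases #(high G 3) <;> omega)
  have hcard := card_high_isolate_singleton_add G v (show 0 < 3 by norm_num)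
  have h₄ := card_le_card (high_isolate_subset G {v} 4)
  rw [card_erase_of_mem (hG ▸ hv)] at hcard
  exact ⟨v, isPlanar_of_card_high (by omega) (by omega)⟩

theorem isApex_of_card_edgeFinset_le [Nonempty V] {G : SimpleGraph V}
    (hE : #G.edgeFinset ≤ 14) : IsApex G := by
  induction G using suppress_induction with
  | suppress G v hpos hv ih =>
    obtain ⟨a, ha⟩ := ih ((card_edgeFinset_suppress_lt hpos hv).le.trans hE)
    exact ⟨a, isPlanar_isolate_of_suppress hv ha⟩
  | reduced G hG =>
    obtain hn | hn | hn := lt_trichotomy #(high G 3) 7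
    · exact isApex_of_card_high_le_six hE (by rw [hG]; omega)
    · exact isApex_of_card_high_eq_seven hE hG hn
    · exact isApex_of_seven_lt_card_high hE hG hn

/-! ### Graphs with fifteen edges that are not apex -/

/-- `G` is not apex although it has at most fifteen edges, the smallest number of edges that a graph
that is not apex can have. This is what remains of a graph that is not 2-apex after deleting a
vertex of large degree. -/
structure IsTight (G : SimpleGraph V) : Prop where
  not_isApex : ¬ IsApex G
  card_edgeFinset_le : #G.edgeFinset ≤ 15

namespace IsTight

variable {G : SimpleGraph V}

theorem not_isPlanar_isolate (hG : IsTight G) (v : V) : ¬ (isolate G {v}).IsPlanar :=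
  fun h => hG.not_isApex ⟨v, h⟩

theorem high_one_eq (hG : IsTight G) : high G 1 = high G 3 := by
  refine subset_antisymm (fun v hv => ?_) (high_anti G (by norm_num))
  by_contra hv₃
  rw [mem_high] at hv hv₃
  have hv₂ : G.degree v ≤ 2 := by omega
  have := (card_edgeFinset_suppress_lt hv hv₂).trans_le hG.card_edgeFinset_le
  have : Nonempty V := ⟨v⟩
  obtain ⟨a, ha⟩ := isApex_of_card_edgeFinset_le (G := suppress G v) (by omega)
  exact hG.not_isApex ⟨a, isPlanar_isolate_of_suppress hv₂ ha⟩

theorem three_mul_card_high_add_le (hG : IsTight G) :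
    3 * #(high G 3) + #(high G 4) + #(high G 5) ≤ 30 :=
  (ApexGraph.three_mul_card_high_add_le hG.high_one_eq).trans
    (Nat.mul_le_mul_left 2 hG.card_edgeFinset_le)

theorem card_neighborFinset_inter_add_five_le (hG : IsTight G) {v : V} (hv : v ∈ high G 3)
    (h : #(high G 3) ≤ #(G.neighborFinset v ∩ ofDegree G 3) + 6) :
    #(G.neighborFinset v ∩ ofDegree G 4) + 5 ≤ #((high G 4).erase v) := by
  have h₃ := card_high_isolate_singleton_add G v (show 0 < 3 by norm_num)
  have h₄ := card_high_isolate_singleton_add G v (show 0 < 4 by norm_num)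
  rw [card_erase_of_mem hv] at h₃
  by_contra hlt
  exact hG.not_isPlanar_isolate v (isPlanar_of_card_high (by omega) (by omega))

end IsTight

theorem degree_add_lt_card_edgeFinset {G : SimpleGraph V}
    (hG : ∀ a b, ¬ (isolate G {a, b}).IsPlanar) (a : V) :
    G.degree a + 14 < #G.edgeFinset := by
  by_contra hlt
  have := card_edgeFinset_isolate_singleton_add G a
  have : Nonempty V := ⟨a⟩
  exact not_isApex_isolate hG a (isApex_of_card_edgeFinset_le (by omega))

theorem high_isolate_pair_subset (G : SimpleGraph V) (a b : V) {d : ℕ} (hd : 0 < d) :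
    high (isolate G {a, b}) d ⊆ ((high G 1).erase a).erase b := by
  intro v hv
  obtain ⟨ha, hb⟩ : v ≠ a ∧ v ≠ b := by simpa using notMem_of_mem_high_isolate hd hv
  exact mem_erase.2 ⟨hb, mem_erase.2 ⟨ha, high_anti G hd (high_isolate_subset G _ d hv)⟩⟩

theorem card_high_isolate_add_card_le {G : SimpleGraph V} {s : Set V} {S : Finset V} {d : ℕ}
    (hd : 0 < d) (hS : S ⊆ high G 1) (hlt : ∀ v ∈ S, (isolate G s).degree v < d) :
    #(high (isolate G s) d) + #S ≤ #(high G 1) := by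
  rw [← card_sdiff_add_card_eq_card hS]
  refine Nat.add_le_add_right (card_le_card fun v hv => mem_sdiff.2
    ⟨high_anti G hd (high_isolate_subset G s d hv), fun hvS => ?_⟩) _
  exact (hlt v hvS).not_ge (mem_high.1 hv)

theorem card_high_isolate_pair_add_le {G : SimpleGraph V} {a b : V} {d : ℕ} (hab : a ≠ b)
    (hd : 0 < d) (hdeg : ∀ v, G.degree v ≤ d + 1) :
    #(high (isolate G {a, b}) d) + #(G.neighborFinset a ∩ G.neighborFinset b) ≤
      #(((high G 1).erase a).erase b) := by
  rw [← card_union_of_disjoint]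
  · refine card_le_card (union_subset (high_isolate_pair_subset G a b hd) fun v hv => ?_)
    obtain ⟨ha, hb⟩ := mem_inter.1 hv
    rw [mem_neighborFinset] at ha hb
    exact mem_erase.2 ⟨hb.ne', mem_erase.2 ⟨ha.ne', mem_high.2 ha.degree_pos_right⟩⟩
  · refine disjoint_left.2 fun v hv hv' => ?_
    obtain ⟨ha, hb⟩ := mem_inter.1 hv'
    rw [mem_neighborFinset] at ha hb
    have := degree_isolate_pair_add_two hab ha hb
    have := mem_high.1 hv
    have := hdeg v
    omega

theorem union_neighborFinset_subset_of_not_adj {G : SimpleGraph V} {a b : V}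
    (h : ¬ G.Adj a b) :
    G.neighborFinset a ∪ G.neighborFinset b ⊆ ((high G 1).erase a).erase b := by
  intro v hv
  have hv₁ := union_subset (neighborFinset_subset_high_one G a)
    (neighborFinset_subset_high_one G b) hv
  rw [mem_union, mem_neighborFinset, mem_neighborFinset] at hv
  refine mem_erase.2 ⟨?_, mem_erase.2 ⟨?_, hv₁⟩⟩ <;> rintro rfl
  · exact h (hv.resolve_right G.irrefl)
  · exact h (hv.resolve_left G.irrefl).symm

theorem card_neighborFinset_inter_of_not_adj {G : SimpleGraph V} {a b : V} (hab : a ≠ b)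
    (ha : a ∈ high G 1) (hb : b ∈ high G 1) (h : ¬ G.Adj a b) :
    G.degree a + G.degree b + 2 ≤
      #(high G 1) + #(G.neighborFinset a ∩ G.neighborFinset b) := by
  have hle := card_le_card (union_neighborFinset_subset_of_not_adj h)
  have := card_union_add_card_inter (G.neighborFinset a) (G.neighborFinset b)
  rw [card_erase_of_mem (mem_erase.2 ⟨hab.symm, hb⟩), card_erase_of_mem ha] at hle
  simp only [card_neighborFinset_eq_degree] at this
  have := one_lt_card.2 ⟨a, ha, b, hb, hab⟩
  omega

theorem exists_isPlanar_isolate_pair_of_degree_eq_five {G : SimpleGraph V}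
    (hn : #(high G 1) = 8) (hdeg : ∀ v ∈ high G 1, G.degree v = 5) :
    ∃ a b, (isolate G {a, b}).IsPlanar := by
  obtain ⟨u, hu, hT⟩ := exists_not_isIndepSet_of_degree_eq le_rfl hdeg hn (by omega)
  obtain ⟨b, hb, hbu⟩ : ∃ b ∈ (high G 1).erase u, b ∉ G.neighborFinset u := by
    refine exists_mem_notMem_of_card_lt_card ?_
    rw [card_neighborFinset_eq_degree, hdeg u hu, card_erase_of_mem hu]
    omega
  have hne := ne_of_mem_erase hb
  rw [mem_neighborFinset] at hbu
  refine ⟨u, b, by_contra fun hplanar => ?_⟩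
  have hinter := card_neighborFinset_inter_of_not_adj hne.symm hu (mem_of_mem_erase hb) hbu
  rw [hdeg u hu, hdeg b (mem_of_mem_erase hb)] at hinter
  have hdeg' : ∀ v, G.degree v ≤ 4 + 1 := fun v => by
    by_cases hv : v ∈ high G 1
    · exact (hdeg v hv).le
    · rw [mem_high] at hv
      omega
  have hcard : #(((high G 1).erase u).erase b) = 6 := by
    rw [card_erase_of_mem hb, card_erase_of_mem hu, hn]
  have hsub := high_isolate_pair_subset G u b one_pos
  have h₁ := card_le_card hsub
  have h₄ := card_high_isolate_pair_add_le hne.symm (by norm_num) hdeg'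
  obtain ⟨T, hT', hT₃, hind⟩ := exists_isIndepSet_of_not_isPlanar (by omega) (by omega) hplanar
  exact hT T ((hT'.trans hsub).trans (erase_subset _ _)) hT₃
    (isIndepSet_of_isIndepSet_isolate hT' hind)

/-! ### Eight vertices and fifteen edges -/

theorem two_le_card_neighborFinset_inter {G : SimpleGraph V} {z u w : V} {d : ℕ} (huw : u ≠ w)
    (hu : G.Adj z u) (hw : G.Adj z w) (hud : G.degree u = d) (hwd : G.degree w = d) :
    2 ≤ #(G.neighborFinset z ∩ ofDegree G d) := by
  rw [← card_pair huw]
  refine card_le_card ?_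
  simp [insert_subset_iff, mem_ofDegree, hu, hw, hud, hwd]

theorem degree_isolate_le_two_of_adj {G : SimpleGraph V} {u w : V} (hw : G.degree w = 3)
    (h : G.Adj u w) : (isolate G {u}).degree w ≤ 2 := by
  have := degree_isolate_singleton_add_one h
  omega

/-- A vertex `v` of degree three with two neighbors `u` and `w` of degree three, whose third
neighbor `x` has degree at least five. -/
structure IsFork (G : SimpleGraph V) (v u w x : V) : Prop where
  ne : u ≠ w
  degree_center : G.degree v = 3
  degree_left : G.degree u = 3
  degree_right : G.degree w = 3
  adj_left : G.Adj v u
  adj_right : G.Adj v w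
  adj_top : G.Adj v x
  five_le_degree : 5 ≤ G.degree x

theorem IsFork.symm {G : SimpleGraph V} {v u w x : V} (h : IsFork G v u w x) :
    IsFork G v w u x :=
  ⟨h.ne.symm, h.degree_center, h.degree_right, h.degree_left, h.adj_right, h.adj_left, h.adj_top,
    h.five_le_degree⟩

namespace IsTight

variable {G : SimpleGraph V}

theorem card_ofDegree_three_eq (hG : IsTight G) (hn : #(high G 3) = 8) :
    #(ofDegree G 3) = 2 ∨ #(ofDegree G 3) = 3 := by
  have hsum := hG.three_mul_card_high_add_le
  have hcubic : #(ofDegree G 3) + #(high G 4) = #(high G 3) := card_ofDegree_add G 3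
  suffices #(ofDegree G 3) < 4 by omega
  by_contra hlt
  obtain ⟨v, hv, ht⟩ := exists_le_card_neighborFinset_inter (G := G) (d := 3) (k := 1)
    (by rw [hG.high_one_eq]; omega)
  have := hG.card_neighborFinset_inter_add_five_le (hG.high_one_eq ▸ hv) (by omega)
  have := card_erase_le (s := high G 4) (a := v)
  omega

theorem neighborFinset_inter_of_card_ofDegree_three_eq_three (hG : IsTight G)
    (hn : #(high G 3) = 8) (hk : #(ofDegree G 3) = 3) {v : V} (hv : v ∈ high G 3)
    (ht : 2 ≤ #(G.neighborFinset v ∩ ofDegree G 3)) :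
    G.degree v = 3 ∧ G.neighborFinset v ∩ ofDegree G 4 = ∅ := by
  have hcubic : #(ofDegree G 3) + #(high G 4) = #(high G 3) := card_ofDegree_add G 3
  have h₅ := hG.card_neighborFinset_inter_add_five_le hv (by omega)
  have hv₄ : v ∉ high G 4 := fun hv₄ => by
    rw [card_erase_of_mem hv₄] at h₅
    omega
  have := card_erase_le (s := high G 4) (a := v)
  refine ⟨?_, card_eq_zero.1 (by omega)⟩
  rw [mem_high] at hv hv₄
  omega

theorem exists_adj_of_card_ofDegree_three_eq_three (hG : IsTight G)
    (hn : #(high G 3) = 8) (hk : #(ofDegree G 3) = 3) {v : V} (hv : v ∈ high G 3)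
    (ht : 2 ≤ #(G.neighborFinset v ∩ ofDegree G 3)) : ∃ x, G.Adj v x ∧ 5 ≤ G.degree x := by
  obtain ⟨hv₃, h₄⟩ := hG.neighborFinset_inter_of_card_ofDegree_three_eq_three hn hk hv ht
  have hle : #(G.neighborFinset v ∩ ofDegree G 3) ≤ 2 := by
    have : G.neighborFinset v ∩ ofDegree G 3 ⊆ (ofDegree G 3).erase v := fun w hw => by
      obtain ⟨hvw, hw⟩ := mem_inter.1 hw
      exact mem_erase.2 ⟨((mem_neighborFinset _ _ _).1 hvw).ne', hw⟩
    have := card_le_card this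
    rwa [card_erase_of_mem (mem_ofDegree.2 hv₃), hk] at this
  obtain ⟨x, hvx, hx⟩ : ∃ x ∈ G.neighborFinset v, x ∉ G.neighborFinset v ∩ ofDegree G 3 :=
    exists_mem_notMem_of_card_lt_card (by rw [card_neighborFinset_eq_degree]; omega)
  have hx₃ := hG.high_one_eq ▸ neighborFinset_subset_high_one G v hvx
  have hx₄ : x ∉ G.neighborFinset v ∩ ofDegree G 4 := h₄ ▸ notMem_empty x
  simp only [mem_inter, hvx, true_and, mem_ofDegree] at hx hx₄
  rw [mem_high] at hx₃
  exact ⟨x, (mem_neighborFinset _ _ _).1 hvx, by omega⟩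

theorem exists_isFork (hG : IsTight G) (hn : #(high G 3) = 8)
    (hk : #(ofDegree G 3) = 3) : ∃ v u w x, IsFork G v u w x := by
  obtain ⟨v, hv, ht⟩ := exists_le_card_neighborFinset_inter (G := G) (d := 3) (k := 1)
    (by rw [hG.high_one_eq]; omega)
  rw [hG.high_one_eq] at hv
  obtain ⟨hv₃, -⟩ := hG.neighborFinset_inter_of_card_ofDegree_three_eq_three hn hk hv ht
  obtain ⟨x, hvx, hx⟩ := hG.exists_adj_of_card_ofDegree_three_eq_three hn hk hv ht
  obtain ⟨u, hu, w, hw, huw⟩ := one_lt_card.1 ht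
  rw [mem_inter, mem_neighborFinset, mem_ofDegree] at hu hw
  exact ⟨v, u, w, x, huw, hv₃, hu.2, hw.2, hu.1, hw.1, hvx, hx⟩

theorem ofDegree_three_eq_of_isFork (hk : #(ofDegree G 3) = 3) {v u w x : V}
    (h : IsFork G v u w x) : ofDegree G 3 = {v, u, w} := by
  refine (eq_of_subset_of_card_le ?_ ?_).symm
  · simp [insert_subset_iff, mem_ofDegree, h.degree_center, h.degree_left, h.degree_right]
  · rw [hk, card_insert_of_notMem (by simp [h.adj_left.ne, h.adj_right.ne]), card_pair h.ne]

theorem high_five_eq_of_isFork (hG : IsTight G) (hn : #(high G 3) = 8)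
    (hk : #(ofDegree G 3) = 3) {v u w x : V} (h : IsFork G v u w x) : high G 5 = {x} := by
  have hcubic : #(ofDegree G 3) + #(high G 4) = #(high G 3) := card_ofDegree_add G 3
  have := hG.three_mul_card_high_add_le
  refine (eq_of_subset_of_card_le (singleton_subset_iff.2 (mem_high.2 h.five_le_degree)) ?_).symm
  rw [card_singleton]
  omega

theorem neighborFinset_erase_subset_ofDegree_four (hG : IsTight G) (hn : #(high G 3) = 8)
    (hk : #(ofDegree G 3) = 3) {v u w x : V} (h : IsFork G v u w x) :
    (G.neighborFinset u).erase v ⊆ ofDegree G 4 := by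
  have hux : ¬ G.Adj u x := fun hux => by
    have := hG.neighborFinset_inter_of_card_ofDegree_three_eq_three hn hk
      (mem_high.2 (le_trans (by norm_num) h.five_le_degree))
      (two_le_card_neighborFinset_inter h.adj_left.ne h.adj_top.symm hux.symm h.degree_center
        h.degree_left)
    have := h.five_le_degree
    omega
  have hlt : ∀ y, G.Adj u y → G.degree y < 5 := fun y huy => by
    by_contra! hy
    have hyx : y = x := by
      simpa [hG.high_five_eq_of_isFork hn hk h] using mem_high.2 hy
    exact hux (hyx ▸ huy)
  intro z hz
  obtain ⟨hzv, hz⟩ := mem_erase.1 hz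
  have hz₃ := mem_high.1 (hG.high_one_eq ▸ neighborFinset_subset_high_one G u hz)
  rw [mem_neighborFinset] at hz
  have hz₅ := hlt z hz
  suffices G.degree z ≠ 3 from mem_ofDegree.2 (by omega)
  intro hz₃
  obtain ⟨y, huy, hy⟩ := hG.exists_adj_of_card_ofDegree_three_eq_three hn hk
    (mem_high.2 h.degree_left.ge)
    (two_le_card_neighborFinset_inter hzv hz h.adj_left.symm hz₃ h.degree_center)
  exact absurd (hlt y huy) (by omega)

theorem disjoint_neighborFinset_erase (hG : IsTight G) (hn : #(high G 3) = 8)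
    (hk : #(ofDegree G 3) = 3) {v u w x : V} (h : IsFork G v u w x) :
    Disjoint ((G.neighborFinset u).erase v) ((G.neighborFinset w).erase v) := by
  refine disjoint_left.2 fun z hzu hzw => ?_
  have hz := mem_ofDegree.1 (hG.neighborFinset_erase_subset_ofDegree_four hn hk h hzu)
  have hzu := (mem_neighborFinset _ _ _).1 (mem_of_mem_erase hzu)
  have hzw := (mem_neighborFinset _ _ _).1 (mem_of_mem_erase hzw)
  have := hG.neighborFinset_inter_of_card_ofDegree_three_eq_three hn hk
    (mem_high.2 (show 3 ≤ G.degree z by omega))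
    (two_le_card_neighborFinset_inter h.ne hzu.symm hzw.symm h.degree_left h.degree_right)
  omega

theorem card_neighborFinset_erase_of_isFork {v u w x : V} (h : IsFork G v u w x) :
    #((G.neighborFinset u).erase v) = 2 := by
  rw [card_erase_of_mem (by simpa using h.adj_left.symm), card_neighborFinset_eq_degree,
    h.degree_left]

theorem neighborFinset_erase_union_eq_ofDegree_four (hG : IsTight G) (hn : #(high G 3) = 8)
    (hk : #(ofDegree G 3) = 3) {v u w x : V} (h : IsFork G v u w x) :
    (G.neighborFinset u).erase v ∪ (G.neighborFinset w).erase v = ofDegree G 4 := by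
  refine eq_of_subset_of_card_le
    (union_subset (hG.neighborFinset_erase_subset_ofDegree_four hn hk h)
      (hG.neighborFinset_erase_subset_ofDegree_four hn hk h.symm)) ?_
  rw [card_union_of_disjoint (hG.disjoint_neighborFinset_erase hn hk h),
    card_neighborFinset_erase_of_isFork h, card_neighborFinset_erase_of_isFork h.symm]
  have hcubic : #(ofDegree G 3) + #(high G 4) = #(high G 3) := card_ofDegree_add G 3
  have hquartic : #(ofDegree G 4) + #(high G 5) = #(high G 4) := card_ofDegree_add G 4
  rw [hG.high_five_eq_of_isFork hn hk h, card_singleton] at hquartic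
  omega

theorem mem_insert_of_mem_high_of_isFork (hG : IsTight G) (hn : #(high G 3) = 8)
    (hk : #(ofDegree G 3) = 3) {v u w x z : V} (h : IsFork G v u w x) (hz : z ∈ high G 3)
    (hzv : z ≠ v) (hzu : z ≠ u) (hzw : z ≠ w) : z ∈ insert x (ofDegree G 4) := by
  have hz₃ : z ∉ ofDegree G 3 := by
    simp [ofDegree_three_eq_of_isFork hk h, hzu, hzw, hzv]
  have hz₅ : z ∈ high G 5 ↔ z = x := by rw [hG.high_five_eq_of_isFork hn hk h, mem_singleton]
  rw [mem_high] at hz hz₅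
  rw [mem_insert, ← hz₅]
  rw [mem_ofDegree] at hz₃ ⊢
  omega

theorem isMinor_isolate_of_isFork (hG : IsTight G) (hn : #(high G 3) = 8) {v u w x : V}
    (h : IsFork G v u w x) : (⊤ : SimpleGraph (Fin 5)).IsMinor (isolate G {v}) := by
  by_contra hK₅
  refine hG.not_isPlanar_isolate v ⟨hK₅, fun hK₃₃ => ?_⟩
  have hcard := two_mul_card_le_of_isMinor le_rfl three_le_degree_completeBipartiteGraph _ hK₃₃
  have h₃ := card_high_isolate_singleton_add G v (show 0 < 3 by norm_num)
  have := two_le_card_neighborFinset_inter h.ne h.adj_left h.adj_right h.degree_left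
    h.degree_right
  rw [card_erase_of_mem (mem_high.2 h.degree_center.ge)] at h₃
  rw [Fintype.card_sum, Fintype.card_fin] at hcard
  omega

theorem not_adj_of_isFork (hG : IsTight G) (hn : #(high G 3) = 8) (hk : #(ofDegree G 3) = 3)
    {v u w x : V} (h : IsFork G v u w x) : ¬ G.Adj u w := fun huw => by
  have := mem_ofDegree.1 (hG.neighborFinset_erase_subset_ofDegree_four hn hk h
    (mem_erase.2 ⟨h.adj_right.ne', (mem_neighborFinset _ _ _).2 huw⟩))
  have := h.degree_right
  omega

theorem isClique_suppress_suppress_of_isFork (hG : IsTight G) (hn : #(high G 3) = 8)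
    (hk : #(ofDegree G 3) = 3) {v u w x : V} (h : IsFork G v u w x) :
    (suppress (suppress (isolate G {v}) u) w).IsClique (insert x (ofDegree G 4) : Finset V) := by
  obtain ⟨Q, hQ, hcard, hclique⟩ := exists_isClique_suppress_suppress
    (S := insert x (ofDegree G 4)) (degree_isolate_le_two_of_adj h.degree_left h.adj_left)
    (degree_isolate_le_two_of_adj h.degree_right h.adj_right) (fun z hz hzu hzw => by
      obtain ⟨hzv, hz⟩ := mem_erase.1 (high_isolate_singleton_subset G v one_pos (mem_high.2 hz))
      exact hG.mem_insert_of_mem_high_of_isFork hn hk h (hG.high_one_eq ▸ hz) hzv hzu hzw)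
    (hG.isMinor_isolate_of_isFork hn h)
  have hQF := hQ.trans inter_subset_left
  have hF : #(insert x (ofDegree G 4)) ≤ 5 := by
    have hcubic : #(ofDegree G 3) + #(high G 4) = #(high G 3) := card_ofDegree_add G 3
    have hquartic : #(ofDegree G 4) + #(high G 5) = #(high G 4) := card_ofDegree_add G 4
    have := card_insert_le x (ofDegree G 4)
    rw [hG.high_five_eq_of_isFork hn hk h, card_singleton] at hquartic
    omega
  rwa [← eq_of_subset_of_card_le hQF (by omega)]

/-- Every edge between the five branch vertices of the `K₅` minor of `G - v` that is missing in
`G` is provided by `u` or by `w`. -/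
theorem adj_of_mem_neighborFinset_erase (hG : IsTight G) (hn : #(high G 3) = 8)
    (hk : #(ofDegree G 3) = 3) {v u w x p q : V} (h : IsFork G v u w x)
    (hp : p ∈ (G.neighborFinset u).erase v) (hq : q ∈ (G.neighborFinset w).erase v) :
    G.Adj x q ∧ G.Adj p q := by
  have h₄ := hG.neighborFinset_erase_union_eq_ofDegree_four hn hk h
  have hdisj := hG.disjoint_neighborFinset_erase hn hk h
  have hclique := hG.isClique_suppress_suppress_of_isFork hn hk h
  have huw : ¬ (isolate G {v}).Adj u w := fun huw => hG.not_adj_of_isFork hn hk h huw.1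
  have hadj : ∀ y ∈ insert x (ofDegree G 4), y ∉ (G.neighborFinset w).erase v → G.Adj y q := by
    intro y hy hyw
    have hyq := hclique hy (mem_insert_of_mem (h₄ ▸ mem_union_right _ hq))
      (fun hyq => hyw (hyq ▸ hq))
    obtain hyq | ⟨-, hqu⟩ | ⟨hyw', -⟩ := adj_or_of_adj_suppress_suppress huw hyq
    · exact hyq.1
    · have hqu := mem_erase.2 ⟨hqu.2.1, (mem_neighborFinset _ _ _).2 hqu.1.symm⟩
      exact absurd hq (disjoint_left.1 hdisj hqu)
    · exact absurd (mem_erase.2 ⟨hyw'.2.1, (mem_neighborFinset _ _ _).2 hyw'.1.symm⟩) hyw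
  refine ⟨hadj x (mem_insert_self _ _) fun hx => ?_, hadj p (mem_insert_of_mem
    (h₄ ▸ mem_union_left _ hp)) (disjoint_left.1 hdisj hp)⟩
  have := mem_ofDegree.1 (h₄ ▸ mem_union_right _ hx)
  have := h.five_le_degree
  omega

theorem degree_le_four (hG : IsTight G) (hn : #(high G 3) = 8) (hk : #(ofDegree G 3) = 2)
    (v : V) : G.degree v ≤ 4 := by
  have hcubic : #(ofDegree G 3) + #(high G 4) = #(high G 3) := card_ofDegree_add G 3
  have := hG.three_mul_card_high_add_le
  by_contra! hv
  have := card_pos.2 ⟨v, mem_high.2 (show 5 ≤ G.degree v from hv)⟩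
  omega

theorem degree_eq_four (hG : IsTight G) (hn : #(high G 3) = 8) (hk : #(ofDegree G 3) = 2)
    {u w v : V} (huw : u ≠ w) (hu : G.degree u = 3) (hw : G.degree w = 3) (hv : v ∈ high G 1)
    (hvu : v ≠ u) (hvw : v ≠ w) : G.degree v = 4 := by
  rw [hG.high_one_eq, mem_high] at hv
  have := hG.degree_le_four hn hk v
  suffices G.degree v ≠ 3 by omega
  intro hv₃
  have := two_lt_card.2 ⟨v, mem_ofDegree.2 hv₃, u, mem_ofDegree.2 hu, w, mem_ofDegree.2 hw,
    hvu, hvw, huw⟩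
  omega

theorem disjoint_neighborFinset (hG : IsTight G) (hn : #(high G 3) = 8)
    (hk : #(ofDegree G 3) = 2) {u w : V} (huw : u ≠ w) (hu : G.degree u = 3)
    (hw : G.degree w = 3) : Disjoint (G.neighborFinset u) (G.neighborFinset w) := by
  refine disjoint_left.2 fun v huv hwv => ?_
  rw [mem_neighborFinset] at huv hwv
  have hcubic : #(ofDegree G 3) + #(high G 4) = #(high G 3) := card_ofDegree_add G 3
  have hv := hG.degree_eq_four hn hk huw hu hw (mem_high.2 huv.degree_pos_right) huv.ne' hwv.ne'
  have h₄ := hG.card_neighborFinset_inter_add_five_le (mem_high.2 (show 3 ≤ G.degree v by omega))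
    (by have := two_le_card_neighborFinset_inter huw huv.symm hwv.symm hu hw; omega)
  rw [card_erase_of_mem (mem_high.2 hv.ge)] at h₄
  obtain ⟨x, hvx, hx⟩ : ∃ x ∈ G.neighborFinset v, x ∉ ofDegree G 3 :=
    exists_mem_notMem_of_card_lt_card (by rw [card_neighborFinset_eq_degree]; omega)
  have hx₁ := neighborFinset_subset_high_one G v hvx
  have hx₄ := hG.degree_eq_four hn hk huw hu hw hx₁
    (fun h => hx (h ▸ mem_ofDegree.2 hu)) (fun h => hx (h ▸ mem_ofDegree.2 hw))
  have := card_pos.2 ⟨x, mem_inter.2 ⟨hvx, mem_ofDegree.2 hx₄⟩⟩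
  omega

theorem mem_erase_of_degree_isolate_pos {u w v : V} (hv : 0 < (isolate G {u}).degree v)
    (hvw : v ≠ w) : v ∈ ((high G 1).erase u).erase w :=
  mem_erase.2 ⟨hvw, high_isolate_singleton_subset G u one_pos (mem_high.2 hv)⟩

theorem card_erase_erase_high_one (hG : IsTight G) (hn : #(high G 3) = 8) {u w : V}
    (hadj : G.Adj u w) : #(((high G 1).erase u).erase w) = 6 := by
  rw [card_erase_of_mem (mem_erase.2 ⟨hadj.ne', mem_high.2 hadj.degree_pos_right⟩),
    card_erase_of_mem (mem_high.2 hadj.degree_pos_left), hG.high_one_eq, hn]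

theorem isMinor_completeBipartiteGraph_isolate (hG : IsTight G) (hn : #(high G 3) = 8)
    (hk : #(ofDegree G 3) = 2) {u w v : V} (huw : u ≠ w) (hu : G.degree u = 3)
    (hw : G.degree w = 3) (huv : G.Adj u v) (hvw : v ≠ w) :
    (completeBipartiteGraph (Fin 3) (Fin 3)).IsMinor (isolate G {v}) := by
  have hv := hG.degree_eq_four hn hk huw hu hw (mem_high.2 huv.degree_pos_right) huv.ne' hvw
  have hcubic : #(ofDegree G 3) + #(high G 4) = #(high G 3) := card_ofDegree_add G 3
  have h₃ := card_high_isolate_singleton_add G v (show 0 < 3 by norm_num)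
  have h₄ := card_high_isolate_singleton_add G v (show 0 < 4 by norm_num)
  have hv₃ : 0 < #(G.neighborFinset v ∩ ofDegree G 3) :=
    card_pos.2 ⟨u, mem_inter.2 ⟨(mem_neighborFinset _ _ _).2 huv.symm, mem_ofDegree.2 hu⟩⟩
  have hv₄ : #((G.neighborFinset v).erase u) ≤ #(G.neighborFinset v ∩ ofDegree G 4) := by
    refine card_le_card fun z hz => ?_
    obtain ⟨hzu, hz⟩ := mem_erase.1 hz
    refine mem_inter.2 ⟨hz, mem_ofDegree.2 (hG.degree_eq_four hn hk huw hu hw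
      (neighborFinset_subset_high_one G v hz) hzu ?_)⟩
    rintro rfl
    exact disjoint_left.1 (hG.disjoint_neighborFinset hn hk huw hu hw)
      ((mem_neighborFinset _ _ _).2 huv)
      ((mem_neighborFinset _ _ _).2 ((mem_neighborFinset _ _ _).1 hz).symm)
  rw [card_erase_of_mem ((mem_neighborFinset _ _ _).2 huv.symm), card_neighborFinset_eq_degree,
    hv] at hv₄
  rw [card_erase_of_mem (mem_high.2 (by omega))] at h₃ h₄
  by_contra hK₃₃
  refine hG.not_isPlanar_isolate v (isPlanar_of_not_isMinor_completeBipartiteGraph ?_ hK₃₃)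
  omega

theorem exists_hasSides_suppress_isolate (hG : IsTight G) (hn : #(high G 3) = 8)
    (hk : #(ofDegree G 3) = 2) {u w v : V} (huw : u ≠ w) (hu : G.degree u = 3)
    (hw : G.degree w = 3) (huv : G.Adj u v) (hvw : v ≠ w) :
    ∃ X Y, HasSides (suppress (isolate G {v}) u) X Y ∧
      X ∪ Y = ((high G 1).erase v).erase u ∧ w ∈ X := by
  have hw' : w ∈ ((high G 1).erase v).erase u := by
    simp [hvw.symm, huw.symm, mem_high, hw]
  obtain ⟨X, Y, hXY, hunion⟩ := exists_hasSides_suppress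
    (S := ((high G 1).erase v).erase u) (degree_isolate_le_two_of_adj hu huv.symm)
    (fun _ => mem_erase_of_degree_isolate_pos) (hG.card_erase_erase_high_one hn huv.symm).le
    (hG.isMinor_completeBipartiteGraph_isolate hn hk huw hu hw huv hvw)
  obtain hX | hY := mem_union.1 (hunion ▸ hw')
  · exact ⟨X, Y, hXY, hunion, hX⟩
  · exact ⟨Y, X, hXY.symm, by rw [union_comm, hunion], hY⟩

theorem adj_of_notMem_neighborFinset (hG : IsTight G) (hn : #(high G 3) = 8)
    (hk : #(ofDegree G 3) = 2) {u w c z : V} (hu : G.degree u = 3) (hw : G.degree w = 3)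
    (hadj : G.Adj u w) (hc : c ∈ high G 1 \ (G.neighborFinset u ∪ G.neighborFinset w))
    (hz : z ∈ G.neighborFinset u ∪ G.neighborFinset w) (hzu : z ≠ u) (hzw : z ≠ w) :
    G.Adj c z := by
  simp only [mem_sdiff, mem_union, mem_neighborFinset, not_or] at hc hz
  obtain ⟨v, hv⟩ := card_pos.1 (by
    have := pred_card_le_card_erase (s := (G.neighborFinset u).erase w) (a := z)
    rw [card_erase_of_mem (by simpa using hadj), card_neighborFinset_eq_degree, hu] at this
    omega : 0 < #(((G.neighborFinset u).erase w).erase z))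
  simp only [mem_erase, mem_neighborFinset] at hv
  obtain ⟨hvz, hvw, huv⟩ := hv
  obtain ⟨X, Y, hXY, hunion, hwX⟩ := hG.exists_hasSides_suppress_isolate hn hk hadj.ne hu hw huv
    hvw
  have hu₂ := degree_isolate_le_two_of_adj hu huv.symm
  have hwR : (suppress (isolate G {v}) u).degree w ≤ 3 :=
    ((degree_suppress_le hu₂ w).trans (degree_le_of_le fun _ _ h => h.1)).trans hw.le
  have hzY : z ∈ Y := by
    rw [← hXY.neighborFinset_eq hwX hwR, mem_neighborFinset, suppress_adj, isolate_adj,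
      isolate_adj, isolate_adj]
    refine ⟨hzw.symm, hadj.ne', hzu, ?_⟩
    simp [hvw.symm, hvz.symm, huv.ne, hadj.symm, hz.symm]
  have hcX : c ∈ X := by
    have hcXY : c ∈ X ∪ Y := by
      rw [hunion]
      refine mem_erase.2 ⟨fun h => hc.2.2 (h ▸ hadj.symm), mem_erase.2 ⟨fun h => ?_, hc.1⟩⟩
      exact hc.2.1 (h ▸ huv)
    refine (mem_union.1 hcXY).resolve_right fun hcY => ?_
    obtain ⟨-, -, -, h | h⟩ := suppress_adj.1 (hXY.adj hwX hcY)
    exacts [hc.2.2 h.1, hc.2.1 h.2.1]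
  obtain ⟨-, -, -, h | h⟩ := suppress_adj.1 (hXY.adj hcX hzY)
  · exact h.1
  · exact absurd h.1.1.symm hc.2.1

theorem card_neighborFinset_union (hG : IsTight G) (hn : #(high G 3) = 8)
    (hk : #(ofDegree G 3) = 2) {u w : V} (huw : u ≠ w) (hu : G.degree u = 3)
    (hw : G.degree w = 3) : #(G.neighborFinset u ∪ G.neighborFinset w) = 6 := by
  rw [card_union_of_disjoint (hG.disjoint_neighborFinset hn hk huw hu hw),
    card_neighborFinset_eq_degree, card_neighborFinset_eq_degree, hu, hw]

theorem not_adj_of_notMem_neighborFinset (hG : IsTight G) (hn : #(high G 3) = 8)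
    (hk : #(ofDegree G 3) = 2) {u w c c' : V} (hu : G.degree u = 3) (hw : G.degree w = 3)
    (hadj : G.Adj u w) (hc : c ∈ high G 1 \ (G.neighborFinset u ∪ G.neighborFinset w))
    (hc' : c' ∉ G.neighborFinset u ∪ G.neighborFinset w) : ¬ G.Adj c c' := by
  intro hcc'
  have hsub : insert c' (((G.neighborFinset u ∪ G.neighborFinset w).erase u).erase w) ⊆
      G.neighborFinset c := by
    refine insert_subset ((mem_neighborFinset _ _ _).2 hcc') fun z hz => ?_
    obtain ⟨hzw, hz⟩ := mem_erase.1 hz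
    obtain ⟨hzu, hz⟩ := mem_erase.1 hz
    exact (mem_neighborFinset _ _ _).2
      (hG.adj_of_notMem_neighborFinset hn hk hu hw hadj hc hz hzu hzw)
  have hcard := card_le_card hsub
  rw [card_insert_of_notMem fun h => hc' (mem_of_mem_erase (mem_of_mem_erase h)),
    card_erase_of_mem (by simp [hadj.ne', hadj]), card_erase_of_mem (by simp [hadj.symm]),
    hG.card_neighborFinset_union hn hk hadj.ne hu hw, card_neighborFinset_eq_degree] at hcard
  have := hG.degree_le_four hn hk c
  omega

theorem not_suppress_adj_of_notMem_neighborFinset (hG : IsTight G) (hn : #(high G 3) = 8)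
    (hk : #(ofDegree G 3) = 2) {u w c c' : V} (hu : G.degree u = 3) (hw : G.degree w = 3)
    (hadj : G.Adj u w) (hc : c ∈ high G 1 \ (G.neighborFinset u ∪ G.neighborFinset w))
    (hc' : c' ∉ G.neighborFinset u ∪ G.neighborFinset w) :
    ¬ (suppress (isolate G {u}) w).Adj c c' := by
  rintro ⟨-, -, -, h | h⟩
  · exact hG.not_adj_of_notMem_neighborFinset hn hk hu hw hadj hc hc' h.1
  · exact hc' (mem_union_right _ ((mem_neighborFinset _ _ _).2 h.2.1))

theorem not_isMinor_top_isolate_of_adj (hG : IsTight G) (hn : #(high G 3) = 8)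
    (hk : #(ofDegree G 3) = 2) {u w : V} (hu : G.degree u = 3) (hw : G.degree w = 3)
    (hadj : G.Adj u w) : ¬ (⊤ : SimpleGraph (Fin 5)).IsMinor (isolate G {u}) := by
  intro hK₅
  have hw₂ := degree_isolate_le_two_of_adj hw hadj
  obtain ⟨Q, hQ, hcard, hclique⟩ := exists_isClique_suppress_suppress hw₂ hw₂
    (fun v hv hvw _ => mem_erase_of_degree_isolate_pos hv hvw) hK₅
  rw [suppress_suppress_self] at hclique
  rw [hG.card_erase_erase_high_one hn hadj] at hcard
  have hQC : #(Q \ (G.neighborFinset u ∪ G.neighborFinset w)) ≤ 1 := by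
    refine card_le_one.2 fun c hc c' hc' => by_contra fun hcc' => ?_
    rw [mem_sdiff] at hc hc'
    have hc₁ := mem_of_mem_erase (mem_of_mem_erase (mem_inter.1 (hQ hc.1)).1)
    exact hG.not_suppress_adj_of_notMem_neighborFinset hn hk hu hw hadj
      (mem_sdiff.2 ⟨hc₁, hc.2⟩) hc'.2 (hclique hc.1 hc'.1 hcc')
  have hsub : Q ⊆ (G.neighborFinset w).erase u ∪
      Q \ (G.neighborFinset u ∪ G.neighborFinset w) := by
    intro v hv
    obtain ⟨hvS, hv₄⟩ := mem_inter.1 (hQ hv)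
    obtain ⟨hvw, hvu, hv₁⟩ := by simpa only [mem_erase] using hvS
    have huv : ¬ G.Adj u v := fun huv => by
      have := degree_isolate_singleton_add_one huv
      have := hG.degree_eq_four hn hk hadj.ne hu hw hv₁ hvu hvw
      have := mem_high.1 hv₄
      omega
    by_cases hwv : G.Adj w v <;> simp [hwv, huv, hvu, hv]
  have hle := (card_le_card hsub).trans (card_union_le _ _)
  rw [card_erase_of_mem (by simpa using hadj.symm), card_neighborFinset_eq_degree, hw] at hle
  omega

theorem exists_hasSides_suppress_isolate_of_adj (hG : IsTight G) (hn : #(high G 3) = 8)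
    (hk : #(ofDegree G 3) = 2) {u w : V} (hu : G.degree u = 3) (hw : G.degree w = 3)
    (hadj : G.Adj u w) :
    ∃ X Y, HasSides (suppress (isolate G {u}) w) X Y ∧
      X ∪ Y = ((high G 1).erase u).erase w :=
  exists_hasSides_suppress (degree_isolate_le_two_of_adj hw hadj)
    (fun _ => mem_erase_of_degree_isolate_pos) (hG.card_erase_erase_high_one hn hadj).le
    (by_contra fun hK₃₃ => hG.not_isPlanar_isolate u
      ⟨hG.not_isMinor_top_isolate_of_adj hn hk hu hw hadj, hK₃₃⟩)

theorem card_sdiff_neighborFinset_union (hG : IsTight G) (hn : #(high G 3) = 8)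
    (hk : #(ofDegree G 3) = 2) {u w : V} (huw : u ≠ w) (hu : G.degree u = 3)
    (hw : G.degree w = 3) : #(high G 1 \ (G.neighborFinset u ∪ G.neighborFinset w)) = 2 := by
  rw [card_sdiff_of_subset (union_subset (neighborFinset_subset_high_one G u)
    (neighborFinset_subset_high_one G w)), hG.high_one_eq, hn,
    hG.card_neighborFinset_union hn hk huw hu hw]

theorem exists_hasSides_insert_of_adj (hG : IsTight G) (hn : #(high G 3) = 8)
    (hk : #(ofDegree G 3) = 2) {u w : V} (hu : G.degree u = 3) (hw : G.degree w = 3)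
    (hadj : G.Adj u w) :
    ∃ e Y, HasSides (suppress (isolate G {u}) w)
        (insert e (high G 1 \ (G.neighborFinset u ∪ G.neighborFinset w))) Y ∧
      insert e (high G 1 \ (G.neighborFinset u ∪ G.neighborFinset w)) ∪ Y =
        ((high G 1).erase u).erase w ∧
      e ∈ G.neighborFinset u ∪ G.neighborFinset w := by
  set C := high G 1 \ (G.neighborFinset u ∪ G.neighborFinset w) with hC
  have hCcard : #C = 2 := hG.card_sdiff_neighborFinset_union hn hk hadj.ne hu hw
  obtain ⟨X, Y, hXY, hunion⟩ := hG.exists_hasSides_suppress_isolate_of_adj hn hk hu hw hadj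
  have hCS : C ⊆ X ∪ Y := fun c hc => by
    simp only [hC, mem_sdiff, mem_union, mem_neighborFinset, not_or] at hc
    rw [hunion]
    refine mem_erase.2 ⟨?_, mem_erase.2 ⟨?_, hc.1⟩⟩ <;> rintro rfl
    exacts [hc.2.1 hadj, hc.2.2 hadj.symm]
  obtain ⟨c, hc⟩ := card_pos.1 (by rw [hCcard]; norm_num : 0 < #C)
  wlog hcX : c ∈ X generalizing X Y
  · exact this Y X hXY.symm (by rw [union_comm, hunion]) (by rwa [union_comm])
      ((mem_union.1 (hCS hc)).resolve_left hcX)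
  have hCX : C ⊆ X := fun c' hc' => (mem_union.1 (hCS hc')).resolve_right fun hY =>
    hG.not_suppress_adj_of_notMem_neighborFinset hn hk hu hw hadj hc (mem_sdiff.1 hc').2
      (hXY.adj hcX hY)
  obtain ⟨e, heX, heC⟩ := exists_mem_notMem_of_card_lt_card (s := C) (t := X)
    (by rw [hCcard, hXY.1]; norm_num)
  obtain rfl : insert e C = X := eq_of_subset_of_card_le (insert_subset heX hCX)
    (by rw [card_insert_of_notMem heC, hCcard, hXY.1])
  have he₁ := hunion ▸ mem_union_left Y heX
  exact ⟨e, Y, hXY, hunion, by_contra fun h =>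
    heC (mem_sdiff.2 ⟨mem_of_mem_erase (mem_of_mem_erase he₁), h⟩)⟩

theorem exists_neighborFinset_subset_of_adj (hG : IsTight G) (hn : #(high G 3) = 8)
    (hk : #(ofDegree G 3) = 2) {u w : V} (hu : G.degree u = 3) (hw : G.degree w = 3)
    (hadj : G.Adj u w) : ∃ e ∈ G.neighborFinset u ∪ G.neighborFinset w, e ≠ u ∧ e ≠ w ∧
      (G.neighborFinset u ⊆ G.neighborFinset e ∨ G.neighborFinset w ⊆ G.neighborFinset e) := by
  obtain ⟨e, Y, hXY, hunion, heN⟩ := hG.exists_hasSides_insert_of_adj hn hk hu hw hadj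
  obtain ⟨hew, heu, -⟩ : e ≠ w ∧ e ≠ u ∧ e ∈ high G 1 := by
    rw [← mem_erase, ← mem_erase, ← hunion]
    exact mem_union_left Y (mem_insert_self e _)
  have hadj_e : ∀ y ∈ G.neighborFinset u ∪ G.neighborFinset w, y ≠ u → y ≠ w → y ≠ e →
      G.Adj e y ∨ G.Adj w e ∧ G.Adj w y := by
    intro y hy hyu hyw hye
    have hyY : y ∈ ((high G 1).erase u).erase w :=
      mem_erase.2 ⟨hyw, mem_erase.2 ⟨hyu, union_subset (neighborFinset_subset_high_one G u)
        (neighborFinset_subset_high_one G w) hy⟩⟩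
    rw [← hunion] at hyY
    have hyY := (mem_union.1 hyY).resolve_left fun h =>
      (mem_sdiff.1 (mem_of_mem_insert_of_ne h hye)).2 hy
    obtain ⟨-, -, -, h | h⟩ := suppress_adj.1 (hXY.adj (mem_insert_self e _) hyY)
    exacts [Or.inl h.1, Or.inr ⟨h.1.1.symm, h.2.1⟩]
  have hdisj := hG.disjoint_neighborFinset hn hk hadj.ne hu hw
  simp only [Finset.disjoint_left, mem_neighborFinset] at hdisj
  refine ⟨e, heN, heu, hew, ?_⟩
  simp only [mem_union, mem_neighborFinset, subset_iff] at heN hadj_e ⊢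
  obtain heu' | hew' := heN
  · refine Or.inr fun y hy => ?_
    by_cases hyu : y = u
    · exact hyu ▸ heu'.symm
    · exact (hadj_e y (Or.inr hy) hyu hy.ne' fun h => hdisj heu' (h ▸ hy)).resolve_right
        fun h => hdisj heu' h.1
  · refine Or.inl fun y hy => ?_
    by_cases hyw : y = w
    · exact hyw ▸ hew'.symm
    · exact (hadj_e y (Or.inl hy) hy.ne' hyw fun h => hdisj hy (h ▸ hew')).resolve_right
        fun h => hdisj hy h.2

theorem not_adj_of_degree_eq_three (hG : IsTight G) (hn : #(high G 3) = 8)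
    (hk : #(ofDegree G 3) = 2) {u w : V} (hu : G.degree u = 3) (hw : G.degree w = 3) :
    ¬ G.Adj u w := by
  intro hadj
  obtain ⟨e, he, heu, hew, hsub⟩ := hG.exists_neighborFinset_subset_of_adj hn hk hu hw hadj
  have hcard : ∀ t, G.degree t = 3 →
      G.neighborFinset t ⊆ G.neighborFinset u ∪ G.neighborFinset w →
      ¬ G.neighborFinset t ⊆ G.neighborFinset e := by
    intro t ht ht' hte
    have hcard := card_le_card (union_subset hte fun c hc => (mem_neighborFinset _ _ _).2
      (hG.adj_of_notMem_neighborFinset hn hk hu hw hadj hc he heu hew).symm)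
    rw [card_union_of_disjoint (disjoint_left.2 fun v hv hvC => (mem_sdiff.1 hvC).2 (ht' hv)),
      hG.card_sdiff_neighborFinset_union hn hk hadj.ne hu hw, card_neighborFinset_eq_degree,
      card_neighborFinset_eq_degree, ht] at hcard
    have := hG.degree_le_four hn hk e
    omega
  obtain h | h := hsub
  exacts [hcard u hu subset_union_left h, hcard w hw subset_union_right h]

theorem adj_of_adj (hG : IsTight G) (hn : #(high G 3) = 8) (hk : #(ofDegree G 3) = 2)
    {u w y z : V} (huw : u ≠ w) (hu : G.degree u = 3) (hw : G.degree w = 3)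
    (hz : G.Adj u z) (hy : G.Adj w y) : G.Adj z y := by
  have hadj := hG.not_adj_of_degree_eq_three hn hk hu hw
  have hdisj := hG.disjoint_neighborFinset hn hk huw hu hw
  simp only [Finset.disjoint_left, mem_neighborFinset] at hdisj
  obtain ⟨v, hv⟩ := card_pos.1 (by
    rw [card_erase_of_mem (by simpa using hz), card_neighborFinset_eq_degree, hu]; norm_num :
    0 < #((G.neighborFinset u).erase z))
  obtain ⟨hvz, huv⟩ := mem_erase.1 hv
  rw [mem_neighborFinset] at huv
  obtain ⟨X, Y, hXY, hunion, hwX⟩ := hG.exists_hasSides_suppress_isolate hn hk huw hu hw huv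
    fun h => hadj (h ▸ huv)
  have hmem : ∀ {x}, 0 < G.degree x → x ≠ v → x ≠ u → x ∈ X ∪ Y := fun hx hxv hxu => by
    rw [hunion]
    exact mem_erase.2 ⟨hxu, mem_erase.2 ⟨hxv, mem_high.2 hx⟩⟩
  have hY : Y ⊆ G.neighborFinset w := fun x hx => by
    obtain ⟨-, -, -, h | h⟩ := suppress_adj.1 (hXY.adj hwX hx)
    · exact (mem_neighborFinset _ _ _).2 h.1
    · exact absurd h.1.1.symm hadj
  have hYw : Y = G.neighborFinset w :=
    eq_of_subset_of_card_le hY (by rw [card_neighborFinset_eq_degree, hw, hXY.2.1])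
  have hyY : y ∈ Y := by simpa [hYw] using hy
  have hzX : z ∈ X := (mem_union.1 (hmem hz.degree_pos_right hvz.symm hz.ne')).resolve_right
    fun h => hdisj hz ((mem_neighborFinset _ _ _).1 (hY h))
  obtain ⟨-, -, -, h | h⟩ := suppress_adj.1 (hXY.adj hzX hyY)
  · exact h.1
  · exact absurd hy (hdisj h.2.1)

theorem adj_of_mem_insert (hG : IsTight G) (hn : #(high G 3) = 8) (hk : #(ofDegree G 3) = 2)
    {u w y z : V} (huw : u ≠ w) (hu : G.degree u = 3) (hw : G.degree w = 3) (hz : G.Adj u z)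
    (hy : y ∈ insert u (G.neighborFinset w)) : G.Adj z y := by
  obtain rfl | hy := mem_insert.1 hy
  · exact hz.symm
  · exact hG.adj_of_adj hn hk huw hu hw hz ((mem_neighborFinset _ _ _).1 hy)

theorem disjoint_insert_neighborFinset (hG : IsTight G) (hn : #(high G 3) = 8)
    (hk : #(ofDegree G 3) = 2) {u w : V} (huw : u ≠ w) (hu : G.degree u = 3)
    (hw : G.degree w = 3) :
    Disjoint (insert u (G.neighborFinset w)) (insert w (G.neighborFinset u)) := by
  rw [disjoint_insert_left, disjoint_insert_right]
  simp [huw, (hG.disjoint_neighborFinset hn hk huw hu hw).symm]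

theorem insert_neighborFinset_union_eq_high_three (hG : IsTight G) (hn : #(high G 3) = 8)
    (hk : #(ofDegree G 3) = 2) {u w : V} (huw : u ≠ w) (hu : G.degree u = 3)
    (hw : G.degree w = 3) :
    insert u (G.neighborFinset w) ∪ insert w (G.neighborFinset u) = high G 3 := by
  have hadj := hG.not_adj_of_degree_eq_three hn hk hu hw
  refine eq_of_subset_of_card_le ?_ ?_
  · rw [← hG.high_one_eq]
    exact union_subset
      (insert_subset (mem_high.2 (by omega)) (neighborFinset_subset_high_one G w))
      (insert_subset (mem_high.2 (by omega)) (neighborFinset_subset_high_one G u))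
  · rw [card_union_of_disjoint (hG.disjoint_insert_neighborFinset hn hk huw hu hw),
      card_insert_of_notMem (by simpa [G.adj_comm w]), card_insert_of_notMem (by simpa),
      card_neighborFinset_eq_degree, card_neighborFinset_eq_degree, hn, hu, hw]

end IsTight

/-! ### Reduced graphs that are not 2-apex -/

/-- What remains of a graph with at most twenty edges that is not 2-apex once all its vertices of
degree one and two are suppressed. -/
structure IsCritical (G : SimpleGraph V) : Prop where
  not_isPlanar : ∀ a b, ¬ (isolate G {a, b}).IsPlanar
  high_one_eq : high G 1 = high G 3
  card_edgeFinset_le : #G.edgeFinset ≤ 20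

theorem isPlanar_isolate_pair_of_triangle {G : SimpleGraph V} {a b p q u v w : V}
    (hp : (isolate G {a, b}).degree p ≤ 2) (hq : (isolate G {a, b}).degree q ≤ 2)
    (hS : #(high G 1 \ {a, b, p, q}) ≤ 6) (h₄ : #(high (isolate G {a, b}) 4) ≤ 3)
    (huv : G.Adj u v) (huw : G.Adj u w) (hvw : G.Adj v w)
    (huS : u ∉ ({a, b, p, q} : Finset V)) (hvS : v ∉ ({a, b, p, q} : Finset V))
    (hwS : w ∉ ({a, b, p, q} : Finset V)) (hu : (isolate G {a, b}).degree u ≤ 3)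
    (hv : (isolate G {a, b}).degree v ≤ 3) : (isolate G {a, b}).IsPlanar := by
  have hmem : ∀ {x}, 0 < G.degree x → x ∉ ({a, b, p, q} : Finset V) →
      x ∈ high G 1 \ {a, b, p, q} := fun hx hxS => mem_sdiff.2 ⟨mem_high.2 hx, hxS⟩
  have hadj : ∀ {x y}, x ∉ ({a, b, p, q} : Finset V) → y ∉ ({a, b, p, q} : Finset V) →
      G.Adj x y → (isolate G {a, b}).Adj x y := by
    intro x y hx hy hxy
    simp only [mem_insert, not_or] at hx hy
    simp [isolate_adj, hxy, hx, hy]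
  refine isPlanar_of_triangle hp hq (fun x hx hxp hxq => ?_) hS h₄ (hmem huv.degree_pos_left huS)
    (hmem hvw.degree_pos_left hvS) (hmem hvw.degree_pos_right hwS) (hadj huS hvS huv)
    (hadj huS hwS huw) (hadj hvS hwS hvw) hu hv
  obtain ⟨hxb, hx⟩ := mem_erase.1 (high_isolate_pair_subset G a b one_pos (mem_high.2 hx))
  obtain ⟨hxa, hx⟩ := mem_erase.1 hx
  exact mem_sdiff.2 ⟨hx, by simp [hxa, hxb, hxp, hxq]⟩

namespace IsCritical

variable {G : SimpleGraph V}

theorem degree_add_lt_card_edgeFinset (hG : IsCritical G) (a : V) :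
    G.degree a + 14 < #G.edgeFinset :=
  ApexGraph.degree_add_lt_card_edgeFinset hG.not_isPlanar a

theorem degree_le_five (hG : IsCritical G) (a : V) : G.degree a ≤ 5 := by
  have := hG.degree_add_lt_card_edgeFinset a
  have := hG.card_edgeFinset_le
  omega

theorem isTight_isolate (hG : IsCritical G) {a : V} (ha : #G.edgeFinset ≤ G.degree a + 15) :
    IsTight (isolate G {a}) where
  not_isApex := not_isApex_isolate hG.not_isPlanar a
  card_edgeFinset_le := by
    have := card_edgeFinset_isolate_singleton_add G a
    omega

theorem isTight_isolate_of_degree_eq_five (hG : IsCritical G) {a : V} (ha : G.degree a = 5) :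
    IsTight (isolate G {a}) :=
  hG.isTight_isolate (by rw [ha]; exact hG.card_edgeFinset_le)

theorem three_le_degree_of_adj (hG : IsCritical G) {v w : V} (h : G.Adj v w) : 3 ≤ G.degree w :=
  mem_high.1 (hG.high_one_eq ▸ mem_high.2 h.degree_pos_right)

theorem high_isolate_three_eq (hG : IsCritical G) {a : V} (ha : IsTight (isolate G {a})) :
    high (isolate G {a}) 3 = (high G 1).erase a := by
  rw [← ha.high_one_eq]
  refine (high_isolate_singleton_subset G a one_pos).antisymm fun v hv => ?_
  obtain ⟨hva, hv⟩ := mem_erase.1 hv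
  rw [hG.high_one_eq] at hv
  rw [mem_high] at hv ⊢
  have := degree_isolate_singleton_add (G := G) hva
  split_ifs at this <;> omega

theorem four_le_degree_of_adj (hG : IsCritical G) {a v : V} (ha : IsTight (isolate G {a}))
    (h : G.Adj a v) : 4 ≤ G.degree v := by
  have hv : v ∈ high (isolate G {a}) 3 := by
    rw [hG.high_isolate_three_eq ha]
    exact mem_erase.2 ⟨h.ne', mem_high.2 h.degree_pos_right⟩
  have := mem_high.1 hv
  have := degree_isolate_singleton_add_one h
  omega

theorem adj_of_degree_isolate_eq_three (hG : IsCritical G) {a x v : V} (hx : G.degree x = 5)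
    (hxv : G.Adj x v) (hva : v ≠ a) (hv : (isolate G {a}).degree v = 3) : G.Adj a v := by
  by_contra hav
  have := hG.four_le_degree_of_adj (hG.isTight_isolate_of_degree_eq_five hx) hxv
  have hdeg := degree_isolate_singleton_add (G := G) hva
  rw [if_neg hav] at hdeg
  omega

section NineVertices

variable {a : V}

theorem card_high_isolate_three_eq_eight (hG : IsCritical G) (hn : #(high G 1) = 9)
    (ha : G.degree a = 5) : #(high (isolate G {a}) 3) = 8 := by
  rw [hG.high_isolate_three_eq (hG.isTight_isolate_of_degree_eq_five ha), card_erase_of_mem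
    (mem_high.2 (by omega)), hn]

theorem not_adj_of_isFork (hG : IsCritical G) {v u w x : V}
    (h : IsFork (isolate G {a}) v u w x) : ¬ G.Adj a x ∧ G.degree x = 5 := by
  have := degree_isolate_singleton_add (G := G) h.adj_top.2.2
  have := hG.degree_le_five x
  have := h.five_le_degree
  split_ifs at * with hax <;> refine ⟨?_, ?_⟩ <;> first | assumption | omega

theorem adj_center_of_isFork (hG : IsCritical G) {v u w x : V}
    (h : IsFork (isolate G {a}) v u w x) : G.Adj a v :=
  hG.adj_of_degree_isolate_eq_three (hG.not_adj_of_isFork h).2 h.adj_top.1.symm h.adj_top.2.1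
    h.degree_center

theorem degree_eq_five_of_adj {p : V} (hap : G.Adj a p)
    (hp : p ∈ ofDegree (isolate G {a}) 4) : G.degree p = 5 := by
  rw [← degree_isolate_singleton_add_one hap, mem_ofDegree.1 hp]

theorem exists_not_adj_of_isFork (hG : IsCritical G) (hn : #(high G 1) = 9)
    (ha : G.degree a = 5) (hk : #(ofDegree (isolate G {a}) 3) = 3) {v u w x p : V}
    (h : IsFork (isolate G {a}) v u w x) (hp : p ∈ ((isolate G {a}).neighborFinset u).erase v)
    (hap : G.Adj a p) : G.Adj a u ∧
      ∃ q ∈ ((isolate G {a}).neighborFinset w).erase v, ¬ G.Adj a q := by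
  have hK := hG.isTight_isolate_of_degree_eq_five ha
  have hn' := hG.card_high_isolate_three_eq_eight hn ha
  have hu₄ := hK.neighborFinset_erase_subset_ofDegree_four hn' hk h
  have hw₄ := hK.neighborFinset_erase_subset_ofDegree_four hn' hk h.symm
  have hadj : ∀ {z y}, z ∈ ofDegree (isolate G {a}) 4 → (isolate G {a}).Adj y z →
      (isolate G {a}).degree y = 3 → G.Adj a z → G.Adj a y := fun hz hyz hy haz =>
    hG.adj_of_degree_isolate_eq_three (degree_eq_five_of_adj haz hz) hyz.1.symm hyz.2.1 hy
  have hau := hadj (hu₄ hp) ((mem_neighborFinset _ _ _).1 (mem_of_mem_erase hp)) h.degree_left hap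
  refine ⟨hau, by_contra fun hall => ?_⟩
  push Not at hall
  obtain ⟨q, hq⟩ := card_pos.1 (by
    rw [IsTight.card_neighborFinset_erase_of_isFork h.symm]; norm_num :
    0 < #(((isolate G {a}).neighborFinset w).erase v))
  have haw := hadj (hw₄ hq) ((mem_neighborFinset _ _ _).1 (mem_of_mem_erase hq)) h.degree_right
    (hall q hq)
  have hsub : ofDegree (isolate G {a}) 3 ∪
      insert p (((isolate G {a}).neighborFinset w).erase v) ⊆ G.neighborFinset a := by
    intro z hz
    rw [IsTight.ofDegree_three_eq_of_isFork hk h] at hz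
    simp only [mem_union, mem_insert, mem_singleton] at hz
    rw [mem_neighborFinset]
    obtain (rfl | rfl | rfl) | rfl | hz := hz
    exacts [hG.adj_center_of_isFork h, hau, haw, hap, hall z hz]
  have hcard := card_le_card hsub
  rw [card_union_of_disjoint, hk, card_insert_of_notMem, card_neighborFinset_eq_degree, ha,
    IsTight.card_neighborFinset_erase_of_isFork h.symm] at hcard
  · norm_num at hcard
  · exact disjoint_left.1 (hK.disjoint_neighborFinset_erase hn' hk h) hp
  · refine disjoint_right.2 fun z hz hz₃ => ?_
    have := mem_ofDegree.1 (insert_subset (hu₄ hp) hw₄ hz)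
    have := mem_ofDegree.1 hz₃
    omega

theorem ne_of_mem_neighborFinset_erase (hG : IsCritical G) (hn : #(high G 1) = 9)
    (ha : G.degree a = 5) (hk : #(ofDegree (isolate G {a}) 3) = 3) {v u w x p : V}
    (h : IsFork (isolate G {a}) v u w x) (hp : p ∈ ((isolate G {a}).neighborFinset u).erase v) :
    x ≠ p := by
  rintro rfl
  have hK := hG.isTight_isolate_of_degree_eq_five ha
  have hn' := hG.card_high_isolate_three_eq_eight hn ha
  have := h.five_le_degree
  rw [mem_ofDegree.1 (hK.neighborFinset_erase_subset_ofDegree_four hn' hk h hp)] at this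
  norm_num at this

theorem degree_isolate_pair_le_two (hG : IsCritical G) (hn : #(high G 1) = 9)
    (ha : G.degree a = 5) (hk : #(ofDegree (isolate G {a}) 3) = 3) {v u w x p q : V}
    (h : IsFork (isolate G {a}) v u w x) (hp : p ∈ ((isolate G {a}).neighborFinset u).erase v)
    (hq : q ∈ ((isolate G {a}).neighborFinset w).erase v) (haq : ¬ G.Adj a q) :
    (isolate G {x, p}).degree q ≤ 2 := by
  have hK := hG.isTight_isolate_of_degree_eq_five ha
  have hn' := hG.card_high_isolate_three_eq_eight hn ha
  obtain ⟨hxq, hpq⟩ := hK.adj_of_mem_neighborFinset_erase hn' hk h hp hq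
  have hq₄ := mem_ofDegree.1 (hK.neighborFinset_erase_subset_ofDegree_four hn' hk h.symm hq)
  have hqdeg := degree_isolate_singleton_add (G := G) hxq.2.2
  rw [if_neg haq, hq₄] at hqdeg
  have := degree_isolate_pair_add_two (hG.ne_of_mem_neighborFinset_erase hn ha hk h hp)
    hxq.1 hpq.1
  omega

theorem card_high_four_isolate_pair_le (hG : IsCritical G) (hn : #(high G 1) = 9)
    (ha : G.degree a = 5) (hk : #(ofDegree (isolate G {a}) 3) = 3) {v u w x p : V}
    (h : IsFork (isolate G {a}) v u w x) (hp : p ∈ ((isolate G {a}).neighborFinset u).erase v)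
    (hu : (isolate G {x, p}).degree u ≤ 3) (hv : (isolate G {x, p}).degree v ≤ 3) :
    #(high (isolate G {x, p}) 4) ≤ 3 := by
  have hK := hG.isTight_isolate_of_degree_eq_five ha
  have hn' := hG.card_high_isolate_three_eq_eight hn ha
  have hxp := hG.ne_of_mem_neighborFinset_erase hn ha hk h hp
  have hsub : high (isolate G {x, p}) 4 ⊆
      {a, w} ∪ (((isolate G {a}).neighborFinset u).erase v).erase p := by
    intro z hz
    obtain ⟨hzp, hz₁⟩ := mem_erase.1 (high_isolate_pair_subset G x p (by norm_num) hz)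
    obtain ⟨hzx, hz₁⟩ := mem_erase.1 hz₁
    rw [mem_high] at hz
    have hzu : z ≠ u := fun hzu => absurd (hzu ▸ hz) (by omega)
    have hzv : z ≠ v := fun hzv => absurd (hzv ▸ hz) (by omega)
    by_contra hzT
    simp only [mem_union, mem_insert, mem_singleton, mem_erase, not_or] at hzT
    have hz₄ := hK.mem_insert_of_mem_high_of_isFork hn' hk h
      (by rw [hG.high_isolate_three_eq hK]; exact mem_erase.2 ⟨hzT.1.1, hz₁⟩) hzv hzu hzT.1.2
    have hz₄ := mem_of_mem_insert_of_ne hz₄ hzx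
    rw [← hK.neighborFinset_erase_union_eq_ofDegree_four hn' hk h, mem_union] at hz₄
    have hzw := hz₄.resolve_left fun hzu => hzT.2 ⟨hzp, mem_erase.1 hzu⟩
    obtain ⟨hxz, hpz⟩ := hK.adj_of_mem_neighborFinset_erase hn' hk h hp hzw
    have := degree_isolate_pair_add_two hxp hxz.1 hpz.1
    have := hG.degree_le_five z
    omega
  refine (card_le_card hsub).trans ((card_union_le _ _).trans ?_)
  rw [card_erase_of_mem hp, IsTight.card_neighborFinset_erase_of_isFork h]
  exact Nat.add_le_add_right card_le_two 1

theorem not_adj_of_mem_neighborFinset_erase (hG : IsCritical G) (hn : #(high G 1) = 9)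
    (ha : G.degree a = 5) (hk : #(ofDegree (isolate G {a}) 3) = 3) {v u w x p : V}
    (h : IsFork (isolate G {a}) v u w x) (hp : p ∈ ((isolate G {a}).neighborFinset u).erase v) :
    ¬ G.Adj a p := by
  intro hap
  have hK := hG.isTight_isolate_of_degree_eq_five ha
  have hn' := hG.card_high_isolate_three_eq_eight hn ha
  obtain ⟨hau, q, hq, haq⟩ := hG.exists_not_adj_of_isFork hn ha hk h hp hap
  have hax := (hG.not_adj_of_isFork h).1
  have hav := hG.adj_center_of_isFork h
  obtain ⟨hxq, hpq⟩ := hK.adj_of_mem_neighborFinset_erase hn' hk h hp hq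
  have hxp := hG.ne_of_mem_neighborFinset_erase hn ha hk h hp
  have hxu : x ≠ u := fun hxu => hax (hxu ▸ hau)
  have hpv : v ≠ p := (ne_of_mem_erase hp).symm
  have hup := ((mem_neighborFinset _ _ _).1 (mem_of_mem_erase hp)).1
  have hq₂ := hG.degree_isolate_pair_le_two hn ha hk h hp hq haq
  have hu₃ : (isolate G {x, p}).degree u ≤ 3 := by
    have := degree_isolate_singleton_add_one hau
    have := h.degree_left
    have := degree_isolate_pair_lt hup.symm hxu.symm
    rw [Set.pair_comm]
    omega
  have hv₃ : (isolate G {x, p}).degree v ≤ 3 := by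
    have := degree_isolate_singleton_add_one hav
    have := h.degree_center
    have := degree_isolate_pair_lt h.adj_top.1.symm hpv
    omega
  have hS : #(high G 1 \ {x, p, q, q}) ≤ 6 := by
    have hsub : {x, p, q} ⊆ high G 1 := by
      simp only [insert_subset_iff, singleton_subset_iff, mem_high]
      exact ⟨hxq.1.degree_pos_left, hpq.1.degree_pos_left, hxq.1.degree_pos_right⟩
    rw [pair_eq_singleton, card_sdiff_of_subset hsub, hn, card_insert_of_notMem,
      card_pair hpq.1.ne]
    simp [hxp, hxq.1.ne]
  refine hG.not_isPlanar x p (isPlanar_isolate_pair_of_triangle hq₂ hq₂ hS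
    (hG.card_high_four_isolate_pair_le hn ha hk h hp hu₃ hv₃) h.adj_left.1.symm hau.symm hav.symm
    ?_ ?_ ?_ hu₃ hv₃)
  · simp [hxu.symm, hup.ne, show u ≠ q from fun huq => haq (huq ▸ hau)]
  · simp [h.adj_top.1.ne, hpv, show v ≠ q from fun hvq => haq (hvq ▸ hav)]
  · simp [ne_comm.1 h.adj_top.2.2, hap.ne, ne_comm.1 hxq.2.2]

theorem card_ofDegree_three_isolate_ne_three (hG : IsCritical G) (hn : #(high G 1) = 9)
    (ha : G.degree a = 5) : #(ofDegree (isolate G {a}) 3) ≠ 3 := by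
  intro hk
  have hK := hG.isTight_isolate_of_degree_eq_five ha
  have hn' := hG.card_high_isolate_three_eq_eight hn ha
  obtain ⟨v, u, w, x, h⟩ := hK.exists_isFork hn' hk
  obtain ⟨p, hp, hp₃⟩ : ∃ p ∈ G.neighborFinset a, p ∉ ofDegree (isolate G {a}) 3 :=
    exists_mem_notMem_of_card_lt_card (by rw [hk, card_neighborFinset_eq_degree, ha]; norm_num)
  have hap := (mem_neighborFinset _ _ _).1 hp
  have hp₄ : p ∈ ofDegree (isolate G {a}) 4 := by
    rw [IsTight.ofDegree_three_eq_of_isFork hk h] at hp₃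
    simp only [mem_insert, mem_singleton, not_or] at hp₃
    refine mem_of_mem_insert_of_ne (hK.mem_insert_of_mem_high_of_isFork hn' hk h ?_ hp₃.1 hp₃.2.1
      hp₃.2.2) fun hpx => (hG.not_adj_of_isFork h).1 (hpx ▸ hap)
    rw [hG.high_isolate_three_eq hK]
    exact mem_erase.2 ⟨hap.ne', mem_high.2 hap.degree_pos_right⟩
  rw [← hK.neighborFinset_erase_union_eq_ofDegree_four hn' hk h, mem_union] at hp₄
  obtain hpu | hpw := hp₄
  · exact hG.not_adj_of_mem_neighborFinset_erase hn ha hk h hpu hap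
  · exact hG.not_adj_of_mem_neighborFinset_erase hn ha hk h.symm hpw hap

theorem degree_isolate_pair_le (hG : IsCritical G) (hn : #(high G 1) = 9) (ha : G.degree a = 5)
    (hk : #(ofDegree (isolate G {a}) 3) = 2) {u w p q y : V} (huw : u ≠ w)
    (hu : (isolate G {a}).degree u = 3) (hw : (isolate G {a}).degree w = 3) (hpq : p ≠ q)
    (hp : (isolate G {a}).Adj u p) (hq : (isolate G {a}).Adj u q)
    (hy : y ∈ insert u ((isolate G {a}).neighborFinset w)) :
    (isolate G {p, q}).degree y ≤ 2 + if G.Adj a y then 1 else 0 := by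
  have hK := hG.isTight_isolate_of_degree_eq_five ha
  have hn' := hG.card_high_isolate_three_eq_eight hn ha
  have hpy := hK.adj_of_mem_insert hn' hk huw hu hw hp hy
  have hqy := hK.adj_of_mem_insert hn' hk huw hu hw hq hy
  have := degree_isolate_pair_add_two hpq hpy.1 hqy.1
  have := degree_isolate_singleton_add (G := G) (v := y) (a := a) hpy.2.2
  have := hK.degree_le_four hn' hk y
  omega

theorem high_isolate_pair_subset_union (hG : IsCritical G) (hn : #(high G 1) = 9)
    (ha : G.degree a = 5) (hk : #(ofDegree (isolate G {a}) 3) = 2) {u w p q r : V} (huw : u ≠ w)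
    (hu : (isolate G {a}).degree u = 3) (hw : (isolate G {a}).degree w = 3)
    (hN : (isolate G {a}).neighborFinset u = {p, q, r}) {d : ℕ} (hd : 0 < d) :
    high (isolate G {p, q}) d ⊆ {a, w, r} ∪
      insert u ((isolate G {a}).neighborFinset w) ∩ high (isolate G {p, q}) d := by
  have hK := hG.isTight_isolate_of_degree_eq_five ha
  have hn' := hG.card_high_isolate_three_eq_eight hn ha
  intro v hv
  obtain ⟨hvq, hv₁⟩ := mem_erase.1 (high_isolate_pair_subset G p q hd hv)
  obtain ⟨hvp, hv₁⟩ := mem_erase.1 hv₁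
  by_cases hva : v = a
  · simp [hva]
  have hv₃ : v ∈ high (isolate G {a}) 3 :=
    hG.high_isolate_three_eq hK ▸ mem_erase.2 ⟨hva, hv₁⟩
  rw [← hK.insert_neighborFinset_union_eq_high_three hn' hk huw hu hw, hN] at hv₃
  obtain hvT | hv₃ := mem_union.1 hv₃
  · exact mem_union_right _ (mem_inter.2 ⟨hvT, hv⟩)
  · simp only [mem_insert, mem_singleton, hvp, hvq, false_or] at hv₃
    exact mem_union_left _ (by simp [hv₃])

theorem two_lt_card_neighborFinset_inter_insert (hG : IsCritical G) (hn : #(high G 1) = 9)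
    (ha : G.degree a = 5) (hk : #(ofDegree (isolate G {a}) 3) = 2) {u w : V} (huw : u ≠ w)
    (hu : (isolate G {a}).degree u = 3) (hw : (isolate G {a}).degree w = 3) :
    2 < #(G.neighborFinset a ∩ insert u ((isolate G {a}).neighborFinset w)) := by
  obtain ⟨p, q, r, hpq, -, -, hN⟩ := card_eq_three.1
    (((isolate G {a}).card_neighborFinset_eq_degree u).trans hu)
  have hsub := fun {d} => hG.high_isolate_pair_subset_union hn ha hk huw hu hw hN (d := d)
  have hdeg := fun {y} => hG.degree_isolate_pair_le hn ha hk (y := y) huw hu hw hpq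
    ((mem_neighborFinset _ _ _).1 (by simp [hN])) ((mem_neighborFinset _ _ _).1 (by simp [hN]))
  set T := insert u ((isolate G {a}).neighborFinset w)
  by_contra! hle
  have h₃ : T ∩ high (isolate G {p, q}) 3 ⊆ G.neighborFinset a ∩ T := by
    refine fun y hy => mem_inter.2 ⟨by_contra fun hay => ?_, (mem_inter.1 hy).1⟩
    have hy₂ := hdeg (mem_inter.1 hy).1
    have := mem_high.1 (mem_inter.1 hy).2
    rw [mem_neighborFinset] at hay
    rw [if_neg hay] at hy₂
    omega
  have h₄ : T ∩ high (isolate G {p, q}) 4 = ∅ := by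
    refine eq_empty_of_forall_notMem fun y hy => ?_
    have := hdeg (mem_inter.1 hy).1
    have := mem_high.1 (mem_inter.1 hy).2
    split_ifs at * <;> omega
  have h₃' := (card_le_card (hsub (d := 3) (by norm_num))).trans (card_union_le _ _)
  have h₄' := (card_le_card (hsub (d := 4) (by norm_num))).trans (card_union_le _ _)
  rw [h₄, card_empty] at h₄'
  have := card_le_card h₃
  have := card_le_three (a := a) (b := w) (c := r)
  exact hG.not_isPlanar p q (isPlanar_of_card_high (by omega) (by omega))

theorem card_high_one_ne_nine (hG : IsCritical G) (ha : G.degree a = 5) : #(high G 1) ≠ 9 := by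
  intro hn
  have hK := hG.isTight_isolate_of_degree_eq_five ha
  have hn' := hG.card_high_isolate_three_eq_eight hn ha
  have hk := (hK.card_ofDegree_three_eq hn').resolve_right
    (hG.card_ofDegree_three_isolate_ne_three hn ha)
  obtain ⟨u, w, huw, heq⟩ := card_eq_two.1 hk
  have hu := mem_ofDegree.1 (heq ▸ mem_insert_self u {w} : u ∈ ofDegree (isolate G {a}) 3)
  have hw := mem_ofDegree.1 (heq ▸ by simp : w ∈ ofDegree (isolate G {a}) 3)
  have h₁ := hG.two_lt_card_neighborFinset_inter_insert hn ha hk huw hu hw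
  have h₂ := hG.two_lt_card_neighborFinset_inter_insert hn ha hk huw.symm hw hu
  have hdisj := (hK.disjoint_insert_neighborFinset hn' hk huw hu hw).mono
    (inter_subset_right (s₁ := G.neighborFinset a)) (inter_subset_right (s₁ := G.neighborFinset a))
  have hle := card_le_card (union_subset (inter_subset_left (s₁ := G.neighborFinset a)
    (s₂ := insert u ((isolate G {a}).neighborFinset w))) (inter_subset_left
    (s₂ := insert w ((isolate G {a}).neighborFinset u))))
  rw [card_union_of_disjoint hdisj, card_neighborFinset_eq_degree, ha] at hle
  omega

end NineVertices

end IsCritical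

namespace IsTight

variable {G : SimpleGraph V}

theorem card_neighborFinset_inter_le_two (hG : IsTight G) (hn : #(high G 3) = 9) {v : V}
    (hv : v ∈ high G 3) : #(G.neighborFinset v ∩ ofDegree G 3) ≤ 2 := by
  have := hG.three_mul_card_high_add_le
  have := card_erase_le (s := high G 4) (a := v)
  by_contra! ht
  have := hG.card_neighborFinset_inter_add_five_le hv (by omega)
  omega

theorem card_ofDegree_three (hG : IsTight G) (hn : #(high G 3) = 9) : #(ofDegree G 3) = 6 := by
  have hcubic : #(ofDegree G 3) + #(high G 4) = #(high G 3) := card_ofDegree_add G 3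
  have := hG.three_mul_card_high_add_le
  have hsum := sum_card_neighborFinset_inter_ofDegree G (d := 3) hG.high_one_eq.subset
  have := sum_le_card_nsmul _ _ 2 fun v hv => hG.card_neighborFinset_inter_le_two hn hv
  rw [hsum, hn, smul_eq_mul] at this
  omega

theorem card_neighborFinset_inter_eq_two (hG : IsTight G) (hn : #(high G 3) = 9) {v : V}
    (hv : v ∈ high G 3) : #(G.neighborFinset v ∩ ofDegree G 3) = 2 := by
  have hsum := sum_card_neighborFinset_inter_ofDegree G (d := 3) hG.high_one_eq.subset
  refine (sum_eq_sum_iff_of_le fun v hv => hG.card_neighborFinset_inter_le_two hn hv).1 ?_ v hv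
  rw [hsum, hG.card_ofDegree_three hn, sum_const, hn, smul_eq_mul]

theorem degree_eq_three_or_eq_four (hG : IsTight G) (hn : #(high G 3) = 9) {v : V}
    (hv : v ∈ high G 3) : G.degree v = 3 ∨ G.degree v = 4 := by
  have hcubic : #(ofDegree G 3) + #(high G 4) = #(high G 3) := card_ofDegree_add G 3
  have := hG.three_mul_card_high_add_le
  have := hG.card_ofDegree_three hn
  have := mem_high.1 hv
  by_contra! hne
  have := card_pos.2 ⟨v, mem_high.2 (show 5 ≤ G.degree v by omega)⟩
  omega

theorem card_ofDegree_four (hG : IsTight G) (hn : #(high G 3) = 9) : #(ofDegree G 4) = 3 := by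
  have hcubic : #(ofDegree G 3) + #(high G 4) = #(high G 3) := card_ofDegree_add G 3
  have hquartic : #(ofDegree G 4) + #(high G 5) = #(high G 4) := card_ofDegree_add G 4
  have := hG.three_mul_card_high_add_le
  have := hG.card_ofDegree_three hn
  omega

theorem card_neighborFinset_inter_ofDegree_four (hG : IsTight G) (hn : #(high G 3) = 9) {v : V}
    (hv : v ∈ high G 3) : #(G.neighborFinset v ∩ ofDegree G 4) + 2 = G.degree v := by
  rw [← hG.card_neighborFinset_inter_eq_two hn hv, ← card_union_of_disjoint,
    ← card_neighborFinset_eq_degree]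
  · congr 1
    refine subset_antisymm (union_subset inter_subset_left inter_subset_left) fun w hw => ?_
    have hw₃ := neighborFinset_subset_high_one G v hw
    rw [hG.high_one_eq] at hw₃
    simpa [mem_ofDegree, hw, or_comm] using hG.degree_eq_three_or_eq_four hn hw₃
  · refine disjoint_left.2 fun w hw hw' => ?_
    have := mem_ofDegree.1 (mem_inter.1 hw).2
    have := mem_ofDegree.1 (mem_inter.1 hw').2
    omega

theorem adj_of_degree_eq_four (hG : IsTight G) (hn : #(high G 3) = 9) {x y : V} (hxy : x ≠ y)
    (hx : G.degree x = 4) (hy : G.degree y = 4) : G.Adj x y := by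
  have hsub : G.neighborFinset x ∩ ofDegree G 4 ⊆ (ofDegree G 4).erase x := fun v hv =>
    mem_erase.2 ⟨((mem_neighborFinset _ _ _).1 (mem_inter.1 hv).1).ne', (mem_inter.1 hv).2⟩
  have := hG.card_neighborFinset_inter_ofDegree_four hn (mem_high.2 (by omega : 3 ≤ G.degree x))
  have heq := eq_of_subset_of_card_le hsub (by
    rw [card_erase_of_mem (mem_ofDegree.2 hx), hG.card_ofDegree_four hn]
    omega)
  exact (mem_neighborFinset _ _ _).1
    (mem_inter.1 (heq ▸ mem_erase.2 ⟨hxy.symm, mem_ofDegree.2 hy⟩)).1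

theorem exists_adj_degree_eq_four (hG : IsTight G) (hn : #(high G 3) = 9) {u : V}
    (hu : u ∈ high G 3) : ∃ x, G.Adj u x ∧ G.degree x = 4 := by
  have := hG.card_neighborFinset_inter_ofDegree_four hn hu
  have := mem_high.1 hu
  obtain ⟨x, hx⟩ := card_pos.1 (by omega : 0 < #(G.neighborFinset u ∩ ofDegree G 4))
  exact ⟨x, (mem_neighborFinset _ _ _).1 (mem_inter.1 hx).1, mem_ofDegree.1 (mem_inter.1 hx).2⟩

theorem eq_of_adj_of_degree_eq_four (hG : IsTight G) (hn : #(high G 3) = 9) {u x y : V}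
    (hu : G.degree u = 3) (hx : G.degree x = 4) (hy : G.degree y = 4) (hux : G.Adj u x)
    (huy : G.Adj u y) : x = y := by
  have := hG.card_neighborFinset_inter_ofDegree_four hn (mem_high.2 hu.ge)
  refine card_le_one.1 (by omega : #(G.neighborFinset u ∩ ofDegree G 4) ≤ 1) x ?_ y ?_ <;>
    simp [mem_ofDegree, *]

theorem degree_isolate_le_three (hG : IsTight G) (hn : #(high G 3) = 9) {y : V}
    (hy : G.degree y = 4) (v : V) : (isolate G {y}).degree v ≤ 3 := by
  by_contra! hv
  obtain ⟨hvy, hv₄⟩ := mem_erase.1 (high_isolate_singleton_subset G y four_pos (mem_high.2 hv))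
  have := mem_high.1 hv₄
  have := hG.degree_eq_three_or_eq_four hn (high_anti G (by norm_num) hv₄)
  have := degree_isolate_singleton_add_one
    (hG.adj_of_degree_eq_four hn hvy.symm hy (show G.degree v = 4 by omega))
  omega

theorem exists_hasSides_of_degree_eq_four (hG : IsTight G) (hn : #(high G 3) = 9) {y p q : V}
    (hpq : p ≠ q) (hy : G.degree y = 4) (hp : G.degree p = 3) (hq : G.degree q = 3)
    (hyp : G.Adj y p) (hyq : G.Adj y q) :
    ∃ X Y, HasSides (suppress (suppress (isolate G {y}) p) q) X Y ∧
      X ∪ Y = high G 1 \ {y, p, q} ∧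
      ∀ v, (suppress (suppress (isolate G {y}) p) q).degree v ≤ 3 := by
  have hdeg := hG.degree_isolate_le_three hn hy
  have hp₂ := degree_isolate_le_two_of_adj hp hyp
  have hq₂ := degree_isolate_le_two_of_adj hq hyq
  have hsub : {y, p, q} ⊆ high G 1 := by
    simp only [insert_subset_iff, singleton_subset_iff, mem_high]
    omega
  have hcard : #(high G 1 \ {y, p, q}) = 6 := by
    rw [card_sdiff_of_subset hsub, hG.high_one_eq, hn,
      card_eq_three.2 ⟨y, p, q, hyp.ne, hyq.ne, hpq, rfl⟩]
  have hquartic : high (isolate G {y}) 4 = ∅ :=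
    eq_empty_of_forall_notMem fun v hv => absurd (mem_high.1 hv) (by have := hdeg v; omega)
  obtain ⟨X, Y, hXY, hS⟩ := exists_hasSides_of_not_isPlanar hp₂ hq₂ (fun v hv hvp hvq => by
    obtain ⟨hvy, hv⟩ := mem_erase.1 (high_isolate_singleton_subset G y one_pos (mem_high.2 hv))
    exact mem_sdiff.2 ⟨hv, by simp [hvy, hvp, hvq]⟩) hcard.le (by simp [hquartic])
    (hG.not_isPlanar_isolate y)
  exact ⟨X, Y, hXY, hS, fun v =>
    (degree_suppress_le ((degree_suppress_le hp₂ q).trans hq₂) v).trans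
      ((degree_suppress_le hp₂ v).trans (hdeg v))⟩

theorem exists_ne_degree_eq_three (hG : IsTight G) (hn : #(high G 3) = 9) {y : V}
    (hy : G.degree y = 4) (p : V) : ∃ q, q ≠ p ∧ G.degree q = 3 ∧ G.Adj y q := by
  have := hG.card_neighborFinset_inter_eq_two hn (mem_high.2 (by omega : 3 ≤ G.degree y))
  obtain ⟨q, hq, hqp⟩ := exists_mem_ne (by omega : 1 < #(G.neighborFinset y ∩ ofDegree G 3)) p
  obtain ⟨hyq, hq⟩ := mem_inter.1 hq
  exact ⟨q, hqp, mem_ofDegree.1 hq, (mem_neighborFinset _ _ _).1 hyq⟩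

theorem exists_degree_eq_four_ne (hG : IsTight G) (hn : #(high G 3) = 9) (x z : V) :
    ∃ y, G.degree y = 4 ∧ y ≠ x ∧ y ≠ z := by
  obtain ⟨y, hy, hyxz⟩ := exists_mem_notMem_of_card_lt_card
    (card_le_two.trans_lt (by rw [hG.card_ofDegree_four hn]; norm_num) :
      #({x, z} : Finset V) < #(ofDegree G 4))
  exact ⟨y, mem_ofDegree.1 hy, by simpa using hyxz⟩

theorem notMem_of_degree_eq_four (hG : IsTight G) (hn : #(high G 3) = 9) {x y p q w : V}
    (hxy : x ≠ y) (hx : G.degree x = 4) (hy : G.degree y = 4) (hyp : G.Adj y p)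
    (hyq : G.Adj y q) (hw : G.degree w = 3) (hxw : G.Adj x w) :
    w ∉ ({y, p, q} : Finset V) := by
  have hwy : ¬ G.Adj y w := fun hyw =>
    hxy (hG.eq_of_adj_of_degree_eq_four hn hw hx hy hxw.symm hyw.symm)
  simp only [mem_insert, mem_singleton, not_or]
  refine ⟨?_, ?_, ?_⟩ <;> rintro rfl
  · omega
  · exact hwy hyp
  · exact hwy hyq

theorem not_adj_suppress_suppress (hG : IsTight G) (hn : #(high G 3) = 9) {x y p q w w' : V}
    (hxy : x ≠ y) (hx : G.degree x = 4) (hy : G.degree y = 4) (hpq : p ≠ q) (hp : G.degree p = 3)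
    (hq : G.degree q = 3) (hyp : G.Adj y p) (hyq : G.Adj y q) (hw : G.degree w = 3)
    (hw' : G.degree w' = 3) (hxw : G.Adj x w) (hxw' : G.Adj x w') :
    ¬ (suppress (suppress (isolate G {y}) p) q).Adj w w' := by
  obtain ⟨X, Y, hXY, hS, hdeg⟩ := hG.exists_hasSides_of_degree_eq_four hn hpq hy hp hq hyp hyq
  have hxS : x ∉ ({y, p, q} : Finset V) := by
    simp only [mem_insert, mem_singleton, not_or]
    exact ⟨hxy, by rintro rfl; omega, by rintro rfl; omega⟩
  have hwS := hG.notMem_of_degree_eq_four hn hxy hx hy hyp hyq hw hxw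
  have hwS' := hG.notMem_of_degree_eq_four hn hxy hx hy hyp hyq hw' hxw'
  refine hXY.not_adj_of_degree_le_three ?_ ?_ ?_ (hdeg x) (hdeg w)
    (adj_suppress_suppress_isolate hxw hxS hwS) (adj_suppress_suppress_isolate hxw' hxS hwS') <;>
  · rw [hS, mem_sdiff, mem_high]
    exact ⟨by omega, by assumption⟩

theorem not_adj_of_degree_eq_three_of_adj (hG : IsTight G) (hn : #(high G 3) = 9) {x w w' : V}
    (hx : G.degree x = 4) (hw : G.degree w = 3) (hw' : G.degree w' = 3) (hxw : G.Adj x w)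
    (hxw' : G.Adj x w') : ¬ G.Adj w w' := by
  obtain ⟨y, hy, hyx, -⟩ := hG.exists_degree_eq_four_ne hn x x
  obtain ⟨p, -, hp, hyp⟩ := hG.exists_ne_degree_eq_three hn hy y
  obtain ⟨q, hqp, hq, hyq⟩ := hG.exists_ne_degree_eq_three hn hy p
  exact fun hww' => hG.not_adj_suppress_suppress hn hyx.symm hx hy hqp.symm hp hq hyp hyq hw hw'
    hxw hxw' (adj_suppress_suppress_isolate hww'
      (hG.notMem_of_degree_eq_four hn hyx.symm hx hy hyp hyq hw hxw)
      (hG.notMem_of_degree_eq_four hn hyx.symm hx hy hyp hyq hw' hxw'))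

theorem eq_of_adj_of_adj (hG : IsTight G) (hn : #(high G 3) = 9) {x y v w w' : V}
    (hxy : x ≠ y) (hx : G.degree x = 4) (hy : G.degree y = 4) (hv : G.degree v = 3)
    (hyv : G.Adj y v) (hw : G.degree w = 3) (hw' : G.degree w' = 3) (hxw : G.Adj x w)
    (hxw' : G.Adj x w') (hvw : G.Adj v w) (hvw' : G.Adj v w') : w = w' := by
  by_contra hww'
  obtain ⟨q, hqv, hq, hyq⟩ := hG.exists_ne_degree_eq_three hn hy v
  have hwS := hG.notMem_of_degree_eq_four hn hxy hx hy hyv hyq hw hxw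
  have hwS' := hG.notMem_of_degree_eq_four hn hxy hx hy hyv hyq hw' hxw'
  refine hG.not_adj_suppress_suppress hn hxy hx hy hqv.symm hv hq hyv hyq hw hw' hxw hxw' ?_
  simp only [mem_insert, mem_singleton, not_or] at hwS hwS'
  refine suppress_adj_of_adj ⟨hww', hwS.2.1, hwS'.2.1, Or.inr ?_⟩ hwS.2.2 hwS'.2.2
  exact ⟨⟨hvw.symm, hwS.1, hyv.ne'⟩, ⟨hvw', hyv.ne', hwS'.1⟩⟩

theorem adj_or_exists_adj_of_degree_eq_four (hG : IsTight G) (hn : #(high G 3) = 9)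
    {x y z w u : V} (hxy : x ≠ y) (hzy : z ≠ y) (hxz : x ≠ z) (hx : G.degree x = 4)
    (hy : G.degree y = 4) (hz : G.degree z = 4) (hw : G.degree w = 3) (hu : G.degree u = 3)
    (hxw : G.Adj x w) (hzu : G.Adj z u) :
    G.Adj w u ∨ ∃ v, G.degree v = 3 ∧ G.Adj y v ∧ G.Adj w v ∧ G.Adj u v := by
  obtain ⟨p, -, hp, hyp⟩ := hG.exists_ne_degree_eq_three hn hy y
  obtain ⟨q, hqp, hq, hyq⟩ := hG.exists_ne_degree_eq_three hn hy p
  obtain ⟨X, Y, hXY, hS, hdeg⟩ :=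
    hG.exists_hasSides_of_degree_eq_four hn hqp.symm hy hp hq hyp hyq
  have hpq : ¬ (isolate G {y}).Adj p q := fun h =>
    hG.not_adj_of_degree_eq_three_of_adj hn hy hp hq hyp hyq h.1
  have hwS := hG.notMem_of_degree_eq_four hn hxy hx hy hyp hyq hw hxw
  have huS := hG.notMem_of_degree_eq_four hn hzy hz hy hyp hyq hu hzu
  have hne : ∀ {t}, t ≠ y → G.degree t = 4 → t ∉ ({y, p, q} : Finset V) := by
    intro t hty ht
    simp only [mem_insert, mem_singleton, not_or]
    exact ⟨hty, by rintro rfl; omega, by rintro rfl; omega⟩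
  have hwu := hXY.adj_of_adj_of_adj_of_adj hdeg
    (by rw [hS, mem_sdiff, mem_high]; exact ⟨by omega, hwS⟩)
    (adj_suppress_suppress_isolate hxw.symm hwS (hne hxy hx))
    (adj_suppress_suppress_isolate (hG.adj_of_degree_eq_four hn hxz hx hz) (hne hxy hx)
      (hne hzy hz)) (adj_suppress_suppress_isolate hzu (hne hzy hz) huS)
  obtain h | ⟨h₁, h₂⟩ | ⟨h₁, h₂⟩ := adj_or_of_adj_suppress_suppress hpq hwu
  exacts [Or.inl h.1, Or.inr ⟨p, hp, hyp, h₁.1, h₂.1⟩, Or.inr ⟨q, hq, hyq, h₁.1, h₂.1⟩]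

theorem exists_adj_adj_of_not_adj (hG : IsTight G) (hn : #(high G 3) = 9) {x u : V}
    (hx : G.degree x = 4) (hu : G.degree u = 3) (hxu : ¬ G.Adj x u) :
    ∃ w, G.degree w = 3 ∧ G.Adj x w ∧ G.Adj w u := by
  obtain ⟨z, huz, hz⟩ := hG.exists_adj_degree_eq_four hn (mem_high.2 hu.ge)
  have hxz : x ≠ z := by
    rintro rfl
    exact hxu huz.symm
  obtain ⟨y, hy, hyx, hyz⟩ := hG.exists_degree_eq_four_ne hn x z
  obtain ⟨w, -, hw, hxw⟩ := hG.exists_ne_degree_eq_three hn hx x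
  obtain ⟨w', hww', hw', hxw'⟩ := hG.exists_ne_degree_eq_three hn hx w
  obtain h | ⟨v, hv, hyv, hwv, huv⟩ :=
    hG.adj_or_exists_adj_of_degree_eq_four hn hyx.symm hyz.symm hxz hx hy hz hw hu hxw huz.symm
  · exact ⟨w, hw, hxw, h⟩
  obtain h | ⟨v', hv', hyv', hwv', huv'⟩ :=
    hG.adj_or_exists_adj_of_degree_eq_four hn hyx.symm hyz.symm hxz hx hy hz hw' hu hxw' huz.symm
  · exact ⟨w', hw', hxw', h⟩
  obtain rfl := hG.eq_of_adj_of_adj hn hyz hy hz hu huz.symm hv hv' hyv hyv' huv huv'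
  exact absurd (hG.eq_of_adj_of_adj hn hyx.symm hx hy hv hyv hw hw' hxw hxw' hwv.symm hwv'.symm)
    hww'.symm

theorem exists_hexagon (hG : IsTight G) (hn : #(high G 3) = 9) {t : V} (ht : G.degree t = 3) :
    ∃ f : Fin 6 → V, f.Injective ∧ f 0 = t ∧ (∀ i, G.degree (f i) = 3) ∧
      ∀ i, G.Adj (f i) (f (i + 1)) := by
  obtain ⟨z, htz, hz⟩ := hG.exists_adj_degree_eq_four hn (mem_high.2 ht.ge)
  obtain ⟨x, hx, hxz, -⟩ := hG.exists_degree_eq_four_ne hn z z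
  obtain ⟨y, hy, hyx, hyz⟩ := hG.exists_degree_eq_four_ne hn x z
  obtain ⟨z₁, hz₁t, hz₁, hzz₁⟩ := hG.exists_ne_degree_eq_three hn hz t
  have hne : ∀ {b c v w}, b ≠ c → G.degree b = 4 → G.degree c = 4 → G.degree v = 3 →
      G.Adj b v → G.Adj c w → v ≠ w := by
    rintro b c v _ hbc hb hc hv hbv hcv rfl
    exact hbc (hG.eq_of_adj_of_degree_eq_four hn hv hb hc hbv.symm hcv.symm)
  have hpath : ∀ {b c w}, b ≠ z → c ≠ z → b ≠ c → G.degree b = 4 → G.degree c = 4 →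
      G.degree w = 3 → G.Adj b w → G.Adj w t →
      ∃ v, G.degree v = 3 ∧ G.Adj c v ∧ G.Adj w v ∧ G.Adj z₁ v := by
    intro b c w hbz hcz hbc hb hc hw hbw hwt
    refine (hG.adj_or_exists_adj_of_degree_eq_four hn hbc hcz.symm hbz hb hc hz hw hz₁ hbw
      hzz₁).resolve_left fun h => hz₁t ?_
    exact hG.eq_of_adj_of_adj hn hbz.symm hz hb hw hbw hz₁ ht hzz₁ htz.symm h hwt
  have hother : ∀ {b v w}, b ≠ z → G.degree b = 4 → G.degree v = 3 → G.Adj b v → G.Adj v t →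
      G.Adj z₁ w → v ≠ w := by
    rintro b v _ hbz hb hv hbv hvt hz₁v rfl
    exact hz₁t (hG.eq_of_adj_of_adj hn hbz.symm hz hb hv hbv hz₁ ht hzz₁ htz.symm hz₁v.symm hvt)
  obtain ⟨w₁, hw₁, hxw₁, hw₁t⟩ := hG.exists_adj_adj_of_not_adj hn hx ht fun h =>
    hne hxz hx hz ht h htz.symm rfl
  obtain ⟨v₁, hv₁, hyv₁, hv₁t⟩ := hG.exists_adj_adj_of_not_adj hn hy ht fun h =>
    hne hyz hy hz ht h htz.symm rfl
  obtain ⟨v₂, hv₂, hyv₂, hw₁v₂, hz₁v₂⟩ := hpath hxz hyz hyx.symm hx hy hw₁ hxw₁ hw₁t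
  obtain ⟨w₂, hw₂, hxw₂, hv₁w₂, hz₁w₂⟩ := hpath hyz hxz hyx hy hx hv₁ hyv₁ hv₁t
  have h₁ := hother hxz hx hw₁ hxw₁ hw₁t hz₁w₂
  have h₂ := hother hyz hy hv₁ hyv₁ hv₁t hz₁v₂
  refine ⟨![t, w₁, v₂, z₁, w₂, v₁], List.nodup_ofFn.1 ?_, rfl, fun i => ?_, fun i => ?_⟩
  · simp [hw₁t.ne', hv₁t.ne', hw₁v₂.ne, hz₁v₂.ne', hz₁w₂.ne, hv₁w₂.ne', hz₁t.symm, h₁, h₂.symm,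
      hne hyz.symm hz hy ht htz.symm hyv₂, hne hxz.symm hz hx ht htz.symm hxw₂,
      hne hxz hx hz hw₁ hxw₁ hzz₁, hne hyx.symm hx hy hw₁ hxw₁ hyv₁,
      hne hyx hy hx hv₂ hyv₂ hxw₂, hne hyz.symm hz hy hz₁ hzz₁ hyv₁]
  · fin_cases i <;> assumption
  · fin_cases i
    exacts [hw₁t.symm, hw₁v₂, hz₁v₂.symm, hz₁w₂, hv₁w₂.symm, hv₁t]

end IsTight

namespace IsCritical

variable {G : SimpleGraph V} {a : V}

theorem card_high_isolate_three_eq_nine (hG : IsCritical G) (hn : #(high G 1) = 10)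
    (ha : G.degree a = 5) : #(high (isolate G {a}) 3) = 9 := by
  rw [hG.high_isolate_three_eq (hG.isTight_isolate_of_degree_eq_five ha), card_erase_of_mem
    (mem_high.2 (by omega)), hn]

theorem adj_of_adj_of_degree_isolate (hG : IsCritical G) {x w : V} (hax : G.Adj a x)
    (hx : (isolate G {a}).degree x = 4) (hw : (isolate G {a}).degree w = 3)
    (hxw : (isolate G {a}).Adj x w) : G.Adj a w := by
  have hdeg : G.degree x = 5 := by rw [← degree_isolate_singleton_add_one hax, hx]
  exact hG.adj_of_degree_isolate_eq_three hdeg hxw.1 hxw.2.2 hw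

theorem exists_adj_of_degree_isolate_eq_four (hG : IsCritical G) (hn : #(high G 1) = 10)
    (ha : G.degree a = 5) {x : V} (hx : (isolate G {a}).degree x = 4) :
    ∃ v, G.Adj a v ∧ (isolate G {a}).degree v = 3 ∧ ¬ (isolate G {a}).Adj x v := by
  have hK := hG.isTight_isolate_of_degree_eq_five ha
  have hn' := hG.card_high_isolate_three_eq_nine hn ha
  have hpair := hK.card_neighborFinset_inter_eq_two hn' (mem_high.2 (by omega : 3 ≤ _))
    (v := x)
  obtain ⟨v, hv, hvx⟩ := exists_mem_notMem_of_card_lt_card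
    (s := insert x ((isolate G {a}).neighborFinset x ∩ ofDegree (isolate G {a}) 3))
    (t := G.neighborFinset a) (by
      rw [card_neighborFinset_eq_degree, ha]
      exact (card_insert_le _ _).trans_lt (by omega))
  rw [mem_neighborFinset] at hv
  simp only [mem_insert, mem_inter, mem_neighborFinset, mem_ofDegree, not_or, not_and] at hvx
  have hv₃ : v ∈ high (isolate G {a}) 3 := by
    rw [hG.high_isolate_three_eq hK, mem_erase, mem_high]
    exact ⟨hv.ne', hv.degree_pos_right⟩
  obtain hv₃ | hv₄ := hK.degree_eq_three_or_eq_four hn' hv₃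
  · exact ⟨v, hv, hv₃, fun h => hvx.2 h hv₃⟩
  · obtain ⟨u, -, hu, hvu⟩ := hK.exists_ne_degree_eq_three hn' hv₄ v
    exact ⟨u, hG.adj_of_adj_of_degree_isolate hv hv₄ hu hvu, hu, fun hxu =>
      hvx.1 (hK.eq_of_adj_of_degree_eq_four hn' hu hv₄ hx hvu.symm hxu.symm)⟩

theorem degree_isolate_eq_three_of_adj (hG : IsCritical G) (hn : #(high G 1) = 10)
    (ha : G.degree a = 5) {x : V} (hax : G.Adj a x) : (isolate G {a}).degree x = 3 := by
  have hK := hG.isTight_isolate_of_degree_eq_five ha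
  have hn' := hG.card_high_isolate_three_eq_nine hn ha
  have hx₃ : x ∈ high (isolate G {a}) 3 := by
    rw [hG.high_isolate_three_eq hK, mem_erase, mem_high]
    exact ⟨hax.ne', hax.degree_pos_right⟩
  refine (hK.degree_eq_three_or_eq_four hn' hx₃).resolve_right fun hx => ?_
  obtain ⟨v, hav, hv, hxv⟩ := hG.exists_adj_of_degree_isolate_eq_four hn ha hx
  obtain ⟨w, hw, hxw, hwv⟩ := hK.exists_adj_adj_of_not_adj hn' hx hv hxv
  have haw := hG.adj_of_adj_of_degree_isolate hax hx hw hxw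
  have hdegx := degree_isolate_singleton_add_one hax
  have hdegv := degree_isolate_singleton_add_one hav
  have hdegw := degree_isolate_singleton_add_one haw
  have hx₅ : G.degree x = 5 := by omega
  have hdeg' := fun {v} (h : v ≠ x) => degree_isolate_singleton_add (G := G) h
  have hne : v ≠ x := by
    rintro rfl
    omega
  have hxv' : ¬ G.Adj x v := fun h => hxv (isolate_adj.2 ⟨h, hax.ne', hav.ne'⟩)
  have hdegv' := hdeg' hne
  have hdega' := hdeg' hax.ne
  have hdegw' := hdeg' hxw.ne'
  rw [if_neg hxv'] at hdegv'
  rw [if_pos hax.symm] at hdega'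
  rw [if_pos hxw.1] at hdegw'
  refine hav.ne ((hG.isTight_isolate_of_degree_eq_five hx₅).eq_of_adj_of_degree_eq_four
    (hG.card_high_isolate_three_eq_nine hn hx₅) (u := w) (by omega) (by omega) (by omega) ?_ ?_)
  · exact isolate_adj.2 ⟨haw.symm, hxw.ne', hax.ne⟩
  · exact isolate_adj.2 ⟨hwv.1, hxw.ne', hne⟩

theorem exists_forall_adj_of_degree_eq_five (hG : IsCritical G) (hn : #(high G 1) = 10)
    (ha : G.degree a = 5) : ∃ t, (isolate G {a}).degree t = 3 ∧ ¬ G.Adj a t ∧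
      ∀ v, (isolate G {a}).degree v = 3 → v ≠ t → G.Adj a v := by
  have hK := hG.isTight_isolate_of_degree_eq_five ha
  have hsub : G.neighborFinset a ⊆ ofDegree (isolate G {a}) 3 := fun x hx =>
    mem_ofDegree.2 (hG.degree_isolate_eq_three_of_adj hn ha ((mem_neighborFinset _ _ _).1 hx))
  have hcard := card_sdiff_of_subset hsub
  rw [hK.card_ofDegree_three (hG.card_high_isolate_three_eq_nine hn ha),
    card_neighborFinset_eq_degree, ha] at hcard
  obtain ⟨t, ht⟩ := card_eq_one.1 hcard
  have hmem : ∀ v, (isolate G {a}).degree v = 3 ∧ ¬ G.Adj a v ↔ v = t := fun v => by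
    simpa only [mem_sdiff, mem_ofDegree, mem_neighborFinset, mem_singleton] using
      Finset.ext_iff.1 ht v
  exact ⟨t, ((hmem t).2 rfl).1, ((hmem t).2 rfl).2, fun v hv hvt =>
    by_contra fun hav => hvt ((hmem v).1 ⟨hv, hav⟩)⟩

theorem exists_hexagon_of_degree_eq_five (hG : IsCritical G) (hn : #(high G 1) = 10)
    (ha : G.degree a = 5) : ∃ f : Fin 6 → V, f.Injective ∧ (∀ i, G.Adj (f i) (f (i + 1))) ∧
      G.degree (f 0) = 3 ∧ (∀ i, i ≠ 0 → G.Adj a (f i) ∧ G.degree (f i) = 4) ∧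
      (∀ i, a ≠ f i) ∧ ∃ x, G.Adj (f 1) x ∧ G.degree x = 4 ∧ x ≠ a ∧ ∀ i, x ≠ f i := by
  have hK := hG.isTight_isolate_of_degree_eq_five ha
  have hn' := hG.card_high_isolate_three_eq_nine hn ha
  obtain ⟨t, ht, hat, hadj⟩ := hG.exists_forall_adj_of_degree_eq_five hn ha
  obtain ⟨f, hf, rfl, hdeg, hstep⟩ := hK.exists_hexagon hn' ht
  have haf : ∀ i, i ≠ 0 → G.Adj a (f i) := fun i hi => hadj _ (hdeg i) (hf.ne hi)
  have hdeg' : ∀ i, 3 + (if G.Adj a (f i) then 1 else 0) = G.degree (f i) := fun i => by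
    rw [← hdeg i]
    exact degree_isolate_singleton_add (hstep i).2.1
  obtain ⟨x, hfx, hx⟩ := hK.exists_adj_degree_eq_four hn' (mem_high.2 (hdeg 1).ge)
  refine ⟨f, hf, fun i => (hstep i).1, ?_, fun i hi => ⟨haf i hi, ?_⟩,
    fun i => Ne.symm (hstep i).2.1, x, hfx.1, ?_, hfx.2.2, ?_⟩
  · simpa [hat] using (hdeg' 0).symm
  · simpa [haf i hi] using (hdeg' i).symm
  · have hax : ¬ G.Adj a x := fun h => by
      have := hG.degree_isolate_eq_three_of_adj hn ha h
      omega
    simpa [hax, hx] using (degree_isolate_singleton_add (G := G) hfx.2.2).symm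
  · rintro i rfl
    have := hdeg i
    omega

theorem degree_ne_five (hG : IsCritical G) (hn : #(high G 1) = 10) (a : V) :
    G.degree a ≠ 5 := by
  intro ha
  obtain ⟨f, hf, hstep, hdeg₀, hf', hfa, x, hfx, hx, hxa, hxf⟩ :=
    hG.exists_hexagon_of_degree_eq_five hn ha
  have hpos : ∀ i, f i ∈ high G 1 := fun i => mem_high.2 (hstep i).degree_pos_left
  have h₁₃ : f 1 ≠ f 3 := hf.ne (by decide)
  have hH₀ : (isolate G {f 1, f 3}).degree (f 0) < G.degree (f 0) :=
    degree_isolate_pair_lt (hstep 0).symm (hf.ne (by decide))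
  have hH₂ : (isolate G {f 1, f 3}).degree (f 2) + 2 = G.degree (f 2) :=
    degree_isolate_pair_add_two h₁₃ (hstep 1) (hstep 2).symm
  have hH₄ : (isolate G {f 1, f 3}).degree (f 4) < G.degree (f 4) := by
    rw [Set.pair_comm]
    exact degree_isolate_pair_lt (hstep 3) (hf.ne (by decide))
  have hHa := degree_isolate_pair_add_two h₁₃ (hf' 1 (by decide)).1.symm
    (hf' 3 (by decide)).1.symm
  have hHx := degree_isolate_pair_lt hfx (hxf 3)
  rw [(hf' 2 (by decide)).2] at hH₂
  rw [(hf' 4 (by decide)).2] at hH₄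
  refine hG.not_isPlanar (f 1) (f 3) (isPlanar_isolate_pair_of_triangle (p := f 0) (q := f 2)
    (u := a) (v := f 4) (w := f 5) (by omega) (by omega) ?_ ?_ (hf' 4 (by decide)).1
    (hf' 5 (by decide)).1 (hstep 4) ?_ ?_ ?_ (by omega) (by omega))
  · rw [card_sdiff_of_subset (by simp [insert_subset_iff, hpos]), hn]
    simp [hf.eq_iff]
  · have hcard : #{f 0, f 1, f 2, f 3, f 4, a, x} = 7 := by
      simp [hf.eq_iff, hxa.symm, (hfa _).symm, (hxf _).symm]
    have hle := card_high_isolate_add_card_le (G := G) (s := {f 1, f 3}) (d := 4)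
      (S := {f 0, f 1, f 2, f 3, f 4, a, x}) four_pos
      (by simp [insert_subset_iff, hpos, mem_high.2 (show 1 ≤ G.degree a by omega),
        mem_high.2 (show 1 ≤ G.degree x by omega)])
      (by
        have hH₁ : (isolate G {f 1, f 3}).degree (f 1) = 0 := degree_isolate_of_mem (by simp)
        have hH₃ : (isolate G {f 1, f 3}).degree (f 3) = 0 := degree_isolate_of_mem (by simp)
        simp only [mem_insert, mem_singleton, forall_eq_or_imp, forall_eq]
        omega)
    omega
  all_goals simp [hf.eq_iff, hfa]

theorem degree_eq_four {G : SimpleGraph V} (hG : IsCritical G) (hn : #(high G 1) = 10) {v : V}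
    (hv : v ∈ high G 1) : G.degree v = 4 := by
  have hdeg : ∀ v, G.degree v ≤ 4 := fun v =>
    Nat.le_of_lt_succ ((hG.degree_le_five v).lt_of_ne (hG.degree_ne_five hn v))
  have h₅ : high G 5 = ∅ := eq_empty_of_forall_notMem fun v hv => by
    have := mem_high.1 hv
    have := hdeg v
    omega
  have hsum := three_mul_card_high_add_eq hG.high_one_eq hG.degree_le_five
  rw [h₅, card_empty, ← hG.high_one_eq, hn] at hsum
  have hE := hG.card_edgeFinset_le
  obtain ⟨x, hx⟩ : (high G 4).Nonempty := by
    rw [nonempty_iff_ne_empty]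
    intro h₄
    have := mem_high.1 hv
    have := hG.degree_add_lt_card_edgeFinset v
    rw [h₄, card_empty] at hsum
    omega
  have hxdeg := mem_high.1 hx
  have hxE := hG.degree_add_lt_card_edgeFinset x
  by_contra hv₄
  have hv₃ : v ∈ ofDegree G 3 := by
    rw [hG.high_one_eq, mem_high] at hv
    exact mem_ofDegree.2 (((hdeg v).lt_of_ne hv₄ |> Nat.le_of_lt_succ).antisymm hv)
  have hcard : #(ofDegree G 3) + #(high G 4) = #(high G 3) := card_ofDegree_add G 3
  rw [← hG.high_one_eq, hn] at hcard
  have := card_pos.2 ⟨v, hv₃⟩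
  have hsub : G.neighborFinset v ⊆ ofDegree G 3 := fun u hu => by
    rw [mem_neighborFinset] at hu
    have hu₃ := hG.three_le_degree_of_adj hu
    rw [mem_ofDegree]
    by_contra hu₄
    have hK : IsTight (isolate G {u}) := hG.isTight_isolate (by omega)
    exact hv₄ ((hdeg v).antisymm (hG.four_le_degree_of_adj hK hu.symm))
  have := card_le_card hsub
  rw [card_neighborFinset_eq_degree, mem_ofDegree.1 hv₃] at this
  omega

end IsCritical

/-- A graph with exactly ten vertices of positive degree, all of degree four, that is not 2-apex:
the case of `IsCritical` that resists counting arguments. -/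
structure IsQuartic (G : SimpleGraph V) : Prop where
  not_isPlanar : ∀ a b, ¬ (isolate G {a, b}).IsPlanar
  card_high_one : #(high G 1) = 10
  degree_eq_four : ∀ v ∈ high G 1, G.degree v = 4

theorem IsCritical.isQuartic {G : SimpleGraph V} (hG : IsCritical G) (hn : #(high G 1) = 10) :
    IsQuartic G :=
  ⟨hG.not_isPlanar, hn, fun _ => hG.degree_eq_four hn⟩

/-- The configuration ruled out in order to bound common neighbors in a quartic graph: nonadjacent
`a` and `b` have exactly two common neighbors `p` and `q`, and suppressing these, which have degree
two once `a` and `b` are deleted, produces a `K₃,₃` with sides `X` and `Y` on the other six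
vertices. -/
structure IsRhombus (G : SimpleGraph V) (a b p q : V) (X Y : Finset V) : Prop where
  ne : a ≠ b
  not_adj : ¬ G.Adj a b
  inter_eq : G.neighborFinset a ∩ G.neighborFinset b = {p, q}
  ne' : p ≠ q
  hasSides : HasSides (suppress (suppress (isolate G {a, b}) p) q) X Y
  union_eq : X ∪ Y = high G 1 \ {a, b, p, q}

namespace IsQuartic

variable {G : SimpleGraph V} {a b : V}

theorem degree_eq_four_of_adj (hG : IsQuartic G) (h : G.Adj a b) : G.degree a = 4 :=
  hG.degree_eq_four a (mem_high.2 h.degree_pos_left)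

theorem degree_le_four (hG : IsQuartic G) (v : V) : G.degree v ≤ 4 := by
  by_cases hv : v ∈ high G 1
  · exact (hG.degree_eq_four v hv).le
  · rw [mem_high] at hv
    omega

theorem not_adj_of_notMem (hG : IsQuartic G) {s : Finset V} (hs : s ⊆ G.neighborFinset a)
    (hcard : #s = 4) {v : V} (hv : v ∉ s) : ¬ G.Adj a v := by
  intro hav
  rw [← hG.degree_eq_four_of_adj hav, ← card_neighborFinset_eq_degree] at hcard
  exact hv (eq_of_subset_of_card_le hs hcard.ge ▸ (mem_neighborFinset _ _ _).2 hav)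

theorem card_sdiff_union_neighborFinset (hG : IsQuartic G) (ha : a ∈ high G 1)
    (hb : b ∈ high G 1) (hab : a ≠ b) (h : ¬ G.Adj a b) :
    #(((high G 1).erase a).erase b \ (G.neighborFinset a ∪ G.neighborFinset b)) =
      #(G.neighborFinset a ∩ G.neighborFinset b) := by
  have hcard := card_sdiff_add_card_eq_card (union_neighborFinset_subset_of_not_adj h)
  have := card_union_add_card_inter (G.neighborFinset a) (G.neighborFinset b)
  rw [card_erase_of_mem (mem_erase.2 ⟨hab.symm, hb⟩), card_erase_of_mem ha, hG.card_high_one]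
    at hcard
  rw [card_neighborFinset_eq_degree, card_neighborFinset_eq_degree, hG.degree_eq_four a ha,
    hG.degree_eq_four b hb] at this
  omega

theorem card_high_isolate_pair_four_le (hG : IsQuartic G) (ha : a ∈ high G 1)
    (hb : b ∈ high G 1) (hab : a ≠ b) (h : ¬ G.Adj a b) :
    #(high (isolate G {a, b}) 4) ≤ #(G.neighborFinset a ∩ G.neighborFinset b) := by
  rw [← hG.card_sdiff_union_neighborFinset ha hb hab h]
  refine card_le_card fun v hv => mem_sdiff.2
    ⟨high_isolate_pair_subset G a b (by norm_num) hv, fun hv' => ?_⟩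
  obtain ⟨hvb, hv₁⟩ := mem_erase.1 (high_isolate_pair_subset G a b (by norm_num) hv)
  have hva := ne_of_mem_erase hv₁
  rw [mem_high] at hv
  have := hG.degree_le_four v
  rw [mem_union, mem_neighborFinset, mem_neighborFinset] at hv'
  obtain hav | hbv := hv'
  · have := degree_isolate_pair_lt hav hvb
    omega
  · have := degree_isolate_pair_lt hbv hva
    rw [Set.pair_comm] at this
    omega

theorem card_neighborFinset_inter_le_two (hG : IsQuartic G) (ha : a ∈ high G 1)
    (hb : b ∈ high G 1) (hab : a ≠ b) (h : ¬ G.Adj a b) :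
    #(G.neighborFinset a ∩ G.neighborFinset b) ≤ 2 := by
  by_contra hlt
  have h₄ := hG.card_high_isolate_pair_four_le ha hb hab h
  have h₃ := card_high_isolate_pair_add_le hab three_pos hG.degree_le_four
  have hinter : #(G.neighborFinset a ∩ G.neighborFinset b) ≤ 4 := by
    rw [← hG.degree_eq_four a ha, ← card_neighborFinset_eq_degree]
    exact card_le_card inter_subset_left
  rw [card_erase_of_mem (mem_erase.2 ⟨hab.symm, hb⟩), card_erase_of_mem ha, hG.card_high_one] at h₃
  exact hG.not_isPlanar a b (isPlanar_of_card_high (by omega) (by omega))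

theorem exists_isRhombus (hG : IsQuartic G) (ha : a ∈ high G 1) (hb : b ∈ high G 1)
    (hab : a ≠ b) (h : ¬ G.Adj a b) (hinter : #(G.neighborFinset a ∩ G.neighborFinset b) = 2) :
    ∃ p q X Y, IsRhombus G a b p q X Y := by
  obtain ⟨p, q, hpq, hinter'⟩ := card_eq_two.1 hinter
  have hadj : ∀ v, v ∈ ({p, q} : Finset V) → G.Adj a v ∧ G.Adj b v := fun v hv => by
    rwa [← hinter', mem_inter, mem_neighborFinset, mem_neighborFinset] at hv
  obtain ⟨hap, hbp⟩ := hadj p (by simp)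
  obtain ⟨haq, hbq⟩ := hadj q (by simp)
  have hp := degree_isolate_pair_add_two hab hap hbp
  have hq := degree_isolate_pair_add_two hab haq hbq
  have h₄ := hG.card_high_isolate_pair_four_le ha hb hab h
  have hsub : {a, b, p, q} ⊆ high G 1 := by
    simp only [insert_subset_iff, singleton_subset_iff]
    exact ⟨ha, hb, mem_high.2 hap.degree_pos_right, mem_high.2 haq.degree_pos_right⟩
  have hcard : #(high G 1 \ {a, b, p, q}) = 6 := by
    rw [card_sdiff_of_subset hsub, hG.card_high_one, card_insert_of_notMem,
      card_eq_three.2 ⟨b, p, q, hbp.ne, hbq.ne, hpq, rfl⟩]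
    simp [hab, hap.ne, haq.ne]
  have := hG.degree_le_four p
  have := hG.degree_le_four q
  obtain ⟨X, Y, hXY, hunion⟩ := exists_hasSides_of_not_isPlanar (p := p) (q := q) (by omega)
    (by omega) (fun v hv hvp hvq => by
      obtain ⟨hvb, hv⟩ := mem_erase.1 (high_isolate_pair_subset G a b one_pos (mem_high.2 hv))
      obtain ⟨hva, hv⟩ := mem_erase.1 hv
      exact mem_sdiff.2 ⟨hv, by simp [hva, hvb, hvp, hvq]⟩) hcard.le (by omega)
    (hG.not_isPlanar a b)
  exact ⟨p, q, X, Y, hab, h, hinter', hpq, hXY, hunion⟩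

end IsQuartic

namespace IsRhombus

variable {G : SimpleGraph V} {a b p q : V} {X Y : Finset V}

theorem symm_sides (h : IsRhombus G a b p q X Y) : IsRhombus G a b p q Y X where
  __ := h
  hasSides := h.hasSides.symm
  union_eq := by rw [union_comm, h.union_eq]

theorem symm_left (h : IsRhombus G a b p q X Y) : IsRhombus G b a p q X Y where
  ne := h.ne.symm
  not_adj := fun hba => h.not_adj hba.symm
  inter_eq := by rw [inter_comm, h.inter_eq]
  ne' := h.ne'
  hasSides := by rw [Set.pair_comm]; exact h.hasSides
  union_eq := by rw [h.union_eq, insert_comm]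

theorem symm_right (h : IsRhombus G a b p q X Y) : IsRhombus G a b q p X Y where
  ne := h.ne
  not_adj := h.not_adj
  inter_eq := by rw [h.inter_eq, pair_comm]
  ne' := h.ne'.symm
  hasSides := by rw [suppress_suppress_comm]; exact h.hasSides
  union_eq := by rw [h.union_eq, pair_comm p q]

theorem adj (h : IsRhombus G a b p q X Y) : G.Adj a p := by
  have hp : p ∈ G.neighborFinset a ∩ G.neighborFinset b := by simp [h.inter_eq]
  exact (mem_neighborFinset _ _ _).1 (mem_inter.1 hp).1

theorem mem_union_iff (h : IsRhombus G a b p q X Y) {v : V} :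
    v ∈ X ∪ Y ↔ v ∈ high G 1 ∧ v ≠ a ∧ v ≠ b ∧ v ≠ p ∧ v ≠ q := by
  rw [h.union_eq, mem_sdiff]
  simp only [mem_insert, mem_singleton, not_or]

theorem adj_suppress_suppress (h : IsRhombus G a b p q X Y) {u w : V} (hu : u ∈ X ∪ Y)
    (hw : w ∈ X ∪ Y) (huw : G.Adj u w) :
    (suppress (suppress (isolate G {a, b}) p) q).Adj u w := by
  obtain ⟨-, hua, hub, hup, huq⟩ := h.mem_union_iff.1 hu
  obtain ⟨-, hwa, hwb, hwp, hwq⟩ := h.mem_union_iff.1 hw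
  refine suppress_adj_of_adj (suppress_adj_of_adj (isolate_adj.2 ⟨huw, ?_, ?_⟩) hup hwp) huq hwq
  all_goals simp [*]

theorem not_adj_of_adj (h : IsRhombus G a b p q X Y) {v : V} (hv : v ∈ X ∪ Y)
    (hav : G.Adj a v) : ¬ G.Adj b v := by
  intro hbv
  have hpq : v ∈ G.neighborFinset a ∩ G.neighborFinset b := by simp [hav, hbv]
  rw [h.inter_eq, mem_insert, mem_singleton] at hpq
  obtain ⟨-, -, -, hvp, hvq⟩ := h.mem_union_iff.1 hv
  exact hpq.elim hvp hvq

theorem degree_suppress_suppress_le (hG : IsQuartic G) (h : IsRhombus G a b p q X Y) (v : V) :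
    (suppress (suppress (isolate G {a, b}) p) q).degree v ≤ (isolate G {a, b}).degree v := by
  have hp := degree_isolate_pair_add_two h.ne h.adj h.symm_left.adj
  have hq := degree_isolate_pair_add_two h.ne h.symm_right.adj h.symm_right.symm_left.adj
  have := hG.degree_le_four p
  have := hG.degree_le_four q
  have hle := degree_suppress_le (G := isolate G {a, b}) (v := p) (by omega)
  exact (degree_suppress_le ((hle q).trans (by omega)) v).trans (hle v)

theorem not_adj_suppress_suppress (hG : IsQuartic G) (h : IsRhombus G a b p q X Y) {u w : V}
    (hu : u ∈ X) (hw : w ∈ X) (hau : G.Adj a u) :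
    ¬ (suppress (suppress (isolate G {a, b}) p) q).Adj u w := by
  intro huw
  have := h.hasSides.four_le_degree hu hw huw
  have := h.degree_suppress_suppress_le hG u
  have := degree_isolate_pair_lt hau (h.mem_union_iff.1 (mem_union_left Y hu)).2.2.1
  have := hG.degree_le_four u
  omega

theorem not_adj_of_mem (hG : IsQuartic G) (h : IsRhombus G a b p q X Y) {u w : V}
    (hu : u ∈ X) (hw : w ∈ X) (hau : G.Adj a u) : ¬ G.Adj u w := fun huw =>
  h.not_adj_suppress_suppress hG hu hw hau
    (h.adj_suppress_suppress (mem_union_left Y hu) (mem_union_left Y hw) huw)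

theorem mem_of_adj (hG : IsQuartic G) (h : IsRhombus G a b p q X Y) {u w : V}
    (hu : u ∈ X) (hau : G.Adj a u) (huw : G.Adj u w) :
    w = a ∨ w = p ∨ w = q ∨ w ∈ Y := by
  by_contra! hw
  have hwb : w ≠ b := by
    rintro rfl
    exact h.not_adj_of_adj (mem_union_left Y hu) hau huw.symm
  refine (mem_union.1 (h.mem_union_iff.2
    ⟨mem_high.2 huw.degree_pos_right, hw.1, hwb, hw.2.1, hw.2.2.1⟩)).elim (fun hwX => ?_) hw.2.2.2
  exact h.not_adj_of_mem hG hu hwX hau huw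

theorem neighborFinset_eq (hG : IsQuartic G) (h : IsRhombus G a b p q X Y) {u : V}
    (hu : u ∈ X) (hau : G.Adj a u) (hup : ¬ G.Adj u p) (huq : ¬ G.Adj u q) :
    G.neighborFinset u = insert a Y := by
  refine eq_of_subset_of_card_le (fun w hw => ?_) ?_
  · rw [mem_neighborFinset] at hw
    rw [mem_insert]
    obtain rfl | rfl | rfl | hwY := h.mem_of_adj hG hu hau hw
    exacts [Or.inl rfl, absurd hw hup, absurd hw huq, Or.inr hwY]
  · rw [card_neighborFinset_eq_degree, hG.degree_eq_four_of_adj hau.symm]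
    exact (card_insert_le _ _).trans_eq (by rw [h.hasSides.2.1])

end IsRhombus

/-- The vertices of positive degree that are neither `a` nor adjacent to it. -/
noncomputable def strangers (G : SimpleGraph V) (a : V) : Finset V :=
  high G 1 \ insert a (G.neighborFinset a)

theorem mem_strangers {G : SimpleGraph V} {a b : V} :
    b ∈ strangers G a ↔ b ∈ high G 1 ∧ b ≠ a ∧ ¬ G.Adj a b := by
  rw [strangers, mem_sdiff, mem_insert, mem_neighborFinset, not_or]

theorem card_neighborFinset_inter_add_card_strangers (G : SimpleGraph V) (a u : V) :
    #(G.neighborFinset u ∩ G.neighborFinset a) + #(G.neighborFinset u ∩ strangers G a) +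
      (if G.Adj a u then 1 else 0) = G.degree u := by
  have hinter : #(G.neighborFinset u ∩ insert a (G.neighborFinset a)) =
      #(G.neighborFinset u ∩ G.neighborFinset a) + if G.Adj a u then 1 else 0 := by
    split_ifs with h
    · rw [inter_insert_of_mem ((mem_neighborFinset _ _ _).2 h.symm),
        card_insert_of_notMem (by simp)]
    · rw [inter_insert_of_notMem fun ha => h ((mem_neighborFinset _ _ _).1 ha).symm, add_zero]
  have hsdiff : G.neighborFinset u \ insert a (G.neighborFinset a) =
      G.neighborFinset u ∩ strangers G a := by
    rw [strangers, ← inter_sdiff_assoc, inter_eq_left.2 (neighborFinset_subset_high_one G u)]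
  have := card_inter_add_card_sdiff (G.neighborFinset u) (insert a (G.neighborFinset a))
  rw [hinter, hsdiff, card_neighborFinset_eq_degree] at this
  omega

namespace IsQuartic

variable {G : SimpleGraph V} {a : V}

theorem card_strangers (hG : IsQuartic G) (ha : a ∈ high G 1) : #(strangers G a) = 5 := by
  rw [strangers, card_sdiff_of_subset (insert_subset ha (neighborFinset_subset_high_one G a)),
    card_insert_of_notMem (by simp), hG.card_high_one, card_neighborFinset_eq_degree,
    hG.degree_eq_four a ha]

theorem sum_card_neighborFinset_inter (hG : IsQuartic G) (ha : a ∈ high G 1) :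
    ∑ u ∈ G.neighborFinset a, #(G.neighborFinset u ∩ G.neighborFinset a) +
      ∑ b ∈ strangers G a, #(G.neighborFinset b ∩ G.neighborFinset a) = 12 := by
  have hu : ∀ u ∈ G.neighborFinset a, #(G.neighborFinset u ∩ G.neighborFinset a) +
      #(G.neighborFinset u ∩ strangers G a) = 3 := fun u hu => by
    rw [mem_neighborFinset] at hu
    have := card_neighborFinset_inter_add_card_strangers G a u
    rw [if_pos hu, hG.degree_eq_four_of_adj hu.symm] at this
    omega
  rw [sum_card_neighborFinset_inter_comm G (strangers G a), ← sum_add_distrib,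
    sum_congr rfl hu, sum_const, card_neighborFinset_eq_degree, hG.degree_eq_four a ha, smul_eq_mul]

theorem card_inter_neighborFinset_eq_two (hG : IsQuartic G) (ha : a ∈ high G 1)
    (hsum : ∑ u ∈ G.neighborFinset a, #(G.neighborFinset u ∩ G.neighborFinset a) ≤ 2) {b : V}
    (hb : b ∈ strangers G a) : #(G.neighborFinset b ∩ G.neighborFinset a) = 2 := by
  have hle : ∀ b ∈ strangers G a, #(G.neighborFinset b ∩ G.neighborFinset a) ≤ 2 := fun b hb => by
    obtain ⟨hb, hba, hab⟩ := mem_strangers.1 hb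
    exact hG.card_neighborFinset_inter_le_two hb ha hba fun h => hab h.symm
  refine (sum_eq_sum_iff_of_le hle).1 ((sum_le_sum hle).antisymm ?_) b hb
  have := hG.sum_card_neighborFinset_inter ha
  rw [sum_const, hG.card_strangers ha, smul_eq_mul]
  omega

theorem card_inter_strangers_eq_two (hG : IsQuartic G) (ha : a ∈ high G 1)
    (hsum : ∑ u ∈ G.neighborFinset a, #(G.neighborFinset u ∩ G.neighborFinset a) ≤ 2) {b : V}
    (hb : b ∈ strangers G a) : #(G.neighborFinset b ∩ strangers G a) = 2 := by
  have hcard := card_neighborFinset_inter_add_card_strangers G a b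
  rw [hG.card_inter_neighborFinset_eq_two ha hsum hb, if_neg (mem_strangers.1 hb).2.2,
    hG.degree_eq_four b (mem_strangers.1 hb).1] at hcard
  omega

theorem exists_isRhombus_of_sum_le_two (hG : IsQuartic G) (ha : a ∈ high G 1)
    (hsum : ∑ u ∈ G.neighborFinset a, #(G.neighborFinset u ∩ G.neighborFinset a) ≤ 2) :
    ∃ b p q X Y, IsRhombus G a b p q X Y ∧ b ∈ strangers G a ∧ Y ⊆ strangers G a := by
  obtain ⟨u, hu, hinter⟩ : ∃ u ∈ G.neighborFinset a,
      #(G.neighborFinset u ∩ G.neighborFinset a) < 1 := by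
    refine exists_lt_of_sum_lt (hsum.trans_lt ?_)
    rw [sum_const, card_neighborFinset_eq_degree, hG.degree_eq_four a ha]
    norm_num
  rw [Nat.lt_one_iff, card_eq_zero] at hinter
  rw [mem_neighborFinset] at hu
  have hnot : ∀ v, G.Adj a v → ¬ G.Adj u v := fun v hav huv =>
    notMem_empty v (hinter ▸ mem_inter.2 ⟨by simpa using huv, by simpa using hav⟩)
  obtain ⟨b, hb, hub⟩ : ∃ b ∈ strangers G a, b ∉ G.neighborFinset u := by
    refine exists_mem_notMem_of_card_lt_card ?_
    rw [hG.card_strangers ha, card_neighborFinset_eq_degree, hG.degree_eq_four_of_adj hu.symm]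
    norm_num
  obtain ⟨hb₁, hba, hab⟩ := mem_strangers.1 hb
  rw [mem_neighborFinset] at hub
  obtain ⟨p, q, X, Y, h⟩ := hG.exists_isRhombus ha hb₁ hba.symm hab
    (by rw [inter_comm]; exact hG.card_inter_neighborFinset_eq_two ha hsum hb)
  have huXY : u ∈ X ∪ Y := by
    refine h.mem_union_iff.2 ⟨mem_high.2 hu.degree_pos_right, hu.ne', ?_, ?_, ?_⟩ <;> rintro rfl
    exacts [hab hu, hub h.symm_left.adj.symm, hub h.symm_right.symm_left.adj.symm]
  wlog huX : u ∈ X generalizing X Y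
  · exact this Y X h.symm_sides (by rwa [union_comm]) ((mem_union.1 huXY).resolve_left huX)
  refine ⟨b, p, q, X, Y, h, hb, fun y hy => ?_⟩
  have hyXY := h.mem_union_iff.1 (mem_union_right X hy)
  have huy : y ∈ G.neighborFinset u := by
    rw [h.neighborFinset_eq hG huX hu (hnot p h.adj) (hnot q h.symm_right.adj)]
    exact mem_insert_of_mem hy
  exact mem_strangers.2 ⟨hyXY.1, hyXY.2.1, fun hay => hnot y hay (by simpa using huy)⟩

theorem exists_strangers_eq_insert (hG : IsQuartic G) (ha : a ∈ high G 1) {b p q : V}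
    {X Y : Finset V} (h : IsRhombus G a b p q X Y) (hb : b ∈ strangers G a)
    (hY : Y ⊆ strangers G a) : ∃ c, strangers G a = insert c (insert b Y) := by
  have hbY : b ∉ Y := fun hbY => (h.mem_union_iff.1 (mem_union_right X hbY)).2.2.1 rfl
  have hcardY := h.hasSides.2.1
  obtain ⟨c, hc, hcY⟩ : ∃ c ∈ strangers G a, c ∉ insert b Y := by
    refine exists_mem_notMem_of_card_lt_card ?_
    rw [card_insert_of_notMem hbY, hcardY, hG.card_strangers ha]
    norm_num
  refine ⟨c, (eq_of_subset_of_card_le (insert_subset hc (insert_subset hb hY)) ?_).symm⟩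
  rw [card_insert_of_notMem hcY, card_insert_of_notMem hbY, hcardY, hG.card_strangers ha]

theorem adj_of_strangers_eq_insert (hG : IsQuartic G) (ha : a ∈ high G 1)
    (hsum : ∑ u ∈ G.neighborFinset a, #(G.neighborFinset u ∩ G.neighborFinset a) ≤ 2)
    {b c p q y : V} {X Y : Finset V} (h : IsRhombus G a b p q X Y) (hb : b ∈ strangers G a)
    (hY : Y ⊆ strangers G a) (hc : strangers G a = insert c (insert b Y)) (hy : y ∈ Y) :
    G.Adj c y := by
  have htwo := fun {v} => hG.card_inter_strangers_eq_two ha hsum (b := v)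
  have hindep : ∀ y ∈ Y, ∀ z ∈ Y, G.Adj b y → ¬ G.Adj y z := fun y hy z hz hby =>
    h.symm_left.symm_sides.not_adj_of_mem hG hy hz hby
  by_contra hcy
  have hmem : ∀ z ∈ G.neighborFinset y ∩ strangers G a, z = b ∨ z ∈ Y := fun z hz => by
    rw [mem_inter, mem_neighborFinset, hc, mem_insert, mem_insert] at hz
    exact hz.2.resolve_left fun hzc => hcy (hzc ▸ hz.1.symm)
  by_cases hby : G.Adj b y
  · refine one_lt_two.not_ge ((htwo (hY hy)).symm.trans_le (card_le_one.2 ?_))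
    have hb : ∀ z ∈ G.neighborFinset y ∩ strangers G a, z = b := fun z hz =>
      (hmem z hz).resolve_right fun hzY =>
        hindep y hy z hzY hby ((mem_neighborFinset _ _ _).1 (mem_inter.1 hz).1)
    exact fun z hz w hw => (hb z hz).trans (hb w hw).symm
  · obtain ⟨y₀, hy₀, hy₀c⟩ := exists_mem_ne (one_lt_two.trans_eq (htwo hb).symm) c
    rw [mem_inter, mem_neighborFinset, hc, mem_insert, mem_insert] at hy₀
    obtain ⟨hby₀, hy₀⟩ := hy₀
    replace hy₀ := (hy₀.resolve_left hy₀c).resolve_left hby₀.ne'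
    have hsub : G.neighborFinset y ∩ strangers G a ⊆ Y.erase y := fun z hz => by
      have hyz := (mem_neighborFinset _ _ _).1 (mem_inter.1 hz).1
      exact mem_erase.2 ⟨hyz.ne', (hmem z hz).resolve_left fun hzb => hby (hzb ▸ hyz.symm)⟩
    have heq := eq_of_subset_of_card_le hsub
      (by rw [card_erase_of_mem hy, h.hasSides.2.1, htwo (hY hy)])
    have hy₀y : y₀ ∈ Y.erase y := mem_erase.2 ⟨fun hyy => hby (hyy ▸ hby₀), hy₀⟩
    rw [← heq, mem_inter, mem_neighborFinset] at hy₀y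
    exact hindep y₀ hy₀ y hy hby₀ hy₀y.1.symm

theorem two_lt_sum_card_neighborFinset_inter (hG : IsQuartic G) (ha : a ∈ high G 1) :
    2 < ∑ u ∈ G.neighborFinset a, #(G.neighborFinset u ∩ G.neighborFinset a) := by
  by_contra! hsum
  obtain ⟨b, p, q, X, Y, h, hb, hY⟩ := hG.exists_isRhombus_of_sum_le_two ha hsum
  obtain ⟨c, hc⟩ := hG.exists_strangers_eq_insert ha h hb hY
  have := card_le_card (subset_inter (fun y hy => (mem_neighborFinset _ _ _).2
    (hG.adj_of_strangers_eq_insert ha hsum h hb hY hc hy)) hY)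
  rw [hG.card_inter_strangers_eq_two ha hsum (hc ▸ mem_insert_self _ _), h.hasSides.2.1] at this
  norm_num at this

theorem exists_adj_adj_adj_ne (hG : IsQuartic G) (ha : a ∈ high G 1) (x y : V) :
    ∃ u w, G.Adj a u ∧ G.Adj a w ∧ G.Adj u w ∧ s(u, w) ≠ s(x, y) := by
  by_contra! h
  refine (hG.two_lt_sum_card_neighborFinset_inter ha).not_ge ?_
  calc
    _ ≤ ∑ u ∈ G.neighborFinset a, if u ∈ ({x, y} : Finset V) then 1 else 0 := by
      refine sum_le_sum fun u hu => ?_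
      have hedge : ∀ w ∈ G.neighborFinset u ∩ G.neighborFinset a, s(u, w) = s(x, y) := by
        intro w hw
        simp only [mem_inter, mem_neighborFinset] at hu hw
        exact h u w hu hw.2 hw.1
      split_ifs with huxy
      · exact card_le_one.2 fun w hw w' hw' =>
          Sym2.congr_right.1 ((hedge w hw).trans (hedge w' hw').symm)
      · refine (card_eq_zero.2 (eq_empty_of_forall_notMem fun w hw => huxy ?_)).le
        have : u ∈ s(x, y) := hedge w hw ▸ Sym2.mem_mk_left u w
        simpa using this
    _ = #(G.neighborFinset a ∩ {x, y}) := by rw [sum_boole, filter_mem_eq_inter, Nat.cast_id]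
    _ ≤ 2 := (card_le_card inter_subset_right).trans card_le_two

end IsQuartic

/-- The vertices of `S` adjacent to neither `a` nor `b`, which keep their degree when `a` and `b`
are deleted. -/
noncomputable def heavy (G : SimpleGraph V) (a b : V) (S : Finset V) : Finset V :=
  {v ∈ S | ¬ G.Adj a v ∧ ¬ G.Adj b v}

theorem mem_heavy {V : Type*} {G : SimpleGraph V} {a b v : V} {S : Finset V} :
    v ∈ heavy G a b S ↔ v ∈ S ∧ ¬ G.Adj a v ∧ ¬ G.Adj b v :=
  mem_filter

theorem heavy_comm {V : Type*} (G : SimpleGraph V) (a b : V) (S : Finset V) :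
    heavy G a b S = heavy G b a S :=
  filter_congr fun _ _ => and_comm

namespace IsRhombus

variable {G : SimpleGraph V} {a b p q r s : V} {X Y : Finset V}

theorem card_neighborFinset_inter_union (hG : IsQuartic G) (h : IsRhombus G a b p q X Y) :
    #(G.neighborFinset a ∩ (X ∪ Y)) = 2 := by
  have hsdiff : G.neighborFinset a \ {p, q} = G.neighborFinset a ∩ (X ∪ Y) := by
    ext v
    simp only [mem_sdiff, mem_inter, mem_neighborFinset, h.mem_union_iff, mem_insert,
      mem_singleton, not_or]
    refine and_congr_right fun hav => ⟨fun hv => ⟨mem_high.2 hav.degree_pos_right, hav.ne', ?_, hv⟩,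
      fun hv => hv.2.2.2⟩
    rintro rfl
    exact h.not_adj hav
  have hsub : {p, q} ⊆ G.neighborFinset a := h.inter_eq ▸ inter_subset_left
  rw [← hsdiff, card_sdiff_of_subset hsub, card_neighborFinset_eq_degree,
    hG.degree_eq_four_of_adj h.adj, card_pair h.ne']

theorem card_heavy (hG : IsQuartic G) (h : IsRhombus G a b p q X Y) :
    #(heavy G a b (X ∪ Y)) = 2 := by
  have hheavy : heavy G a b (X ∪ Y) =
      (X ∪ Y) \ (G.neighborFinset a ∩ (X ∪ Y) ∪ G.neighborFinset b ∩ (X ∪ Y)) := by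
    ext v
    simp only [mem_heavy, mem_sdiff, mem_union (s := _ ∩ _), mem_inter, mem_neighborFinset]
    tauto
  have hdisj : Disjoint (G.neighborFinset a ∩ (X ∪ Y)) (G.neighborFinset b ∩ (X ∪ Y)) := by
    simp only [Finset.disjoint_left, mem_inter, mem_neighborFinset]
    exact fun v hav hbv => h.not_adj_of_adj hav.2 hav.1 hbv.1
  rw [hheavy, card_sdiff_of_subset (union_subset inter_subset_right inter_subset_right),
    card_union_of_disjoint hdisj, h.card_neighborFinset_inter_union hG,
    h.symm_left.card_neighborFinset_inter_union hG, card_union_of_disjoint h.hasSides.disjoint,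
    h.hasSides.1, h.hasSides.2.1]

theorem mem_heavy_of_adj (hG : IsQuartic G) (h : IsRhombus G a b p q X Y) {u w : V}
    (hu : u ∈ X) (hw : w ∈ X) (huw : G.Adj u w) : u ∈ heavy G a b (X ∪ Y) :=
  mem_heavy.2 ⟨mem_union_left Y hu, fun hau => h.not_adj_of_mem hG hu hw hau huw,
    fun hbu => h.symm_left.not_adj_of_mem hG hu hw hbu huw⟩

theorem eq_or_eq_or_mem_heavy (hG : IsQuartic G) (h : IsRhombus G a b p q X Y) (hr : r ∈ X)
    (har : G.Adj a r) (hrp : ¬ G.Adj r p) (hrq : ¬ G.Adj r q) {u w : V} (hu : G.Adj r u)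
    (hw : G.Adj r w) (huw : G.Adj u w) :
    (∃ m ∈ Y, G.Adj a m ∧ s(u, w) = s(a, m)) ∨
      u ∈ Y ∧ w ∈ Y ∧ u ∈ heavy G a b (X ∪ Y) ∧ w ∈ heavy G a b (X ∪ Y) := by
  rw [← mem_neighborFinset, h.neighborFinset_eq hG hr har hrp hrq, mem_insert] at hu hw
  obtain rfl | hu := hu
  · exact Or.inl ⟨w, hw.resolve_left huw.ne', huw, rfl⟩
  obtain rfl | hw := hw
  · exact Or.inl ⟨u, hu, huw.symm, Sym2.eq_swap⟩
  have hsymm := h.symm_sides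
  rw [union_comm]
  exact Or.inr ⟨hu, hw, hsymm.mem_heavy_of_adj hG hu hw huw,
    hsymm.mem_heavy_of_adj hG hw hu huw.symm⟩

theorem exists_adj_of_not_adj (hG : IsQuartic G) (h : IsRhombus G a b p q X Y) (hr : r ∈ X)
    (har : G.Adj a r) (hrp : ¬ G.Adj r p) (hrq : ¬ G.Adj r q) : ∃ m ∈ Y, G.Adj a m := by
  obtain ⟨x, y, -, hxy⟩ := card_eq_two.1 (h.card_heavy hG)
  obtain ⟨u, w, hu, hw, huw, hne⟩ := hG.exists_adj_adj_adj_ne (mem_high.2 har.degree_pos_right) x y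
  obtain ⟨m, hm, ham, -⟩ | ⟨-, -, huH, hwH⟩ :=
    h.eq_or_eq_or_mem_heavy hG hr har hrp hrq hu hw huw
  · exact ⟨m, hm, ham⟩
  rw [hxy, mem_insert, mem_singleton] at huH hwH
  have := huw.ne
  obtain rfl | rfl := huH <;> obtain rfl | rfl := hwH
  all_goals simp_all

theorem heavy_subset_of_not_adj (hG : IsQuartic G) (h : IsRhombus G a b p q X Y) (hr : r ∈ X)
    (har : G.Adj a r) (hrp : ¬ G.Adj r p) (hrq : ¬ G.Adj r q) : heavy G a b (X ∪ Y) ⊆ Y := by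
  intro x hx
  by_contra hxY
  obtain ⟨m, hm, ham⟩ := h.exists_adj_of_not_adj hG hr har hrp hrq
  obtain ⟨u, w, hu, hw, huw, hne⟩ := hG.exists_adj_adj_adj_ne (mem_high.2 har.degree_pos_right) a m
  obtain ⟨m', hm', ham', huw'⟩ | ⟨huY, hwY, huH, hwH⟩ :=
    h.eq_or_eq_or_mem_heavy hG hr har hrp hrq hu hw huw
  · have hrY := Finset.disjoint_left.1 h.hasSides.disjoint hr
    have hmm' : m ≠ m' := by
      rintro rfl
      exact hne huw'
    have hsub : {r, m, m'} ⊆ G.neighborFinset a ∩ (X ∪ Y) := by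
      simp [insert_subset_iff, *]
    have := card_le_card hsub
    rw [h.card_neighborFinset_inter_union hG, card_eq_three.2 ⟨r, m, m', ?_, ?_, hmm', rfl⟩] at this
    · norm_num at this
    all_goals
      rintro rfl
      contradiction
  · have hsub : {x, u, w} ⊆ heavy G a b (X ∪ Y) := by simp [insert_subset_iff, *]
    have := card_le_card hsub
    rw [h.card_heavy hG, card_eq_three.2 ⟨x, u, w, ?_, ?_, huw.ne, rfl⟩] at this
    · norm_num at this
    all_goals
      rintro rfl
      contradiction

theorem exists_not_adj (hG : IsQuartic G) (h : IsRhombus G a b p q X Y) :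
    ∃ v ∈ X ∪ Y, ¬ G.Adj v p ∧ ¬ G.Adj v q := by
  have hle : ∀ {p q}, IsRhombus G a b p q X Y → #(G.neighborFinset p ∩ (X ∪ Y)) ≤ 2 :=
      fun {p q} h => by
    have hsub : {a, b} ⊆ G.neighborFinset p \ (X ∪ Y) := by
      have := h.adj.symm
      have := h.symm_left.adj.symm
      have ha : a ∉ X ∪ Y := fun ha => (h.mem_union_iff.1 ha).2.1 rfl
      have hb : b ∉ X ∪ Y := fun hb => (h.mem_union_iff.1 hb).2.2.1 rfl
      rw [mem_union] at ha hb
      simp [insert_subset_iff, *]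
    have := card_le_card hsub
    have := card_inter_add_card_sdiff (G.neighborFinset p) (X ∪ Y)
    rw [card_pair h.ne] at *
    rw [card_neighborFinset_eq_degree, hG.degree_eq_four_of_adj h.adj.symm] at this
    omega
  obtain ⟨v, hv, hvpq⟩ : ∃ v ∈ X ∪ Y,
      v ∉ G.neighborFinset p ∩ (X ∪ Y) ∪ G.neighborFinset q ∩ (X ∪ Y) := by
    refine exists_mem_notMem_of_card_lt_card ((card_union_le _ _).trans_lt ?_)
    rw [card_union_of_disjoint h.hasSides.disjoint, h.hasSides.1, h.hasSides.2.1]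
    have := hle h
    have := hle h.symm_right
    omega
  rw [← union_inter_distrib_right, mem_inter, not_and_or, mem_union, mem_neighborFinset,
    mem_neighborFinset] at hvpq
  have := hvpq.resolve_right (not_not.2 hv)
  exact ⟨v, hv, fun h => this (Or.inl h.symm), fun h => this (Or.inr h.symm)⟩

theorem heavy_subset_or (hG : IsQuartic G) (h : IsRhombus G a b p q X Y) :
    heavy G a b (X ∪ Y) ⊆ X ∨ heavy G a b (X ∪ Y) ⊆ Y := by
  obtain ⟨v, hv, hvp, hvq⟩ := h.exists_not_adj hG
  wlog hvX : v ∈ X generalizing X Y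
  · have := this h.symm_sides (by rwa [union_comm]) ((mem_union.1 hv).resolve_left hvX)
    rwa [or_comm, union_comm] at this
  by_cases hav : G.Adj a v
  · exact Or.inr (h.heavy_subset_of_not_adj hG hvX hav hvp hvq)
  by_cases hbv : G.Adj b v
  · rw [heavy_comm]
    exact Or.inr (h.symm_left.heavy_subset_of_not_adj hG hvX hbv hvp hvq)
  have hvhigh := (h.mem_union_iff.1 hv).1
  obtain ⟨x, hx, hxY⟩ : ∃ x ∈ G.neighborFinset v, x ∉ Y := by
    refine exists_mem_notMem_of_card_lt_card ?_
    rw [h.hasSides.2.1, card_neighborFinset_eq_degree, hG.degree_eq_four v hvhigh]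
    norm_num
  rw [mem_neighborFinset] at hx
  have hxX : x ∈ X := by
    refine (mem_union.1 (h.mem_union_iff.2 ⟨mem_high.2 hx.degree_pos_right, ?_⟩)).resolve_right hxY
    refine ⟨?_, ?_, ?_, ?_⟩ <;> rintro rfl
    exacts [hav hx.symm, hbv hx.symm, hvp hx, hvq hx]
  have hsub : {v, x} ⊆ heavy G a b (X ∪ Y) := insert_subset (h.mem_heavy_of_adj hG hvX hxX hx)
    (singleton_subset_iff.2 (h.mem_heavy_of_adj hG hxX hvX hx.symm))
  rw [← eq_of_subset_of_card_le hsub (by rw [h.card_heavy hG, card_pair hx.ne])]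
  exact Or.inl (insert_subset hvX (singleton_subset_iff.2 hxX))

theorem not_adj_of_adj_left (hG : IsQuartic G) (h : IsRhombus G a b p q X Y) {r r' : V}
    (hr : r ∈ X) (hr' : r' ∈ X) (hrr' : r ≠ r') (har : G.Adj a r) (hrp : G.Adj r p) :
    ¬ G.Adj r' p := by
  intro hr'p
  obtain ⟨-, hra, hrb, hrp', hrq⟩ := h.mem_union_iff.1 (mem_union_left Y hr)
  obtain ⟨-, hra', hrb', hrp'', hrq'⟩ := h.mem_union_iff.1 (mem_union_left Y hr')
  have hpa := h.adj.ne'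
  have hpb := h.symm_left.adj.ne'
  refine h.not_adj_suppress_suppress hG hr hr' har (suppress_adj_of_adj ?_ hrq hrq')
  refine suppress_adj.2 ⟨hrr', ‹_›, ‹_›, Or.inr ⟨isolate_adj.2 ⟨hrp, ?_⟩,
    isolate_adj.2 ⟨hr'p.symm, ?_⟩⟩⟩
  all_goals simp [*]

theorem adj_or_of_mem (h : IsRhombus G a b p q X Y) (hpq : ¬ G.Adj p q) {x y : V} (hx : x ∈ X)
    (hy : y ∈ Y) : G.Adj x y ∨ G.Adj x p ∧ G.Adj y p ∨ G.Adj x q ∧ G.Adj y q := by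
  have hpq' : ¬ (isolate G {a, b}).Adj p q := fun hpq' => hpq (isolate_adj.1 hpq').1
  exact (adj_or_of_adj_suppress_suppress hpq' (h.hasSides.adj hx hy)).imp
    (fun h => (isolate_adj.1 h).1)
    (Or.imp (And.imp (fun h => (isolate_adj.1 h).1) fun h => (isolate_adj.1 h).1)
      (And.imp (fun h => (isolate_adj.1 h).1) fun h => (isolate_adj.1 h).1))

theorem exists_not_adj_mem (hG : IsQuartic G) (h : IsRhombus G a b p q X Y) (hbr : G.Adj b r)
    (hrp : G.Adj r p) : ∃ x ∈ X, ¬ G.Adj r x := by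
  by_contra! hX
  have hsub : {b, p} ∪ X ⊆ G.neighborFinset r := by
    refine union_subset ?_ fun x hx => (mem_neighborFinset _ _ _).2 (hX x hx)
    simp [insert_subset_iff, hbr.symm, hrp]
  have hdisj : Disjoint {b, p} X := by
    rw [Finset.disjoint_right]
    intro x hx
    obtain ⟨-, -, hxb, hxp, -⟩ := h.mem_union_iff.1 (mem_union_left Y hx)
    simp [hxb, hxp]
  have := card_le_card hsub
  rw [card_union_of_disjoint hdisj, card_pair h.symm_left.adj.ne, h.hasSides.1,
    card_neighborFinset_eq_degree, hG.degree_eq_four_of_adj hbr.symm] at this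
  norm_num at this

theorem not_adj_of_adj_right (hG : IsQuartic G) (h : IsRhombus G a b p q X Y) {x y v : V}
    (hx : x ∈ X) (hy : y ∈ Y) (hpx : G.Adj p x) (hpy : G.Adj p y) (hva : v ≠ a) (hvb : v ≠ b)
    (hvx : v ≠ x) (hvy : v ≠ y) : ¬ G.Adj p v := by
  obtain ⟨-, hxa, hxb, -, -⟩ := h.mem_union_iff.1 (mem_union_left Y hx)
  obtain ⟨-, hya, hyb, -, -⟩ := h.mem_union_iff.1 (mem_union_right X hy)
  have hxy : x ≠ y := fun hxy => Finset.disjoint_left.1 h.hasSides.disjoint hx (hxy ▸ hy)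
  refine hG.not_adj_of_notMem (s := {a, b, x, y}) ?_ ?_ ?_
  · have hpa := h.adj.symm
    have hpb := h.symm_left.adj.symm
    simp [insert_subset_iff, *]
  · rw [card_insert_of_notMem, card_eq_three.2 ⟨b, x, y, hxb.symm, hyb.symm, hxy, rfl⟩]
    simp [h.ne, hxa.symm, hya.symm]
  · simp [*]

theorem adj_of_mem (hG : IsQuartic G) (h : IsRhombus G a b p q X Y) (hpq : ¬ G.Adj p q)
    (hX : ∀ x ∈ X, ¬ G.Adj b x) (hs : s ∈ X) (has : G.Adj a s) (hr : r ∈ Y) (hbr : G.Adj b r)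
    (hrp : G.Adj r p) (hrq : ¬ G.Adj r q) : G.Adj s p := by
  by_contra hsp
  obtain ⟨x, hx, hrx⟩ := h.exists_not_adj_mem hG hbr hrp
  have hsr : G.Adj s r := by
    obtain h | h | h := h.adj_or_of_mem hpq hs hr
    exacts [h, absurd h.1 hsp, absurd h.2 hrq]
  have hxp : G.Adj x p := by
    obtain h | h | h := h.adj_or_of_mem hpq hx hr
    exacts [absurd h.symm hrx, h.1, absurd h.2 hrq]
  have hmem : ∀ w, G.Adj r w → w = b ∨ w = p ∨ w ∈ X := fun w hrw => by
    obtain h | h | rfl | h := h.symm_left.symm_sides.mem_of_adj hG hr hbr hrw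
    exacts [Or.inl h, Or.inr (Or.inl h), absurd hrw hrq, Or.inr (Or.inr h)]
  have hindep : ∀ u ∈ X, G.Adj r u → ∀ w, G.Adj r w → ¬ G.Adj u w := by
    intro u hu hru w hrw huw
    have hux : u ≠ x := fun hux => hrx (hux ▸ hru)
    obtain rfl | rfl | hw := hmem w hrw
    · exact hX u hu huw.symm
    · obtain ⟨-, hua, hub, -, -⟩ := h.mem_union_iff.1 (mem_union_left Y hu)
      exact h.not_adj_of_adj_right hG hx hr hxp.symm hrp.symm hua hub hux hru.ne' huw.symm
    · have hsu : s ≠ u := fun hsu => h.not_adj_of_mem hG hs hw has (hsu ▸ huw)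
      have hsw : s ≠ w := fun hsw => h.not_adj_of_mem hG hs hu has (hsw ▸ huw.symm)
      have hwx : w ≠ x := fun hwx => hrx (hwx ▸ hrw)
      have hsx : s ≠ x := fun hsx => hrx (hsx ▸ hsr.symm)
      have : #{x, s, u, w} ≤ #X := card_le_card (by simp [insert_subset_iff, *])
      rw [h.hasSides.1, card_insert_of_notMem (by simp [hsx.symm, hux.symm, hwx.symm]),
        card_eq_three.2 ⟨s, u, w, hsu, hsw, huw.ne, rfl⟩] at this
      norm_num at this
  obtain ⟨u, w, hu, hw, huw, hne⟩ := hG.exists_adj_adj_adj_ne (mem_high.2 hbr.degree_pos_right) b p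
  have hbp : ∀ {u w}, G.Adj r u → G.Adj r w → G.Adj u w → u = b ∨ u = p := fun {u w} hu hw huw =>
    (or_assoc.2 (hmem u hu)).resolve_right fun huX => hindep u huX hu w hw huw
  obtain rfl | rfl := hbp hu hw huw <;> obtain rfl | rfl := hbp hw hu huw.symm
  exacts [huw.ne rfl, hne rfl, hne Sym2.eq_swap, huw.ne rfl]

theorem adj_or_adj_of_heavy_subset (hG : IsQuartic G) (h : IsRhombus G a b p q X Y) (hr : r ∈ X)
    (har : G.Adj a r) (hX : heavy G a b (X ∪ Y) ⊆ X) : G.Adj r p ∨ G.Adj r q := by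
  by_contra! hrpq
  obtain ⟨v, hv⟩ := card_pos.1 (two_pos.trans_eq (h.card_heavy hG).symm)
  exact Finset.disjoint_left.1 h.hasSides.disjoint (hX hv)
    (h.heavy_subset_of_not_adj hG hr har hrpq.1 hrpq.2 hv)

theorem adj_or_adj_of_forall_not_adj (hG : IsQuartic G) (h : IsRhombus G a b p q X Y) (hr : r ∈ X)
    (har : G.Adj a r) (hY : ∀ y ∈ Y, ¬ G.Adj a y) : G.Adj r p ∨ G.Adj r q := by
  by_contra! hrpq
  obtain ⟨m, hm, ham⟩ := h.exists_adj_of_not_adj hG hr har hrpq.1 hrpq.2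
  exact hY m hm ham

theorem not_adj_of_heavy_subset (hG : IsQuartic G) (h : IsRhombus G a b p q X Y) {x : V}
    (hs : s ∈ X) (has : G.Adj a s) (hX : heavy G a b (X ∪ Y) ⊆ X) (hx : x ∈ X) :
    ¬ G.Adj b x := by
  intro hbx
  have hdisj : Disjoint {s, x} (heavy G a b (X ∪ Y)) := by
    simp [mem_heavy, has, hbx]
  have hsx : s ≠ x := by
    rintro rfl
    exact h.not_adj_of_adj (mem_union_left Y hs) has hbx
  have := card_le_card (union_subset (insert_subset hs (singleton_subset_iff.2 hx)) hX)
  rw [card_union_of_disjoint hdisj, card_pair hsx, h.card_heavy hG, h.hasSides.1] at this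
  norm_num at this

theorem not_adj_of_adj_of_adj (hG : IsQuartic G) (h : IsRhombus G a b p q X Y) {r r' : V}
    (hX : ∀ x ∈ X, ¬ G.Adj b x) (hs : s ∈ X) (has : G.Adj a s) (hspq : G.Adj s p ∨ G.Adj s q)
    (hr : r ∈ Y) (hbr : G.Adj b r) (hrp : G.Adj r p) (hr' : r' ∈ Y) (hbr' : G.Adj b r')
    (hrr' : r ≠ r') : ¬ G.Adj r' q := by
  intro hr'q
  have hb := h.symm_left.symm_sides
  have hr'p := hb.not_adj_of_adj_left hG hr hr' hrr' hbr hrp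
  have hrq := hb.symm_right.not_adj_of_adj_left hG hr' hr hrr'.symm hbr' hr'q
  have hne : ∀ {v w}, v ∈ X ∪ Y → w = p ∨ w = q → w ≠ v := by
    rintro v w hv hw rfl
    exact hw.elim (h.mem_union_iff.1 hv).2.2.2.1 (h.mem_union_iff.1 hv).2.2.2.2
  have hs₀ := mem_union_left Y hs
  have hpq : ¬ G.Adj p q := by
    obtain hsp | hsq := hspq
    · exact h.not_adj_of_adj_right hG hs hr hsp.symm hrp.symm h.symm_right.adj.ne'
        h.symm_right.symm_left.adj.ne' (hne hs₀ (Or.inr rfl))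
          (hne (mem_union_right X hr) (Or.inr rfl))
    · exact fun hpq => h.symm_right.not_adj_of_adj_right hG hs hr' hsq.symm hr'q.symm h.adj.ne'
        h.symm_left.adj.ne' (hne hs₀ (Or.inl rfl)) (hne (mem_union_right X hr') (Or.inl rfl))
        hpq.symm
  have hsp := h.adj_of_mem hG hpq hX hs has hr hbr hrp hrq
  have hsq := h.symm_right.adj_of_mem hG (fun hqp => hpq hqp.symm) hX hs has hr' hbr' hr'q hr'p
  obtain ⟨-, hsa, hsb, -, -⟩ := h.mem_union_iff.1 hs₀
  have hsub : {a, b, s} ⊆ G.neighborFinset p ∩ G.neighborFinset q := by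
    have := h.adj.symm
    have := h.symm_left.adj.symm
    have := h.symm_right.adj.symm
    have := h.symm_right.symm_left.adj.symm
    have := hsp.symm
    have := hsq.symm
    simp [insert_subset_iff, *]
  have := (card_le_card hsub).trans (hG.card_neighborFinset_inter_le_two
    (mem_high.2 hrp.degree_pos_right) (mem_high.2 hr'q.degree_pos_right) h.ne' hpq)
  rw [card_eq_three.2 ⟨a, b, s, h.ne, hsa.symm, hsb.symm, rfl⟩] at this
  norm_num at this

theorem not_heavy_subset (hG : IsQuartic G) (h : IsRhombus G a b p q X Y) :
    ¬ heavy G a b (X ∪ Y) ⊆ X := by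
  intro hheavy
  obtain ⟨s, hs, hs'⟩ : ∃ s ∈ X, s ∉ heavy G a b (X ∪ Y) := by
    refine exists_mem_notMem_of_card_lt_card ?_
    rw [h.card_heavy hG, h.hasSides.1]
    norm_num
  wlog has : G.Adj a s generalizing a b
  · rw [heavy_comm] at hheavy hs'
    refine this h.symm_left hheavy hs' ?_
    rw [mem_heavy] at hs'
    simpa [hs, has] using hs'
  have hX : ∀ x ∈ X, ¬ G.Adj b x := fun x => h.not_adj_of_heavy_subset hG hs has hheavy
  have hspq := h.adj_or_adj_of_heavy_subset hG hs has hheavy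
  obtain ⟨r, r', hrr', hinter⟩ := card_eq_two.1 (h.symm_left.card_neighborFinset_inter_union hG)
  have hmem : ∀ v ∈ ({r, r'} : Finset V), v ∈ Y ∧ G.Adj b v ∧ (G.Adj v p ∨ G.Adj v q) := by
    intro v hv
    rw [← hinter, mem_inter, mem_neighborFinset, mem_union] at hv
    have hvY := hv.2.resolve_left fun hvX => hX v hvX hv.1
    exact ⟨hvY, hv.1, h.symm_left.symm_sides.adj_or_adj_of_forall_not_adj hG hvY hv.1 hX⟩
  obtain ⟨hr, hbr, hrpq⟩ := hmem r (by simp)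
  obtain ⟨hr', hbr', hrpq'⟩ := hmem r' (by simp)
  wlog hrp : G.Adj r p generalizing p q
  · exact this h.symm_right hspq.symm (fun v hv => (hmem v hv).imp_right (And.imp_right Or.symm))
      hrpq.symm hrpq'.symm (hrpq.resolve_left hrp)
  obtain hrp' | hrq' := hrpq'
  · exact h.symm_left.symm_sides.not_adj_of_adj_left hG hr hr' hrr' hbr hrp hrp'
  · exact h.not_adj_of_adj_of_adj hG hX hs has hspq hr hbr hrp hr' hbr' hrr' hrq'

end IsRhombus

namespace IsQuartic

variable {G : SimpleGraph V} {a b p q u w : V} {X Y : Finset V}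

theorem not_isRhombus (hG : IsQuartic G) : ¬ IsRhombus G a b p q X Y := fun h =>
  (h.heavy_subset_or hG).elim (h.not_heavy_subset hG)
    (union_comm Y X ▸ h.symm_sides.not_heavy_subset hG)

theorem card_neighborFinset_inter_le_one (hG : IsQuartic G) (ha : a ∈ high G 1)
    (hb : b ∈ high G 1) (hab : a ≠ b) (h : ¬ G.Adj a b) :
    #(G.neighborFinset a ∩ G.neighborFinset b) ≤ 1 := by
  refine Nat.lt_succ_iff.1
    ((hG.card_neighborFinset_inter_le_two ha hb hab h).lt_of_ne fun htwo => ?_)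
  obtain ⟨p, q, X, Y, hrhombus⟩ := hG.exists_isRhombus ha hb hab h htwo
  exact hG.not_isRhombus hrhombus

theorem seven_le_sum_card_neighborFinset_inter (hG : IsQuartic G) (ha : a ∈ high G 1) :
    7 ≤ ∑ v ∈ G.neighborFinset a, #(G.neighborFinset v ∩ G.neighborFinset a) := by
  have hle : ∑ b ∈ strangers G a, #(G.neighborFinset b ∩ G.neighborFinset a) ≤
      #(strangers G a) • 1 := by
    refine sum_le_card_nsmul _ _ _ fun b hb => ?_
    obtain ⟨hb, hba, hab⟩ := mem_strangers.1 hb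
    exact hG.card_neighborFinset_inter_le_one hb ha hba fun h => hab h.symm
  have := hG.sum_card_neighborFinset_inter ha
  rw [hG.card_strangers ha, smul_eq_mul] at hle
  omega

theorem eq_of_adj_of_adj (hG : IsQuartic G) (hau : G.Adj a u) (haw : G.Adj a w) (huw : u ≠ w)
    (h : ¬ G.Adj u w) {v : V} (huv : G.Adj u v) (hwv : G.Adj w v) : v = a :=
  card_le_one.1 (hG.card_neighborFinset_inter_le_one (mem_high.2 hau.degree_pos_right)
    (mem_high.2 haw.degree_pos_right) huw h) v (by simp [huv, hwv]) a
    (by simp [hau.symm, haw.symm])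

theorem card_neighborFinset_inter_le_two_of_not_adj (hG : IsQuartic G) (hau : G.Adj a u)
    (haw : G.Adj a w) (huw : u ≠ w) (h : ¬ G.Adj u w) :
    #(G.neighborFinset u ∩ G.neighborFinset a) ≤ 2 := by
  have hsub : G.neighborFinset u ∩ G.neighborFinset a ⊆ ((G.neighborFinset a).erase u).erase w :=
    fun v hv => by
      obtain ⟨huv, hv⟩ := mem_inter.1 hv
      rw [mem_neighborFinset] at huv
      exact mem_erase.2 ⟨fun hvw => h (hvw ▸ huv), mem_erase.2 ⟨huv.ne', hv⟩⟩
  refine (card_le_card hsub).trans_eq ?_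
  rw [card_erase_of_mem (by simp [haw, huw.symm]), card_erase_of_mem (by simpa),
    card_neighborFinset_eq_degree, hG.degree_eq_four_of_adj hau]

theorem card_neighborFinset_inter_add_le_two (hG : IsQuartic G) (hau : G.Adj a u)
    (haw : G.Adj a w) (huw : u ≠ w) (h : ¬ G.Adj u w) :
    #(G.neighborFinset u ∩ G.neighborFinset a) + #(G.neighborFinset w ∩ G.neighborFinset a) ≤
      2 := by
  have hdisj : Disjoint (G.neighborFinset u ∩ G.neighborFinset a)
      (G.neighborFinset w ∩ G.neighborFinset a) := by
    simp only [Finset.disjoint_left, mem_inter, mem_neighborFinset]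
    rintro v ⟨huv, hav⟩ ⟨hwv, -⟩
    exact hav.ne' (hG.eq_of_adj_of_adj hau haw huw h huv hwv)
  have hsub : G.neighborFinset u ∩ G.neighborFinset a ∪ G.neighborFinset w ∩ G.neighborFinset a ⊆
      ((G.neighborFinset a).erase u).erase w := by
    intro v
    simp only [mem_union, mem_inter, mem_erase, mem_neighborFinset]
    rintro (⟨huv, hav⟩ | ⟨hwv, hav⟩)
    · exact ⟨fun hvw => h (hvw ▸ huv), huv.ne', hav⟩
    · exact ⟨hwv.ne', fun hvu => h (hvu ▸ hwv).symm, hav⟩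
  rw [← card_union_of_disjoint hdisj]
  refine (card_le_card hsub).trans_eq ?_
  rw [card_erase_of_mem (by simp [haw, huw.symm]), card_erase_of_mem (by simpa),
    card_neighborFinset_eq_degree, hG.degree_eq_four_of_adj hau]

theorem isClique_neighborFinset (hG : IsQuartic G) (ha : a ∈ high G 1) :
    G.IsClique (G.neighborFinset a : Set V) := by
  intro u hu w hw huw
  by_contra hadj
  rw [mem_coe] at hu hw
  have hau := (mem_neighborFinset _ _ _).1 hu
  have haw := (mem_neighborFinset _ _ _).1 hw
  have hw' : w ∈ (G.neighborFinset a).erase u := mem_erase.2 ⟨huw.symm, hw⟩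
  have hle : ∀ v ∈ ((G.neighborFinset a).erase u).erase w,
      #(G.neighborFinset v ∩ G.neighborFinset a) ≤ 2 := fun v hv => by
    simp only [mem_erase, mem_neighborFinset] at hv
    obtain ⟨hvw, hvu, hav⟩ := hv
    by_cases hadj' : G.Adj v u
    · refine hG.card_neighborFinset_inter_le_two_of_not_adj hav haw hvw fun hadj'' => ?_
      exact hav.ne' (hG.eq_of_adj_of_adj hau haw huw hadj hadj'.symm hadj''.symm)
    · exact hG.card_neighborFinset_inter_le_two_of_not_adj hav hau hvu hadj'
  have hrest := sum_le_card_nsmul _ _ _ hle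
  rw [card_erase_of_mem hw', card_erase_of_mem hu, card_neighborFinset_eq_degree,
    hG.degree_eq_four a ha, smul_eq_mul] at hrest
  have hpair := hG.card_neighborFinset_inter_add_le_two hau haw huw hadj
  have hsum := hG.seven_le_sum_card_neighborFinset_inter ha
  rw [← add_sum_erase _ _ hu, ← add_sum_erase _ _ hw'] at hsum
  omega

theorem mem_neighborFinset_of_adj (hG : IsQuartic G) (ha : a ∈ high G 1) (hau : G.Adj a u)
    (huw : G.Adj u w) (hwa : w ≠ a) : w ∈ G.neighborFinset a := by
  by_contra hw
  have hu := (mem_neighborFinset _ _ _).2 hau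
  refine hG.not_adj_of_notMem (s := insert a ((G.neighborFinset a).erase u)) ?_ ?_ ?_ huw
  · refine insert_subset ((mem_neighborFinset _ _ _).2 hau.symm) fun v hv => ?_
    obtain ⟨hvu, hv⟩ := mem_erase.1 hv
    exact (mem_neighborFinset _ _ _).2 (hG.isClique_neighborFinset ha hu hv hvu.symm)
  · rw [card_insert_of_notMem (by simp), card_erase_of_mem hu, card_neighborFinset_eq_degree,
      hG.degree_eq_four a ha]
  · rw [mem_insert, mem_erase]
    tauto

end IsQuartic

theorem not_isQuartic (G : SimpleGraph V) : ¬ IsQuartic G := by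
  intro hG
  obtain ⟨a, ha⟩ := card_pos.1 ((Nat.succ_pos 9).trans_eq hG.card_high_one.symm)
  obtain ⟨b, hb⟩ := card_pos.1 ((Nat.succ_pos 4).trans_eq (hG.card_strangers ha).symm)
  have hcard : #(G.neighborFinset a) ≤ 4 := by
    rw [card_neighborFinset_eq_degree, hG.degree_eq_four a ha]
  have hcard' : #((strangers G a).erase b) ≤ 4 := by
    rw [card_erase_of_mem hb, hG.card_strangers ha]
  have hclosed : ∀ {u w}, (isolate G {a, b}).Adj u w → u ∈ G.neighborFinset a →
      w ∈ G.neighborFinset a := fun {u w} huw hu =>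
    hG.mem_neighborFinset_of_adj ha ((mem_neighborFinset _ _ _).1 hu) huw.1
      fun hwa => huw.2.2 (by simp [hwa])
  have hplanar : ∀ {H : SimpleGraph V}, #(high H 3) ≤ 4 → H.IsPlanar := fun {H} h =>
    isPlanar_of_card_high (h.trans (by norm_num))
      ((card_le_card (high_anti H (by norm_num))).trans h)
  refine hG.not_isPlanar a b (isPlanar_of_isPlanar_isolate (T := G.neighborFinset a)
    (fun u w huw => ⟨hclosed huw, hclosed huw.symm⟩) (hplanar ?_) (hplanar ?_))
  · refine (card_le_card fun v hv => ?_).trans hcard'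
    have hva := notMem_of_mem_high_isolate three_pos hv
    have hv' := high_isolate_subset _ _ _ hv
    have hvab := notMem_of_mem_high_isolate three_pos hv'
    rw [Set.mem_insert_iff, Set.mem_singleton_iff, not_or] at hvab
    rw [mem_coe, mem_neighborFinset] at hva
    exact mem_erase.2 ⟨hvab.2, mem_strangers.2
      ⟨high_anti G (by norm_num) (high_isolate_subset _ _ _ hv'), hvab.1, hva⟩⟩
  · refine (card_le_card fun v hv => ?_).trans hcard
    simpa using notMem_of_mem_high_isolate three_pos hv

/-! ### Graphs with at most twenty edges -/

namespace IsCritical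

variable {G : SimpleGraph V}

theorem three_mul_card_high_one_add_eq (hG : IsCritical G) :
    3 * #(high G 1) + #(high G 4) + #(high G 5) = 2 * #G.edgeFinset :=
  hG.high_one_eq ▸ three_mul_card_high_add_eq hG.high_one_eq hG.degree_le_five

theorem exists_four_le_degree (hG : IsCritical G) (hpos : 0 < #(high G 1))
    (hn : #(high G 1) < 12) : ∃ a, 4 ≤ G.degree a := by
  obtain ⟨v, hv⟩ := card_pos.1 hpos
  have := mem_high.1 (hG.high_one_eq ▸ hv)
  have := hG.degree_add_lt_card_edgeFinset v
  have := hG.three_mul_card_high_one_add_eq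
  have := card_le_card (high_anti G (by norm_num : 4 ≤ 5))
  obtain ⟨a, ha⟩ := card_pos.1 (by omega : 0 < #(high G 4))
  exact ⟨a, mem_high.1 ha⟩

theorem exists_degree_eq_five (hG : IsCritical G) (hpos : 0 < #(high G 1))
    (hn : #(high G 1) ≤ 9) : ∃ a, G.degree a = 5 := by
  obtain ⟨v, hv⟩ := hG.exists_four_le_degree hpos (by omega)
  have := hG.degree_add_lt_card_edgeFinset v
  have := hG.three_mul_card_high_one_add_eq
  have := card_le_card (high_anti G (by norm_num : 1 ≤ 4))
  obtain ⟨a, ha⟩ := card_pos.1 (by omega : 0 < #(high G 5))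
  exact ⟨a, (hG.degree_le_five a).antisymm (mem_high.1 ha)⟩

theorem card_high_one_ne_eight (hG : IsCritical G) : #(high G 1) ≠ 8 := by
  intro hn
  obtain ⟨a, ha⟩ := hG.exists_degree_eq_five (by omega) (by omega)
  have := hG.degree_add_lt_card_edgeFinset a
  have := hG.three_mul_card_high_one_add_eq
  have := card_le_card (high_anti G (by norm_num : 1 ≤ 4))
  have hsub : high G 5 ⊆ high G 1 := high_anti G (by norm_num)
  have heq := eq_of_subset_of_card_le hsub (by omega)
  obtain ⟨u, w, huw⟩ := exists_isPlanar_isolate_pair_of_degree_eq_five hn fun v hv =>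
    (hG.degree_le_five v).antisymm (mem_high.1 (heq ▸ hv))
  exact hG.not_isPlanar u w huw

theorem ten_lt_card_high_one (hG : IsCritical G) (hn : 7 < #(high G 1)) : 10 < #(high G 1) := by
  by_contra! hle
  obtain h | h | h : #(high G 1) = 8 ∨ #(high G 1) = 9 ∨ #(high G 1) = 10 := by omega
  · exact hG.card_high_one_ne_eight h
  · obtain ⟨a, ha⟩ := hG.exists_degree_eq_five (by omega) (by omega)
    exact hG.card_high_one_ne_nine ha h
  · exact not_isQuartic G (hG.isQuartic h)

end IsCritical

theorem exists_isPlanar_isolate_of_card_edgeFinset_le (G : SimpleGraph V)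
    (hE : #G.edgeFinset ≤ 20) (hn : #(high G 1) ≤ 10) :
    ∃ s : Finset V, #s ≤ 2 ∧ (isolate G s).IsPlanar := by
  induction G using suppress_induction with
  | suppress G v hpos hv ih =>
    obtain ⟨s, hs, hplanar⟩ := ih ((card_edgeFinset_suppress_lt hpos hv).le.trans hE)
      ((card_le_card (high_suppress_subset hv 1)).trans hn)
    exact ⟨s, hs, isPlanar_isolate_of_suppress hv hplanar⟩
  | reduced G hG =>
    obtain hle | hlt := le_or_gt #(high G 1) 7
    · exact exists_isPlanar_isolate_of_card_high_le hle (by omega)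
    by_contra! hs
    have hcrit : IsCritical G :=
      ⟨fun a b => mod_cast hs {a, b} card_le_two, hG, hE⟩
    exact absurd (hcrit.ten_lt_card_high_one hlt) hn.not_gt

theorem card_high_one (G : SimpleGraph V) : #(high G 1) = G.support.ncard := by
  rw [← Set.ncard_coe_finset]
  congr 1
  ext v
  rw [mem_coe, mem_high, ← degree_pos_iff_mem_support, Nat.succ_le_iff]

end ApexGraph

theorem stmt3_general {V : Type*} [Finite V] (G : SimpleGraph V)
    (hV : G.support.ncard ≤ 10) (hE : G.edgeSet.ncard ≤ 20) : G.TwoApex := by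
  classical
  have := Fintype.ofFinite V
  rw [← ApexGraph.card_high_one] at hV
  rw [← SimpleGraph.coe_edgeFinset, Set.ncard_coe_finset] at hE
  obtain ⟨s, hs, hplanar⟩ := ApexGraph.exists_isPlanar_isolate_of_card_edgeFinset_le G hE hV
  exact ApexGraph.twoApex_of_isPlanar_isolate ((Set.ncard_coe_finset s).trans_le hs) hplanar

/-- Every finite simple graph with exactly 10 vertices and at most 20 edges is 2-apex. -/
theorem stmt3 {V : Type*} [Fintype V] (G : SimpleGraph V)
    (hV : Fintype.card V = 10) (hE : G.edgeSet.ncard ≤ 20) : G.TwoApex :=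
  stmt3_general G ((Set.ncard_le_card _).trans (Nat.card_eq_fintype_card.trans_le hV.le)) hE
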